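/- Let t ≥ 3 be an integer, let M be a compact connected surface with Euler characteristic χ, and let G be a simple graph with at least t+1 edges embedded (drawn crossing-free) into M. Let H be the subgraph of G consisting of all edges of G that lie in some triangle (3-cycle) of G, and assume H = ⋃_i H_i where every triangle of G is contained in some H_i, the H_i are pairwise edge-disjoint, and every H_i has at least 3 and at most t edges. Then e(G) ≤ (12t/(4t+3)) · (v(G) − χ), where e(G) and v(G) are the numbers of edges and vertices of G. -/

import Mathlib

/-- A crossing-free drawing of the graph `G` inside the subset `S` of the topological
space `X`: vertices are mapped to pairwise distinct points, every edge is realized by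
an arc (the image of an injective path) between the points of its endpoints, all arcs
lie in `S`, arcs meet the vertex points only at their own endpoints, and interiors of
arcs of distinct edges are pairwise disjoint. -/
def IsCrossingFreeDrawingIn {V X : Type*} [TopologicalSpace X] (G : SimpleGraph V)
    (f : V → X) (arc : Sym2 V → Set X) (S : Set X) : Prop :=
  Function.Injective f ∧
  (∀ u v : V, G.Adj u v →
    ∃ γ : Path (f u) (f v), Function.Injective ⇑γ ∧ Set.range ⇑γ = arc s(u, v)) ∧
  (∀ e ∈ G.edgeSet, arc e ⊆ S) ∧
  (∀ e ∈ G.edgeSet, ∀ w : V, f w ∈ arc e → w ∈ e) ∧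
  (∀ e ∈ G.edgeSet, ∀ e' ∈ G.edgeSet, e ≠ e' →
    (arc e \ f '' {x | x ∈ e}) ∩ (arc e' \ f '' {x | x ∈ e'}) = ∅)

/-- The image of a drawing: the vertex points together with all edge arcs. -/
def drawingImage {V X : Type*} [TopologicalSpace X] (G : SimpleGraph V)
    (f : V → X) (arc : Sym2 V → Set X) : Set X :=
  Set.range f ∪ ⋃ e ∈ G.edgeSet, arc e

/-- The faces of a drawing: the connected components of the complement of its image. -/
def drawingFaces {V X : Type*} [TopologicalSpace X] (G : SimpleGraph V)
    (f : V → X) (arc : Sym2 V → Set X) : Set (Set X) :=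
  {F | ∃ x ∈ (drawingImage G f arc)ᶜ, F = connectedComponentIn (drawingImage G f arc)ᶜ x}

/-- `χ` is the Euler characteristic of the surface `M`: it is the alternating count
`V - E + F` of some crossing-free drawing of a finite graph in `M` all of whose faces
are open `2`-cells (homeomorphic to an open disk), e.g. of a triangulation of `M`. -/
def IsEulerCharacteristic (M : Type*) [TopologicalSpace M] (χ : ℤ) : Prop :=
  ∃ (V₀ : Type) (_ : Fintype V₀) (G₀ : SimpleGraph V₀)
    (f₀ : V₀ → M) (arc₀ : Sym2 V₀ → Set M),
    IsCrossingFreeDrawingIn G₀ f₀ arc₀ Set.univ ∧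
    (∀ F ∈ drawingFaces G₀ f₀ arc₀,
      Nonempty (↥F ≃ₜ ↥(Metric.ball (0 : EuclideanSpace ℝ (Fin 2)) 1))) ∧
    (Fintype.card V₀ : ℤ) - (Nat.card G₀.edgeSet : ℤ)
      + (Nat.card (drawingFaces G₀ f₀ arc₀) : ℤ) = χ

section Aux
set_option linter.all false
open Set Filter Topology Metric

/-- `α` parametrizes an arc on `[a,b]`. -/
structure IsArcOn {X : Type*} [TopologicalSpace X] (α : ℝ → X) (a b : ℝ) : Prop where
  le : a ≤ b
  cont : ContinuousOn α (Icc a b)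
  inj : InjOn α (Icc a b)

namespace IsArcOn
variable {X : Type*} [TopologicalSpace X] {α : ℝ → X} {a b : ℝ}

theorem sub (h : IsArcOn α a b) {a' b' : ℝ} (ha : a ≤ a') (hab : a' ≤ b') (hb : b' ≤ b) :
    IsArcOn α a' b' :=
  ⟨hab, h.cont.mono (Icc_subset_Icc ha hb), h.inj.mono (Icc_subset_Icc ha hb)⟩

theorem isCompact (h : IsArcOn α a b) : IsCompact (α '' Icc a b) :=
  isCompact_Icc.image_of_continuousOn h.cont

theorem isClosed [T2Space X] (h : IsArcOn α a b) : IsClosed (α '' Icc a b) := h.isCompact.isClosed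

theorem isClosedEmbedding [T2Space X] (h : IsArcOn α a b) :
    IsClosedEmbedding (fun t : Icc a b => α t) :=
  (continuousOn_iff_continuous_domRestrict.1 h.cont).isClosedEmbedding
    (fun x y hxy => Subtype.ext (h.inj x.2 y.2 hxy))

end IsArcOn

theorem exists_clog {X : Type*} [TopologicalSpace X] [SimplyConnectedSpace X]
    [LocallyPathConnectedSpace X] {F : X → ℂ} (hF : Continuous F) (h0 : ∀ x, F x ≠ 0) :
    ∃ L : X → ℂ, Continuous L ∧ ∀ x, Complex.exp (L x) = F x := by
  obtain ⟨x0⟩ : Nonempty X := inferInstance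
  obtain ⟨L, ⟨_, hL⟩, _⟩ := Complex.isCoveringMapOn_exp.existsUnique_continuousMap_lifts
    (⟨F, hF⟩ : C(X, ℂ)) (a₀ := x0) (e₀ := Complex.log (F x0)) (Complex.exp_log (h0 x0))
    (fun x => h0 x)
  exact ⟨L, L.continuous, fun x => congrFun hL x⟩

/-- A continuous function with square one on a preconnected set is constant there. -/
theorem const_of_sq_eq_one {X : Type*} [TopologicalSpace X] {s : Set X} (hs : IsPreconnected s)
    {u : X → ℂ} (hu : ContinuousOn u s) (h1 : ∀ x ∈ s, u x ^ 2 = 1) :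
    ∀ x ∈ s, ∀ y ∈ s, u x = u y := by
  intro x hx y hy
  have hm : MapsTo u s ({1, -1} : Set ℂ) := fun z hz => by
    have := h1 z hz
    have h2 : (u z - 1) * (u z + 1) = 0 := by linear_combination this
    rcases mul_eq_zero.1 h2 with h | h
    · simp [sub_eq_zero.1 h]
    · simp [eq_neg_of_add_eq_zero_left h]
  exact hs.constant_of_mapsTo (T := ({1, -1} : Set ℂ))
    (hT := (Set.toFinite _).isDiscrete) hu hm hx hy

theorem no_sqrt_circle (p : ℂ) {δ : ℝ} (hδ : 0 < δ) (f : ℂ → ℂ) (hf : ContinuousOn f (sphere p δ))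
    (h : ∀ z ∈ sphere p δ, f z ^ 2 = z - p) : False := by
  have hmem : ∀ θ : ℝ, p + δ * Complex.exp (θ * Complex.I) ∈ sphere p δ := by
    intro θ
    simp [Complex.norm_exp_ofReal_mul_I, abs_of_pos hδ]
  set c : ℝ → ℂ := fun θ => p + δ * Complex.exp (θ * Complex.I) with hc
  set e : ℝ → ℂ := fun θ => (Real.sqrt δ : ℂ) * Complex.exp ((θ / 2 : ℂ) * Complex.I) with he
  have he0 : ∀ θ, e θ ≠ 0 := by
    intro θ
    have : (Real.sqrt δ : ℂ) ≠ 0 := by exact_mod_cast (Real.sqrt_pos.2 hδ).ne'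
    exact mul_ne_zero this (Complex.exp_ne_zero _)
  have he2 : ∀ θ, e θ ^ 2 = δ * Complex.exp (θ * Complex.I) := by
    intro θ
    simp only [he, mul_pow, ← Complex.exp_nat_mul]
    rw [← Complex.ofReal_pow, Real.sq_sqrt hδ.le]
    congr 2; push_cast; ring
  have hcont : Continuous fun θ : ℝ => f (c θ) / e θ := by
    refine Continuous.div ?_ (by fun_prop) he0
    exact hf.comp_continuous (by fun_prop) hmem
  have := const_of_sq_eq_one isPreconnected_univ hcont.continuousOn (fun θ _ => by
    rw [div_pow, h _ (hmem θ), he2]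
    simp only [add_sub_cancel_left]
    exact div_self (by rw [← he2]; exact pow_ne_zero _ (he0 θ))) 0 trivial (2 * Real.pi) trivial
  have hc1 : c (2 * Real.pi) = c 0 := by
    simp [hc, Complex.exp_two_pi_mul_I]
  have he1 : e (2 * Real.pi) = - e 0 := by
    simp only [he]
    push_cast
    rw [mul_div_cancel_left₀ _ (two_ne_zero), Complex.exp_pi_mul_I]; simp
  rw [hc1, he1, div_neg] at this
  have h00 : f (c 0) / e 0 = 0 := by
    have := self_eq_neg.1 this
    exact this
  have h01 : f (c 0) = 0 := by simpa [he0] using h00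
  have h02 := h _ (hmem 0)
  change f (c 0) ^ 2 = c 0 - p at h02
  rw [h01] at h02
  simp [hc] at h02
  exact hδ.ne (by exact_mod_cast h02)

theorem isPreconnected_norm_mem {E : Type*} [NormedAddCommGroup E] [NormedSpace ℝ E]
    (hE : 1 < Module.rank ℝ E) {s : Set ℝ} (hs : IsPreconnected s) (hpos : ∀ r ∈ s, 0 < r) (p : E) :
    IsPreconnected {x : E | ‖x - p‖ ∈ s} := by
  have := (hs.prod (isPreconnected_sphere hE 0 1)).image (fun q : ℝ × E => p + q.1 • q.2)
    (by fun_prop)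
  convert! this using 1
  ext x
  simp only [mem_setOf_eq, mem_image, mem_prod, Prod.exists]
  constructor
  · intro hx
    have := hpos _ hx
    refine ⟨‖x - p‖, ‖x - p‖⁻¹ • (x - p), ⟨hx, ?_⟩, ?_⟩
    · simp [norm_smul, this.ne']
    · rw [smul_smul, mul_inv_cancel₀ this.ne']; simp
  · rintro ⟨r, u, ⟨hr, hu⟩, rfl⟩
    have := hpos _ hr
    have hu' : ‖u‖ = 1 := by simpa using hu
    simpa [norm_smul, hu', abs_of_pos this] using hr

theorem one_lt_rank_complex : 1 < Module.rank ℝ ℂ := by simp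

/-- An arc does not separate the plane. -/
theorem IsArcOn.isPreconnected_compl {α : ℝ → ℂ} {a b : ℝ} (h : IsArcOn α a b) :
    IsPreconnected (α '' Icc a b)ᶜ := by
  obtain ⟨R, hR⟩ := h.isCompact.isBounded.subset_closedBall 0
  set A := α '' Icc a b with hA
  have hR' : A ⊆ closedBall 0 (max R 0) := hR.trans (closedBall_subset_closedBall (le_max_left _ _))
  set R' := max R 0 with hR'def
  have hR0 : 0 ≤ R' := le_max_right _ _
  have hext : IsPreconnected {z : ℂ | ‖z - 0‖ ∈ Ioi R'} :=
    isPreconnected_norm_mem one_lt_rank_complex isPreconnected_Ioi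
      (fun r hr => hR0.trans_lt hr) 0
  simp only [sub_zero, mem_Ioi] at hext
  set D := {z : ℂ | R' < ‖z‖} with hD
  have hDA : D ⊆ Aᶜ := fun z hz hzA => by
    have := hR' hzA
    simp only [mem_closedBall, dist_zero_right] at this
    exact absurd hz (not_lt.2 this)
  have hAo : IsOpen Aᶜ := h.isClosed.isOpen_compl
  -- every component meets the exterior
  have key : ∀ x ∈ Aᶜ, (connectedComponentIn Aᶜ x ∩ D).Nonempty := by
    intro x hx
    by_contra hne
    rw [not_nonempty_iff_eq_empty] at hne
    set O := connectedComponentIn Aᶜ x with hO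
    have hxO : x ∈ O := mem_connectedComponentIn hx
    have hOo : IsOpen O := hAo.connectedComponentIn
    have hfr : frontier O ⊆ A := by
      intro z hz
      by_contra hzA
      have hzc : z ∈ closure O := frontier_subset_closure hz
      have hO' : IsOpen (connectedComponentIn Aᶜ z) := hAo.connectedComponentIn
      obtain ⟨w, hw1, hw2⟩ := mem_closure_iff.1 hzc _ hO' (mem_connectedComponentIn hzA)
      have e1 := connectedComponentIn_eq hw1
      have e2 := connectedComponentIn_eq hw2
      have : z ∈ O := by
        rw [hO, e2, ← e1]; exact mem_connectedComponentIn hzA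
      rw [hOo.frontier_eq] at hz
      exact hz.2 this
    -- logarithm on the arc
    set β : ℝ → ℂ := IccExtend h.le (fun t : Icc a b => α t) with hβ
    have hβc : Continuous β :=
      (continuousOn_iff_continuous_domRestrict.1 h.cont).Icc_extend'
    have hβA : ∀ t, β t ∈ A := fun t => ⟨projIcc a b h.le t, (projIcc a b h.le t).2, rfl⟩
    obtain ⟨L, hLc, hL⟩ := exists_clog (F := fun t => β t - x) (by fun_prop)
      (fun t ht => hx (by rw [← sub_eq_zero.1 ht]; exact hβA t))
    obtain ⟨g, hg⟩ := ContinuousMap.exists_extension' h.isClosedEmbedding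
      (⟨fun t : Icc a b => L t, by fun_prop⟩ : C(Icc a b, ℂ))
    have hgA : ∀ z ∈ A, Complex.exp (g z) = z - x := by
      rintro _ ⟨t, ht, rfl⟩
      have := congrFun hg ⟨t, ht⟩
      simp only [Function.comp_apply, ContinuousMap.coe_mk] at this
      rw [this, hL, hβ, IccExtend_of_mem _ _ ht]
    classical
    set F : ℂ → ℂ := O.piecewise (fun z => Complex.exp (g z)) (fun z => z - x) with hF
    have hFc : Continuous F :=
      Continuous.piecewise (fun z hz => hgA z (hfr hz)) (by fun_prop) (by fun_prop)
    have hF0 : ∀ z, F z ≠ 0 := by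
      intro z
      by_cases hz : z ∈ O
      · simp [hF, hz, Complex.exp_ne_zero]
      · simp only [hF, hz, not_false_eq_true, piecewise_eq_of_notMem]
        intro h0
        exact hz (by rw [sub_eq_zero.1 h0]; exact hxO)
    obtain ⟨ℓ, hℓc, hℓ⟩ := exists_clog hFc hF0
    refine no_sqrt_circle x (δ := R' + ‖x‖ + 1) (by positivity) (fun z => Complex.exp (ℓ z / 2))
      (by fun_prop) ?_
    intro z hz
    rw [← Complex.exp_nat_mul, Nat.cast_ofNat, mul_div_cancel₀ _ two_ne_zero, hℓ]
    have hzD : z ∈ D := by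
      have h1 : ‖z - x‖ = R' + ‖x‖ + 1 := by simpa [dist_eq_norm] using hz
      have h2 := norm_sub_le z x
      simp only [hD, mem_setOf_eq]; linarith
    have hzO : z ∉ O := fun hzO => by
      have : z ∈ O ∩ D := ⟨hzO, hzD⟩
      rw [hne] at this; exact this
    simp [hF, hzO]
  have hx0 : ((R' + 1 : ℝ) : ℂ) ∈ D := by
    simp only [hD, mem_setOf_eq, Complex.norm_real, Real.norm_eq_abs]
    rw [abs_of_pos (by positivity)]; linarith
  have : Aᶜ = connectedComponentIn Aᶜ ((R' + 1 : ℝ) : ℂ) := by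
    apply Subset.antisymm _ (connectedComponentIn_subset _ _)
    intro x hx
    obtain ⟨w, hw1, hw2⟩ := key x hx
    have e1 := connectedComponentIn_eq hw1
    have e2 := connectedComponentIn_eq (hext.subset_connectedComponentIn hx0 hDA hw2)
    rw [e2, ← e1]; exact mem_connectedComponentIn hx
  rw [this]; exact isPreconnected_connectedComponentIn

theorem exp_descend {S : ℂ → ℂ} (hS : Continuous S)
    (hp : ∀ w, S (w + 2 * Real.pi * Complex.I) = S w) :
    ∃ q : ℂ → ℂ, ContinuousOn q {0}ᶜ ∧ ∀ w, q (Complex.exp w) = S w := by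
  have hq : ∀ w, S (Complex.log (Complex.exp w)) = S w := by
    intro w
    have : Complex.exp (Complex.log (Complex.exp w)) = Complex.exp w :=
      Complex.exp_log (Complex.exp_ne_zero w)
    obtain ⟨n, hn⟩ := Complex.exp_eq_exp_iff_exists_int.1 this
    rw [hn]
    have hper : Function.Periodic S (2 * Real.pi * Complex.I) := hp
    exact (hper.int_mul n) w
  refine ⟨fun r => S (Complex.log r), ?_, hq⟩
  rw [continuousOn_iff_continuous_domRestrict]
  have hc := Complex.isCoveringMap_exp
  have hqm : IsQuotientMap fun z : ℂ ↦ (⟨_, z.exp_ne_zero⟩ : {z : ℂ // z ≠ 0}) :=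
    hc.isQuotientMap (fun x => ⟨Complex.log x, Subtype.ext (Complex.exp_log x.2)⟩)
  change Continuous (fun r : {z : ℂ // z ≠ 0} => S (Complex.log r))
  rw [hqm.continuous_iff]
  exact hS.congr (fun w => (hq w).symm)

theorem sqrt_annulus {F : ℂ → ℂ} (hF : ContinuousOn F {0}ᶜ) (h0 : ∀ r, r ≠ 0 → F r ≠ 0) :
    ∃ q : ℂ → ℂ, ContinuousOn q {0}ᶜ ∧ ((∀ r, r ≠ 0 → q r ^ 2 = F r) ∨
      (∀ r, r ≠ 0 → q r ^ 2 = r * F r)) := by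
  obtain ⟨L, hLc, hL⟩ := exists_clog (F := fun w => F (Complex.exp w))
    (hF.comp_continuous Complex.continuous_exp (fun w => Complex.exp_ne_zero w))
    (fun w => h0 _ (Complex.exp_ne_zero w))
  set S : ℂ → ℂ := fun w => Complex.exp (L w / 2) with hS
  have hSc : Continuous S := by fun_prop
  have hS0 : ∀ w, S w ≠ 0 := fun w => Complex.exp_ne_zero _
  have hS2 : ∀ w, S w ^ 2 = F (Complex.exp w) := by
    intro w
    rw [← hL, hS, ← Complex.exp_nat_mul, Nat.cast_ofNat, mul_div_cancel₀ _ two_ne_zero]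
  have hsq : ∀ w ∈ (univ : Set ℂ), (S (w + 2 * Real.pi * Complex.I) / S w) ^ 2 = 1 := by
    intro w _
    rw [div_pow, hS2, hS2, Complex.exp_periodic w]
    exact div_self (h0 _ (Complex.exp_ne_zero w))
  have hcst := const_of_sq_eq_one isPreconnected_univ
    (u := fun w => S (w + 2 * Real.pi * Complex.I) / S w)
    (Continuous.continuousOn (by
      refine Continuous.div (by fun_prop) hSc hS0)) hsq
  rcases eq_or_eq_neg_of_sq_eq_sq _ 1 ((hsq 0 trivial).trans (one_pow 2).symm) with h1 | h1
  · obtain ⟨q, hqc, hq⟩ := exp_descend hSc (fun w => by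
      have := hcst w trivial 0 trivial
      rw [h1, div_eq_one_iff_eq (hS0 w)] at this
      exact this)
    refine ⟨q, hqc, Or.inl fun r hr => ?_⟩
    rw [← Complex.exp_log hr, hq, hS2]
  · obtain ⟨q, hqc, hq⟩ := exp_descend (S := fun w => S w * Complex.exp (w / 2))
      (by fun_prop) (fun w => by
      have := hcst w trivial 0 trivial
      rw [h1, div_eq_iff (hS0 w)] at this
      rw [this, add_div, Complex.exp_add,
        show 2 * (Real.pi : ℂ) * Complex.I / 2 = Real.pi * Complex.I by ring,
        Complex.exp_pi_mul_I]
      ring)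
    refine ⟨q, hqc, Or.inr fun r hr => ?_⟩
    rw [← Complex.exp_log hr, hq, mul_pow, hS2, ← Complex.exp_nat_mul, Nat.cast_ofNat,
      mul_div_cancel₀ _ two_ne_zero, mul_comm]

/-- A square root of `(z - α a)/(z - α b)` off the arc. -/
theorem IsArcOn.exists_sqrt {α : ℝ → ℂ} {a b : ℝ} (h : IsArcOn α a b) :
    ∃ k : ℂ → ℂ, ContinuousOn k (α '' Icc a b)ᶜ ∧
      ∀ z ∉ α '' Icc a b, k z ^ 2 = (z - α a) / (z - α b) := by
  set A := α '' Icc a b with hA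
  set β : ℝ → ℂ := IccExtend h.le (fun t : Icc a b => α t) with hβ
  have hβc : Continuous β :=
    (continuousOn_iff_continuous_domRestrict.1 h.cont).Icc_extend'
  have hβA : ∀ t, β t ∈ A := fun t => ⟨projIcc a b h.le t, (projIcc a b h.le t).2, rfl⟩
  have hβa : β a = α a := by rw [hβ, IccExtend_left]
  have hβb : β b = α b := by rw [hβ, IccExtend_right]
  have hne : ∀ (z : (Aᶜ : Set ℂ)) t, (z : ℂ) - β t ≠ 0 := fun z t h0 =>
    z.2 (by rw [sub_eq_zero.1 h0]; exact hβA t)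
  let Hm : C(unitInterval × (Aᶜ : Set ℂ), {z : ℂ // z ≠ 0}) :=
    ⟨fun q => ⟨((q.2 : ℂ) - β (b + q.1 * (a - b))) / ((q.2 : ℂ) - β b),
      div_ne_zero (hne _ _) (hne _ _)⟩, by
      refine Continuous.subtype_mk ?_ _
      exact Continuous.div (by fun_prop) (by fun_prop) (fun q => hne _ _)⟩
  have H0 : ∀ z : (Aᶜ : Set ℂ), Hm (0, z) =
      (fun z : ℂ ↦ (⟨_, z.exp_ne_zero⟩ : {z : ℂ // z ≠ 0})) ((0 : C((Aᶜ : Set ℂ), ℂ)) z) := by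
    intro z
    apply Subtype.ext
    simp only [Hm, ContinuousMap.coe_mk, ContinuousMap.zero_apply, Complex.exp_zero]
    simp [div_self (hne z b)]
  have hl := Complex.isCoveringMap_exp.liftHomotopy_lifts Hm 0 H0
  set Lf := Complex.isCoveringMap_exp.liftHomotopy Hm 0 H0 with hLf
  classical
  refine ⟨fun z => if hz : z ∈ Aᶜ then Complex.exp (Lf (1, ⟨z, hz⟩) / 2) else 0, ?_, ?_⟩
  · rw [continuousOn_iff_continuous_domRestrict]
    have : Continuous fun z : (Aᶜ : Set ℂ) => Complex.exp (Lf (1, z) / 2) := by fun_prop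
    refine this.congr fun z => ?_
    simp only [Set.domRestrict_apply, z.2, dif_pos, Subtype.coe_eta]
  · intro z hz
    have hz' : z ∈ Aᶜ := hz
    simp only [hz', dif_pos]
    rw [← Complex.exp_nat_mul, Nat.cast_ofNat, mul_div_cancel₀ _ two_ne_zero]
    have := congrArg Subtype.val (congrFun hl (1, ⟨z, hz'⟩))
    simp only [Function.comp_apply, Hm, ContinuousMap.coe_mk] at this
    rw [this]
    simp [hβa, hβb]

/-- The sign of an element of `ZMod 2`. -/
noncomputable def sgn (x : ZMod 2) : ℂ := if x = 0 then 1 else -1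

theorem zmod2_cases (x : ZMod 2) : x = 0 ∨ x = 1 := by revert x; decide

@[simp] theorem sgn_zero : sgn 0 = 1 := by simp [sgn]
@[simp] theorem sgn_one : sgn 1 = -1 := by simp [sgn]
theorem sgn_sq (x : ZMod 2) : sgn x ^ 2 = 1 := by
  rcases zmod2_cases x with rfl | rfl <;> simp
theorem sgn_ne_zero (x : ZMod 2) : sgn x ≠ 0 := by
  rcases zmod2_cases x with rfl | rfl <;> simp
theorem sgn_add (x y : ZMod 2) : sgn (x + y) = sgn x * sgn y := by
  rcases zmod2_cases x with rfl | rfl <;> rcases zmod2_cases y with rfl | rfl <;>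
    simp [show (1 : ZMod 2) + 1 = 0 by decide]
theorem sgn_injective : Function.Injective sgn := by
  intro x y h
  rcases zmod2_cases x with rfl | rfl <;> rcases zmod2_cases y with rfl | rfl <;> simp at h ⊢
  · norm_num [Complex.ext_iff] at h
  · norm_num [Complex.ext_iff] at h

theorem eventually_const_of_tendsto_sgn {X : Type*} {l : Filter X} {g : X → ZMod 2} {y : ℂ}
    (h : Tendsto (fun x => sgn (g x)) l (𝓝 y)) : ∃ c, ∀ᶠ x in l, g x = c := by
  by_cases hy : y = 1
  · refine ⟨0, ?_⟩
    have := h.eventually_ne (show y ≠ -1 by rw [hy]; norm_num [Complex.ext_iff])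
    filter_upwards [this] with x hx
    rcases zmod2_cases (g x) with h0 | h0
    · exact h0
    · rw [h0] at hx; simp at hx
  · refine ⟨1, ?_⟩
    have := h.eventually_ne hy
    filter_upwards [this] with x hx
    rcases zmod2_cases (g x) with h0 | h0
    · rw [h0] at hx; simp at hx
    · exact h0

/-- Square roots on the twice punctured sphere. -/
theorem sqrt_two_points {G : ℂ → ℂ} {p1 p2 : ℂ} (hp : p1 ≠ p2) (hG : ContinuousOn G {p1, p2}ᶜ)
    (h0 : ∀ z, G z ≠ 0) (hinf : ∀ᶠ z in Bornology.cobounded ℂ, G z = 1) :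
    ∃ q : ℂ → ℂ, ContinuousOn q {p1, p2}ᶜ ∧ ((∀ z ∉ ({p1, p2} : Set ℂ), q z ^ 2 = G z) ∨
      (∀ z ∉ ({p1, p2} : Set ℂ), q z ^ 2 = (z - p1) / (z - p2) * G z)) := by
  classical
  set F : ℂ → ℂ := fun r => if r = 1 then 1 else G ((p1 - r * p2) / (1 - r)) with hF
  have hFc : ContinuousOn F {0}ᶜ := by
    intro r hr
    apply ContinuousAt.continuousWithinAt
    by_cases h1 : r = 1
    · subst h1
      have : F =ᶠ[𝓝 1] fun _ => 1 := by
        have ht : Tendsto (fun r : ℂ => (p1 - r * p2) / (1 - r)) (𝓝[≠] 1)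
            (Bornology.cobounded ℂ) := by
          simp only [div_eq_mul_inv]
          have t1 : Tendsto (fun r : ℂ => p1 - r * p2) (𝓝[≠] 1) (𝓝 (p1 - 1 * p2)) :=
            (Continuous.tendsto (by fun_prop) 1).mono_left nhdsWithin_le_nhds
          have t2 : Tendsto (fun r : ℂ => (1 - r)⁻¹) (𝓝[≠] 1) (Bornology.cobounded ℂ) := by
            refine Filter.tendsto_inv₀_nhdsNE_zero.comp ?_
            refine tendsto_nhdsWithin_iff.2 ⟨?_, ?_⟩
            · have : Tendsto (fun r : ℂ => 1 - r) (𝓝 1) (𝓝 (1 - 1)) :=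
                Continuous.tendsto (by fun_prop) 1
              rw [sub_self] at this
              exact this.mono_left nhdsWithin_le_nhds
            · filter_upwards [self_mem_nhdsWithin] with r hr h
              exact hr (sub_eq_zero.1 h).symm
          rw [← tendsto_norm_atTop_iff_cobounded] at t2 ⊢
          simp only [norm_mul]
          refine Tendsto.pos_mul_atTop (C := ‖p1 - 1 * p2‖) ?_ t1.norm t2
          rw [one_mul, norm_pos_iff]; exact sub_ne_zero.2 hp
        have := ht.eventually hinf
        rw [eventually_nhdsWithin_iff] at this
        filter_upwards [this] with r hr
        by_cases hr1 : r = 1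
        · simp [hF, hr1]
        · simp only [hF, hr1, if_false]; exact hr hr1
      exact this.continuousAt
    · have hev : F =ᶠ[𝓝 r] fun r => G ((p1 - r * p2) / (1 - r)) := by
        filter_upwards [isOpen_ne.mem_nhds h1] with s hs
        simp only [hF]; rw [if_neg hs]
      refine ContinuousAt.congr ?_ hev.symm
      have h1' : (1 - r) ≠ 0 := sub_ne_zero.2 (Ne.symm h1)
      have hmem : (p1 - r * p2) / (1 - r) ∈ ({p1, p2}ᶜ : Set ℂ) := by
        simp only [mem_compl_iff, mem_insert_iff, mem_singleton_iff, not_or, div_eq_iff h1']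
        constructor
        · intro h
          have : r * (p1 - p2) = 0 := by linear_combination h
          rcases mul_eq_zero.1 this with h | h
          · exact hr h
          · exact hp (sub_eq_zero.1 h)
        · intro h
          exact hp (by linear_combination h)
      have hop : IsOpen ({p1, p2}ᶜ : Set ℂ) := (Set.toFinite _).isClosed.isOpen_compl
      have : ContinuousAt G ((p1 - r * p2) / (1 - r)) := hG.continuousAt (hop.mem_nhds hmem)
      refine ContinuousAt.comp (f := fun r : ℂ => (p1 - r * p2) / (1 - r)) (g := G) this ?_
      exact ContinuousAt.div (by fun_prop) (by fun_prop) h1'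
  have hF0 : ∀ r, r ≠ 0 → F r ≠ 0 := by
    intro r _
    simp only [hF]; split_ifs
    · exact one_ne_zero
    · exact h0 _
  obtain ⟨q, hqc, hq⟩ := sqrt_annulus hFc hF0
  have key : ∀ z ∉ ({p1, p2} : Set ℂ), (z - p1) / (z - p2) ≠ 0 ∧ F ((z - p1) / (z - p2)) = G z := by
    intro z hz
    simp only [mem_insert_iff, mem_singleton_iff, not_or] at hz
    have e1 := sub_ne_zero.2 hz.1
    have e2 := sub_ne_zero.2 hz.2
    refine ⟨div_ne_zero e1 e2, ?_⟩
    have h1 : (z - p1) / (z - p2) ≠ 1 := by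
      rw [Ne, div_eq_iff e2]
      intro h
      exact hp (by linear_combination -h)
    simp only [hF, h1, if_false]
    congr 1
    have : (1 - (z - p1) / (z - p2)) ≠ 0 := sub_ne_zero.2 (Ne.symm h1)
    rw [div_eq_iff this]
    field_simp
    ring
  refine ⟨fun z => q ((z - p1) / (z - p2)), ?_, ?_⟩
  · refine hqc.comp (ContinuousOn.div (by fun_prop) (by fun_prop) ?_) (fun z hz => (key z hz).1)
    intro z hz
    simp only [mem_compl_iff, mem_insert_iff, mem_singleton_iff, not_or] at hz
    exact sub_ne_zero.2 hz.2
  · rcases hq with hq | hq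
    · left
      intro z hz
      rw [hq _ (key z hz).1, (key z hz).2]
    · right
      intro z hz
      rw [hq _ (key z hz).1, (key z hz).2]

theorem IsArcOn.dichotomy {α : ℝ → ℂ} {a b : ℝ} (h : IsArcOn α a b) (hab : a < b)
    {k : ℂ → ℂ} (hkc : ContinuousOn k (α '' Icc a b)ᶜ)
    (hk : ∀ z ∉ α '' Icc a b, k z ^ 2 = (z - α a) / (z - α b))
    {U : Set ℂ} (hU : IsOpen U) (hUb : Bornology.IsBounded U) (hαU : ∀ t ∈ Ioo a b, α t ∈ U)
    {g : ℂ → ZMod 2} (hg : ∀ z ∈ U, z ∉ α '' Icc a b → ∀ᶠ w in 𝓝 z, g w = g z) :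
    (∀ t ∈ Ioo a b, ∃ c, ∀ᶠ z in 𝓝[(α '' Icc a b)ᶜ] (α t), g z = c) ∨
    (∀ t ∈ Ioo a b, ∃ s : ℂ → ℂ, ContinuousAt s (α t) ∧
      ∀ᶠ z in 𝓝[(α '' Icc a b)ᶜ] (α t), sgn (g z) = k z * s z) := by
  classical
  set A := α '' Icc a b with hA
  have hAcl : IsClosed A := h.isClosed
  have hAne : A.Nonempty := ⟨α a, a, ⟨le_rfl, h.le⟩, rfl⟩
  have hp : α a ≠ α b := fun e =>
    hab.ne (h.inj ⟨le_rfl, h.le⟩ ⟨h.le, le_rfl⟩ e)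
  have hUne : (Uᶜ).Nonempty := by
    rw [nonempty_compl]
    rintro rfl
    exact NormedSpace.unbounded_univ ℝ ℂ hUb
  have hpA : α a ∈ A := ⟨a, ⟨le_rfl, h.le⟩, rfl⟩
  have hpB : α b ∈ A := ⟨b, ⟨h.le, le_rfl⟩, rfl⟩
  have hAU : ∀ z ∈ A, z ∉ ({α a, α b} : Set ℂ) → z ∈ U := by
    rintro _ ⟨t, ht, rfl⟩ hz
    simp only [mem_insert_iff, mem_singleton_iff, not_or] at hz
    refine hαU t ⟨lt_of_le_of_ne ht.1 ?_, lt_of_le_of_ne ht.2 ?_⟩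
    · rintro rfl; exact hz.1 rfl
    · rintro rfl; exact hz.2 rfl
  set da : ℂ → ℝ := fun z => infDist z A with hda
  set db : ℂ → ℝ := fun z => infDist z Uᶜ with hdb
  have hdac : Continuous da := continuous_infDist_pt A
  have hdbc : Continuous db := continuous_infDist_pt Uᶜ
  have hda0 : ∀ z, 0 ≤ da z := fun z => infDist_nonneg
  have hdb0 : ∀ z, 0 ≤ db z := fun z => infDist_nonneg
  have hdapos : ∀ z, z ∉ A → 0 < da z := fun z hz =>
    (hAcl.notMem_iff_infDist_pos hAne).1 hz
  have hdazero : ∀ z ∈ A, da z = 0 := fun z hz => infDist_zero_of_mem hz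
  have hdbpos : ∀ z ∈ U, 0 < db z := fun z hz =>
    (hU.isClosed_compl.notMem_iff_infDist_pos hUne).1 (by simpa using hz)
  have hdbzero : ∀ z, z ∉ U → db z = 0 := fun z hz => infDist_zero_of_mem hz
  set τ : ℂ → ℝ := fun z => max 0 (min 1 ((2 * db z - da z) / (da z + db z))) with hτ
  have hτ1 : ∀ z, 0 < db z → 2 * da z ≤ db z → τ z = 1 := by
    intro z h1 h2
    have h3 := hda0 z
    have : 1 ≤ (2 * db z - da z) / (da z + db z) := by
      rw [le_div_iff₀ (by linarith)]; linarith
    simp only [hτ]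
    rw [min_eq_left this]; simp
  have hτ0 : ∀ z, 2 * db z ≤ da z → τ z = 0 := by
    intro z h2
    have h3 := hdb0 z
    have h4 := hda0 z
    have : (2 * db z - da z) / (da z + db z) ≤ 0 :=
      div_nonpos_of_nonpos_of_nonneg (by linarith) (by linarith)
    simp only [hτ]
    exact max_eq_left ((min_le_right _ _).trans this)
  have hτc : ∀ z, 0 < da z + db z → ContinuousAt τ z := by
    intro z hz
    simp only [hτ]
    exact continuousAt_const.max (continuousAt_const.min
      (ContinuousAt.div (by fun_prop) (by fun_prop) hz.ne'))
  have hτA : ∀ z ∈ A, z ∈ U → ∀ᶠ w in 𝓝 z, τ w = 1 := by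
    intro z hz hzU
    have h1 : ∀ᶠ w in 𝓝 z, 2 * da w < db w :=
      (continuous_const.mul hdac).continuousAt.eventually_lt hdbc.continuousAt
        (by have := hdbpos z hzU; have := hdazero z hz; show 2 * da z < db z; linarith)
    filter_upwards [h1, hU.mem_nhds hzU] with w hw hwU
    exact hτ1 w (hdbpos w hwU) hw.le
  have hτU : ∀ z, z ∉ A → z ∉ U → ∀ᶠ w in 𝓝 z, τ w = 0 := by
    intro z hz hzU
    have h1 : ∀ᶠ w in 𝓝 z, 2 * db w < da w :=
      (continuous_const.mul hdbc).continuousAt.eventually_lt hdac.continuousAt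
        (by have := hdapos z hz; have := hdbzero z hzU; show 2 * db z < da z; linarith)
    filter_upwards [h1] with w hw
    exact hτ0 w hw.le
  set gh : ℂ → ℝ := fun z => if g z = 0 then 0 else 1 with hgh
  set u : ℂ → ℝ := fun z => τ z * gh z with hu
  have huc : ∀ z ∉ A, ContinuousAt u z := by
    intro z hz
    by_cases hzU : z ∈ U
    · have h1 : u =ᶠ[𝓝 z] fun w => τ w * gh z := by
        filter_upwards [hg z hzU hz] with w hw
        simp only [hu, hgh, hw]
      refine ContinuousAt.congr ?_ h1.symm
      exact (hτc z (by have := hdapos z hz; have := hdb0 z; linarith)).mul continuousAt_const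
    · have h1 : u =ᶠ[𝓝 z] fun w => 0 := by
        filter_upwards [hτU z hz hzU] with w hw
        simp only [hu, hw, zero_mul]
      exact continuousAt_const.congr h1.symm
  set e : ℂ → ℂ := fun z => Complex.exp (Real.pi * Complex.I * u z) with he
  have hec : ContinuousOn e Aᶜ := by
    intro z hz
    have := huc z hz
    apply ContinuousAt.continuousWithinAt
    simp only [he]; fun_prop
  have heg : ∀ z, τ z = 1 → e z = sgn (g z) := by
    intro z hz
    simp only [he, hu, hz, hgh]
    rcases zmod2_cases (g z) with h0 | h0 <;> rw [h0] <;> simp [Complex.exp_pi_mul_I]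
  set G : ℂ → ℂ := fun z => e z ^ 2 with hG
  have hGc : ContinuousOn G {α a, α b}ᶜ := by
    intro z hz
    apply ContinuousAt.continuousWithinAt
    by_cases hzA : z ∈ A
    · have : G =ᶠ[𝓝 z] fun w => 1 := by
        filter_upwards [hτA z hzA (hAU z hzA hz)] with w hw
        simp only [hG, heg w hw, sgn_sq]
      exact continuousAt_const.congr this.symm
    · exact (hec.continuousAt (hAcl.isOpen_compl.mem_nhds hzA)).pow 2
  have hinf : ∀ᶠ z in Bornology.cobounded ℂ, G z = 1 := by
    have : Uᶜ ∈ Bornology.cobounded ℂ := by simpa using Bornology.isBounded_def.1 hUb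
    filter_upwards [this] with z hz
    have : τ z = 0 := hτ0 z (by rw [hdbzero z hz]; simpa using hda0 z)
    simp [hG, he, hu, this]
  obtain ⟨q, hqc, hq⟩ := sqrt_two_points hp hGc
    (fun z => pow_ne_zero _ (Complex.exp_ne_zero _)) hinf
  have hsub : Aᶜ ⊆ ({α a, α b}ᶜ : Set ℂ) := by
    apply compl_subset_compl.2
    rintro z (rfl | rfl)
    · exact hpA
    · exact hpB
  have hconn := h.isPreconnected_compl
  have hop : IsOpen ({α a, α b}ᶜ : Set ℂ) := (Set.toFinite _).isClosed.isOpen_compl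
  have htne : ∀ t ∈ Ioo a b, α t ∈ ({α a, α b}ᶜ : Set ℂ) := by
    intro t ht
    have ht' : t ∈ Icc a b := ⟨ht.1.le, ht.2.le⟩
    simp only [mem_compl_iff, mem_insert_iff, mem_singleton_iff, not_or]
    constructor
    · intro e; exact ht.1.ne' (h.inj ht' ⟨le_rfl, h.le⟩ e)
    · intro e; exact ht.2.ne (h.inj ht' ⟨h.le, le_rfl⟩ e)
  have hcq : ∀ t ∈ Ioo a b, ContinuousAt q (α t) := fun t ht =>
    hqc.continuousAt (hop.mem_nhds (htne t ht))
  have hmemA : ∀ t ∈ Ioo a b, α t ∈ A := fun t ht => ⟨t, ⟨ht.1.le, ht.2.le⟩, rfl⟩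
  have he0 : ∀ z, e z ≠ 0 := fun z => Complex.exp_ne_zero _
  rcases (Aᶜ).eq_empty_or_nonempty with hemp | ⟨z0, hz0⟩
  · left
    intro t ht
    refine ⟨0, ?_⟩
    rw [hemp]; simp
  rcases hq with hq | hq
  · left
    have hq0 : ∀ z ∈ Aᶜ, q z ≠ 0 := fun z hz h0 => by
      have := hq z (hsub hz)
      rw [h0] at this
      exact (pow_ne_zero 2 (he0 z)) (by simpa [hG] using this.symm)
    have hcst := const_of_sq_eq_one hconn (u := fun z => e z / q z)
      (hec.div (hqc.mono hsub) hq0) (fun z hz => by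
        rw [div_pow, hq z (hsub hz)]; exact div_self (pow_ne_zero _ (he0 z)))
    intro t ht
    have hT : Tendsto (fun z => e z0 / q z0 * q z) (𝓝[Aᶜ] (α t)) (𝓝 (e z0 / q z0 * q (α t))) :=
      ((hcq t ht).tendsto.const_mul _).mono_left nhdsWithin_le_nhds
    refine eventually_const_of_tendsto_sgn (hT.congr' ?_)
    filter_upwards [self_mem_nhdsWithin,
      nhdsWithin_le_nhds (hτA _ (hmemA t ht) (hαU t ht))] with z hz hz1
    rw [← heg z hz1, hcst z0 hz0 z hz, div_mul_cancel₀ _ (hq0 z hz)]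
  · right
    have hr0 : ∀ z ∈ ({α a, α b}ᶜ : Set ℂ), (z - α a) / (z - α b) ≠ 0 := by
      intro z hz
      simp only [mem_compl_iff, mem_insert_iff, mem_singleton_iff, not_or] at hz
      exact div_ne_zero (sub_ne_zero.2 hz.1) (sub_ne_zero.2 hz.2)
    have hq0 : ∀ z ∈ Aᶜ, q z ≠ 0 := fun z hz h0 => by
      have := hq z (hsub hz)
      rw [h0] at this
      exact (mul_ne_zero (hr0 z (hsub hz)) (pow_ne_zero 2 (he0 z))) (by simpa [hG] using this.symm)
    have hcst := const_of_sq_eq_one hconn (u := fun z => k z * e z / q z)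
      ((hkc.mul hec).div (hqc.mono hsub) hq0) (fun z hz => by
        rw [div_pow, hq z (hsub hz), mul_pow, hk z hz]
        exact div_self (mul_ne_zero (hr0 z (hsub hz)) (pow_ne_zero _ (he0 z))))
    intro t ht
    refine ⟨fun z => (k z0 * e z0 / q z0) * q z / ((z - α a) / (z - α b)), ?_, ?_⟩
    · have h1 := hcq t ht
      have h2 := htne t ht
      have h3 := hr0 _ h2
      simp only [mem_compl_iff, mem_insert_iff, mem_singleton_iff, not_or] at h2
      refine ContinuousAt.div (h1.const_mul _) ?_ h3
      exact ContinuousAt.div (by fun_prop) (by fun_prop) (sub_ne_zero.2 h2.2)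
    · filter_upwards [self_mem_nhdsWithin,
        nhdsWithin_le_nhds (hτA _ (hmemA t ht) (hαU t ht))] with z hz hz1
      have hkz : k z ≠ 0 := fun h0 => by
        have := hk z hz
        rw [h0] at this
        exact hr0 z (hsub hz) (by simpa using this.symm)
      rw [← heg z hz1, hcst z0 hz0 z hz, ← hk z hz, div_mul_cancel₀ _ (hq0 z hz)]
      field_simp

theorem local_sqrt {X : Type*} [TopologicalSpace X] {F : X → ℂ} {p : X} {y : ℂ} (hy : y ≠ 0)
    (hp : F p = y ^ 2) (hF : ∀ᶠ z in 𝓝 p, ContinuousAt F z) :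
    ∃ s : X → ℂ, s p = y ∧ ∀ᶠ z in 𝓝 p, ContinuousAt s z ∧ s z ^ 2 = F z ∧ s z ≠ 0 := by
  have hy2 : F p ≠ 0 := by rw [hp]; exact pow_ne_zero _ hy
  refine ⟨fun z => y * Complex.exp (Complex.log (F z / F p) / 2), ?_, ?_⟩
  · simp [div_self hy2]
  have h1 : ∀ᶠ z in 𝓝 p, F z / F p ∈ Complex.slitPlane := by
    have hc : ContinuousAt (fun z => F z / F p) p := hF.self_of_nhds.div_const _
    refine hc.eventually_mem (Complex.isOpen_slitPlane.mem_nhds ?_)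
    simp only [div_self hy2]; exact Complex.one_mem_slitPlane
  filter_upwards [h1, hF] with z hz hzc
  refine ⟨?_, ?_, ?_⟩
  · have : ContinuousAt (fun z => Complex.log (F z / F p)) z :=
      ContinuousAt.clog (hzc.div_const _) hz
    fun_prop
  · have h0 : F z / F p ≠ 0 := Complex.slitPlane_ne_zero hz
    rw [mul_pow, ← Complex.exp_nat_mul, Nat.cast_ofNat, mul_div_cancel₀ _ two_ne_zero,
      Complex.exp_log h0, ← hp, mul_div_cancel₀ _ hy2]
  · exact mul_ne_zero hy (Complex.exp_ne_zero _)

theorem exists_sq_root_complex (w : ℂ) : ∃ y : ℂ, w = y ^ 2 := by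
  obtain ⟨y, hy⟩ := IsAlgClosed.exists_pow_nat_eq w (n := 2) (by norm_num)
  exact ⟨y, hy.symm⟩

theorem no_sqrt_odd {p : ℂ} {f u : ℂ → ℂ} {n : ℕ} (hn : Odd n)
    (hf : ∀ᶠ z in 𝓝[≠] p, ContinuousAt f z ∧ f z ^ 2 = (z - p) ^ n * u z)
    (hu0 : u p ≠ 0) (hu : ∀ᶠ z in 𝓝 p, ContinuousAt u z) : False := by
  obtain ⟨y, hy⟩ := exists_sq_root_complex (u p)
  have hy0 : y ≠ 0 := by rintro rfl; exact hu0 (by simpa using hy)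
  obtain ⟨s, _, hs⟩ := local_sqrt hy0 hy hu
  obtain ⟨m, rfl⟩ := hn
  rw [eventually_nhdsWithin_iff] at hf
  obtain ⟨ε, hε, hball⟩ := Metric.eventually_nhds_iff_ball.1 (hf.and hs)
  have hmem : ∀ z ∈ sphere p (ε / 2), z ∈ ball p ε ∧ z ≠ p := by
    intro z hz
    rw [mem_sphere] at hz
    constructor
    · rw [mem_ball, hz]; linarith
    · rintro rfl; rw [dist_self] at hz; linarith
  refine no_sqrt_circle p (δ := ε / 2) (by positivity) (fun z => f z / (s z * (z - p) ^ m)) ?_ ?_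
  · intro z hz
    obtain ⟨h1, h2⟩ := hmem z hz
    obtain ⟨h3, h4, h5, h6⟩ := hball z h1
    have h7 := (h3 h2).1
    apply ContinuousAt.continuousWithinAt
    refine ContinuousAt.div h7 (h4.mul (by fun_prop)) ?_
    exact mul_ne_zero h6 (pow_ne_zero _ (sub_ne_zero.2 h2))
  · intro z hz
    obtain ⟨h1, h2⟩ := hmem z hz
    obtain ⟨h3, h4, h5, h6⟩ := hball z h1
    have h7 := (h3 h2).2
    have h8 := sub_ne_zero.2 h2
    rw [div_pow, mul_pow, h7, h5]
    have : u z ≠ 0 := by rw [← h5]; exact pow_ne_zero _ h6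
    field_simp
    ring

/-- No disc embeds into the line. -/
theorem no_injOn_real {p : ℂ} {ε : ℝ} (hε : 0 < ε) {i : ℂ → ℝ} (hc : ContinuousOn i (ball p ε))
    (hi : InjOn i (ball p ε)) : False := by
  have hm : ∀ z ∈ sphere (0 : ℂ) (ε / 2), p + z ∈ ball p ε ∧ p - z ∈ ball p ε := by
    intro z hz
    have : ‖z‖ = ε / 2 := by simpa using hz
    constructor <;> simp [this] <;> linarith
  have hconn : IsPreconnected (sphere (0 : ℂ) (ε / 2)) :=
    isPreconnected_sphere one_lt_rank_complex 0 _
  have hcd : ContinuousOn (fun z => i (p + z) - i (p - z)) (sphere (0 : ℂ) (ε / 2)) :=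
    (hc.comp (by fun_prop) (fun z hz => (hm z hz).1)).sub
      (hc.comp (by fun_prop) (fun z hz => (hm z hz).2))
  have h1 : ((ε / 2 : ℝ) : ℂ) ∈ sphere (0 : ℂ) (ε / 2) := by
    simp [abs_of_pos hε]
  have h2 : -((ε / 2 : ℝ) : ℂ) ∈ sphere (0 : ℂ) (ε / 2) := by
    simp [abs_of_pos hε]
  have key : ∃ z ∈ sphere (0 : ℂ) (ε / 2), i (p + z) - i (p - z) = 0 := by
    rcases le_total (i (p + (ε / 2 : ℝ)) - i (p - (ε / 2 : ℝ))) 0 with hle | hle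
    · obtain ⟨z, hz, hz'⟩ := hconn.intermediate_value h1 h2 hcd (show (0 : ℝ) ∈ _ from
        ⟨hle, by simp only [sub_neg_eq_add, ← sub_eq_add_neg]; linarith⟩)
      exact ⟨z, hz, hz'⟩
    · obtain ⟨z, hz, hz'⟩ := hconn.intermediate_value h2 h1 hcd (show (0 : ℝ) ∈ _ from
        ⟨by simp only [sub_neg_eq_add, ← sub_eq_add_neg]; linarith, hle⟩)
      exact ⟨z, hz, hz'⟩
  obtain ⟨z, hz, hz0⟩ := key
  have h3 := hi (hm z hz).1 (hm z hz).2 (sub_eq_zero.1 hz0)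
  have h4 : z = 0 := by
    have : z + z = 0 := by linear_combination h3
    simpa using this
  rw [h4] at hz
  simp at hz
  linarith

theorem IsArcOn.exists_leftInv {X : Type*} [TopologicalSpace X] [T2Space X] {α : ℝ → X} {a b : ℝ}
    (h : IsArcOn α a b) : ∃ i : X → ℝ, ContinuousOn i (α '' Icc a b) ∧ InjOn i (α '' Icc a b) ∧
      ∀ t ∈ Icc a b, i (α t) = t := by
  classical
  have hemb := h.isClosedEmbedding
  have hi : ∀ t ∈ Icc a b, Function.invFunOn α (Icc a b) (α t) = t := fun t ht =>
    h.inj (Function.invFunOn_mem ⟨t, ht, rfl⟩) ht (Function.invFunOn_eq ⟨t, ht, rfl⟩)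
  refine ⟨Function.invFunOn α (Icc a b), ?_, ?_, hi⟩
  · rw [continuousOn_iff_isClosed]
    intro t ht
    refine ⟨α '' (t ∩ Icc a b), ?_, ?_⟩
    · exact ((isCompact_Icc.inter_left ht).image_of_continuousOn
        (h.cont.mono inter_subset_right)).isClosed
    · ext x
      constructor
      · rintro ⟨hx, s, hs, rfl⟩
        rw [mem_preimage, hi s hs] at hx
        exact ⟨⟨s, ⟨hx, hs⟩, rfl⟩, s, hs, rfl⟩
      · rintro ⟨⟨s, ⟨hs, hs'⟩, rfl⟩, hx⟩
        exact ⟨by rw [mem_preimage, hi s hs']; exact hs, hx⟩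
  · rintro _ ⟨s, hs, rfl⟩ _ ⟨s', hs', rfl⟩ he
    rw [hi s hs, hi s' hs'] at he
    rw [he]

theorem IsArcOn.dense_compl {α : ℝ → ℂ} {a b : ℝ} (h : IsArcOn α a b) :
    Dense (α '' Icc a b)ᶜ := by
  rw [← interior_eq_empty_iff_dense_compl, eq_empty_iff_forall_notMem]
  intro p hp
  obtain ⟨ε, hε, hb⟩ := Metric.isOpen_iff.1 isOpen_interior p hp
  have hb' := hb.trans interior_subset
  obtain ⟨i, hic, hii, _⟩ := h.exists_leftInv
  exact no_injOn_real hε (hic.mono hb') (hii.mono hb')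

/-- The square root of `(z - α a)/(z - α b)` jumps at interior points of the arc. -/
theorem IsArcOn.no_limit {α : ℝ → ℂ} {a b : ℝ} (h : IsArcOn α a b)
    {k : ℂ → ℂ} (hkc : ContinuousOn k (α '' Icc a b)ᶜ)
    (hk : ∀ z ∉ α '' Icc a b, k z ^ 2 = (z - α a) / (z - α b)) {t : ℝ} (ht : t ∈ Ioo a b)
    {y : ℂ} (hy : Tendsto k (𝓝[(α '' Icc a b)ᶜ] (α t)) (𝓝 y)) : False := by
  classical
  set A := α '' Icc a b with hA
  have hAcl : IsClosed A := h.isClosed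
  have htI : t ∈ Icc a b := ⟨ht.1.le, ht.2.le⟩
  have haI : a ∈ Icc a b := ⟨le_rfl, h.le⟩
  have hbI : b ∈ Icc a b := ⟨h.le, le_rfl⟩
  set r : ℂ → ℂ := fun z => (z - α a) / (z - α b) with hr
  have hta : α t ≠ α a := fun e => ht.1.ne' (h.inj htI haI e)
  have htb : α t ≠ α b := fun e => ht.2.ne (h.inj htI hbI e)
  have hrc : ∀ z, z ≠ α b → ContinuousAt r z := fun z hz =>
    ContinuousAt.div (by fun_prop) (by fun_prop) (sub_ne_zero.2 hz)
  have hr0 : ∀ z, z ≠ α a → z ≠ α b → r z ≠ 0 := fun z h1 h2 =>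
    div_ne_zero (sub_ne_zero.2 h1) (sub_ne_zero.2 h2)
  have hne : (𝓝[Aᶜ] (α t)).NeBot := mem_closure_iff_nhdsWithin_neBot.1 (h.dense_compl (α t))
  have hy2 : r (α t) = y ^ 2 := by
    refine tendsto_nhds_unique ((hrc _ htb).tendsto.mono_left nhdsWithin_le_nhds)
      ((hy.pow 2).congr' ?_)
    filter_upwards [self_mem_nhdsWithin] with z hz
    exact hk z hz
  have hy0 : y ≠ 0 := by
    rintro rfl; exact hr0 _ hta htb (by simpa using hy2)
  obtain ⟨s, hsp, hs⟩ := local_sqrt hy0 hy2 (by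
    filter_upwards [isOpen_ne.mem_nhds htb] with z hz using hrc z hz)
  -- near `α t`, `k = s`
  have hks : ∀ᶠ z in 𝓝[Aᶜ] (α t), k z = s z := by
    have hsc : ContinuousAt s (α t) := hs.self_of_nhds.1
    have h1 : Tendsto (fun z => k z / s z) (𝓝[Aᶜ] (α t)) (𝓝 1) := by
      have := hy.div (hsc.tendsto.mono_left nhdsWithin_le_nhds) (by rw [hsp]; exact hy0)
      rwa [hsp, div_self hy0] at this
    have h2 := h1.eventually_ne (show (1 : ℂ) ≠ -1 by norm_num [Complex.ext_iff])
    filter_upwards [h2, nhdsWithin_le_nhds hs, self_mem_nhdsWithin] with z hz1 hz2 hz3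
    have : (k z / s z) ^ 2 = 1 ^ 2 := by
      rw [div_pow, hk z hz3, hz2.2.1, one_pow]
      exact div_self (by change r z ≠ 0; rw [← hz2.2.1]; exact pow_ne_zero _ hz2.2.2)
    rcases eq_or_eq_neg_of_sq_eq_sq _ _ this with e | e
    · exact (div_eq_one_iff_eq hz2.2.2).1 e
    · exact absurd e hz1
  rw [eventually_nhdsWithin_iff] at hks
  obtain ⟨ε, hε, hball⟩ := Metric.eventually_nhds_iff_ball.1 (hks.and hs)
  -- a subarc inside the ball
  obtain ⟨s1, s2, h1, h2, hsub⟩ : ∃ s1 s2, a < s1 ∧ s1 < t ∧ t < s2 ∧ s2 < b ∧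
      ∀ x ∈ Icc s1 s2, α x ∈ ball (α t) ε := by
    have hca : ContinuousAt α t := h.cont.continuousAt (Icc_mem_nhds ht.1 ht.2)
    have := (hca.eventually_mem (ball_mem_nhds _ hε)).and (Ioo_mem_nhds ht.1 ht.2)
    obtain ⟨δ, hδ, hd⟩ := Metric.eventually_nhds_iff_ball.1 this
    have e1 : t - δ / 2 ∈ ball t δ := by
      rw [mem_ball, Real.dist_eq, abs_lt]; constructor <;> linarith
    have e2 : t + δ / 2 ∈ ball t δ := by
      rw [mem_ball, Real.dist_eq, abs_lt]; constructor <;> linarith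
    refine ⟨t - δ / 2, t + δ / 2, (hd _ e1).2.1, by linarith, by linarith, (hd _ e2).2.2, ?_⟩
    intro x hx
    refine (hd x ?_).1
    rw [mem_ball, Real.dist_eq, abs_lt]; constructor <;> linarith [hx.1, hx.2]
  obtain ⟨h3, h4, hsub⟩ := hsub
  have hA1 := h.sub le_rfl h1.le (h2.le.trans (h3.le.trans h4.le))
  have hA3 := h.sub h1.le (h2.le.trans h3.le) h4.le
  have hA2 := h.sub (h1.le.trans (h2.le.trans h3.le)) h4.le le_rfl
  obtain ⟨k1, hk1c, hk1⟩ := hA1.exists_sqrt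
  obtain ⟨k2, hk2c, hk2⟩ := hA2.exists_sqrt
  obtain ⟨k3, hk3c, hk3⟩ := hA3.exists_sqrt
  set A1 := α '' Icc a s1 with hA1d
  set A2 := α '' Icc s2 b with hA2d
  set A3 := α '' Icc s1 s2 with hA3d
  have hunion : ∀ z, z ∉ A1 → z ∉ A2 → z ∉ A3 → z ∉ A := by
    rintro _ z1 z2 z3 ⟨x, hx, rfl⟩
    rcases le_total x s1 with hx1 | hx1
    · exact z1 ⟨x, ⟨hx.1, hx1⟩, rfl⟩
    rcases le_total x s2 with hx2 | hx2
    · exact z3 ⟨x, ⟨hx1, hx2⟩, rfl⟩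
    · exact z2 ⟨x, ⟨hx2, hx.2⟩, rfl⟩
  have hs1I : s1 ∈ Icc a b := ⟨h1.le, h2.le.trans (h3.le.trans h4.le)⟩
  have hs2I : s2 ∈ Icc a b := ⟨h1.le.trans (h2.le.trans h3.le), h4.le⟩
  have hsub1 : A1 ⊆ A := image_mono (Icc_subset_Icc le_rfl hs1I.2)
  have hsub2 : A2 ⊆ A := image_mono (Icc_subset_Icc hs2I.1 le_rfl)
  have hsub3 : A3 ⊆ A := image_mono (Icc_subset_Icc hs1I.1 hs2I.2)
  have hA3' : ∀ z ∈ A3, z ≠ α s1 → z ≠ α s2 → z ∉ A1 ∧ z ∉ A2 := by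
    rintro _ ⟨x, hx, rfl⟩ e1 e2
    have hxI : x ∈ Icc a b := ⟨hs1I.1.trans hx.1, hx.2.trans hs2I.2⟩
    constructor
    · rintro ⟨x', hx', e⟩
      have := h.inj ⟨hx'.1, hx'.2.trans hs1I.2⟩ hxI e
      subst this
      exact e1 (by rw [le_antisymm hx'.2 hx.1])
    · rintro ⟨x', hx', e⟩
      have := h.inj ⟨hs2I.1.trans hx'.1, hx'.2⟩ hxI e
      subst this
      exact e2 (by rw [le_antisymm hx.2 hx'.1])
  have hB : ∀ z ∈ A3, z ∈ ball (α t) ε := by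
    rintro _ ⟨x, hx, rfl⟩; exact hsub x hx
  have hnea : ∀ z, z ∉ A → z ≠ α a ∧ z ≠ α b ∧ z ≠ α s1 ∧ z ≠ α s2 := by
    intro z hz
    refine ⟨?_, ?_, ?_, ?_⟩
    · rintro rfl; exact hz ⟨a, haI, rfl⟩
    · rintro rfl; exact hz ⟨b, hbI, rfl⟩
    · rintro rfl; exact hz ⟨s1, hs1I, rfl⟩
    · rintro rfl; exact hz ⟨s2, hs2I, rfl⟩
  have hne1 : ∀ z ∉ A1, k1 z ≠ 0 := by
    intro z hz h0
    have := hk1 z hz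
    rw [h0] at this
    have e1 : z ≠ α a := by rintro rfl; exact hz ⟨a, ⟨le_rfl, h1.le⟩, rfl⟩
    have e2 : z ≠ α s1 := by rintro rfl; exact hz ⟨s1, ⟨h1.le, le_rfl⟩, rfl⟩
    exact div_ne_zero (sub_ne_zero.2 e1) (sub_ne_zero.2 e2) (by simpa using this.symm)
  have hne2 : ∀ z ∉ A2, k2 z ≠ 0 := by
    intro z hz h0
    have := hk2 z hz
    rw [h0] at this
    have e1 : z ≠ α s2 := by rintro rfl; exact hz ⟨s2, ⟨le_rfl, h4.le⟩, rfl⟩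
    have e2 : z ≠ α b := by rintro rfl; exact hz ⟨b, ⟨h4.le, le_rfl⟩, rfl⟩
    exact div_ne_zero (sub_ne_zero.2 e1) (sub_ne_zero.2 e2) (by simpa using this.symm)
  have hk0 : ∀ z ∉ A, k z ≠ 0 := by
    intro z hz h0
    have := hk z hz
    rw [h0] at this
    exact hr0 z (hnea z hz).1 (hnea z hz).2.1 (by simpa [hr] using this.symm)
  have hcst := const_of_sq_eq_one h.isPreconnected_compl (u := fun z => k1 z * k2 z * k3 z / k z)
    ((((hk1c.mono (compl_subset_compl.2 hsub1)).mul (hk2c.mono (compl_subset_compl.2 hsub2))).mul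
      (hk3c.mono (compl_subset_compl.2 hsub3))).div hkc hk0) (fun z hz => by
      obtain ⟨e1, e2, e3, e4⟩ := hnea z hz
      rw [div_pow, mul_pow, mul_pow, hk z hz, hk1 z (fun h => hz (hsub1 h)),
        hk2 z (fun h => hz (hsub2 h)), hk3 z (fun h => hz (hsub3 h))]
      have e1' := sub_ne_zero.2 e1
      have e2' := sub_ne_zero.2 e2
      have e3' := sub_ne_zero.2 e3
      have e4' := sub_ne_zero.2 e4
      field_simp)
  obtain ⟨z0, hz0⟩ : (Aᶜ).Nonempty := h.dense_compl.nonempty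
  set c := k1 z0 * k2 z0 * k3 z0 / k z0 with hc
  have hc2 : c ^ 2 = 1 := by
    obtain ⟨e1, e2, e3, e4⟩ := hnea z0 hz0
    rw [hc, div_pow, mul_pow, mul_pow, hk z0 hz0, hk1 z0 (fun h => hz0 (hsub1 h)),
        hk2 z0 (fun h => hz0 (hsub2 h)), hk3 z0 (fun h => hz0 (hsub3 h))]
    have e1' := sub_ne_zero.2 e1
    have e2' := sub_ne_zero.2 e2
    have e3' := sub_ne_zero.2 e3
    have e4' := sub_ne_zero.2 e4
    field_simp
  set m : ℂ → ℂ := fun z => c * s z / (k1 z * k2 z) with hm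
  have hmk : ∀ z ∉ A, z ∈ ball (α t) ε → k3 z = m z := by
    intro z hz hzb
    have e1 := hcst z0 hz0 z hz
    change c = _ at e1
    have e2 := (hball z hzb).1 hz
    have e3 := hne1 z (fun h => hz (hsub1 h))
    have e4 := hne2 z (fun h => hz (hsub2 h))
    rw [eq_div_iff (hk0 z hz)] at e1
    change k3 z = c * s z / (k1 z * k2 z)
    rw [← e2, eq_div_iff (mul_ne_zero e3 e4), e1]; ring
  set n : ℂ → ℂ := fun z => if z ∈ A3 then m z else k3 z with hn
  have hs12 : α s1 ≠ α s2 := fun e => (h2.trans h3).ne (h.inj hs1I hs2I e)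
  have hs1b : α s1 ≠ α b := fun e => (h2.trans (h3.trans h4)).ne (h.inj hs1I hbI e)
  have hmain : ∀ z, z ≠ α s1 → z ≠ α s2 →
      ContinuousAt n z ∧ n z ^ 2 = (z - α s1) ^ 1 * (1 / (z - α s2)) := by
    intro z hz1 hz2
    by_cases hz : z ∈ A3
    · obtain ⟨n1, n2⟩ := hA3' z hz hz1 hz2
      have hbz := hB z hz
      have f1 : ∀ᶠ w in 𝓝 z, w ∉ A1 := hA1.isClosed.isOpen_compl.mem_nhds n1
      have f2 : ∀ᶠ w in 𝓝 z, w ∉ A2 := hA2.isClosed.isOpen_compl.mem_nhds n2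
      have f3 : ∀ᶠ w in 𝓝 z, w ∈ ball (α t) ε := isOpen_ball.mem_nhds hbz
      have hnm : n =ᶠ[𝓝 z] m := by
        filter_upwards [f1, f2, f3] with w w1 w2 w3
        by_cases hw : w ∈ A3
        · simp [hn, hw]
        · simp only [hn, hw, if_false]
          exact hmk w (hunion w w1 w2 hw) w3
      constructor
      · refine ContinuousAt.congr ?_ hnm.symm
        have c1 := hk1c.continuousAt (hA1.isClosed.isOpen_compl.mem_nhds n1)
        have c2 := hk2c.continuousAt (hA2.isClosed.isOpen_compl.mem_nhds n2)
        exact (((hball z hbz).2.1).const_mul c).div (c1.mul c2)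
          (mul_ne_zero (hne1 z n1) (hne2 z n2))
      · rw [hnm.eq_of_nhds, hm]
        simp only
        rw [div_pow, mul_pow, mul_pow, hc2, hk1 z n1, hk2 z n2, (hball z hbz).2.2.1]
        have za : z ≠ α a := by rintro rfl; exact n1 ⟨a, ⟨le_rfl, h1.le⟩, rfl⟩
        have zb : z ≠ α b := by rintro rfl; exact n2 ⟨b, ⟨h4.le, le_rfl⟩, rfl⟩
        have e1 := sub_ne_zero.2 za
        have e2 := sub_ne_zero.2 zb
        have e3 := sub_ne_zero.2 hz1
        have e4 := sub_ne_zero.2 hz2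
        simp only [hr]
        field_simp
    · have hop := hA3.isClosed.isOpen_compl.mem_nhds hz
      have hnk : n =ᶠ[𝓝 z] k3 := by
        filter_upwards [hop] with w hw
        have hw' : w ∉ A3 := hw
        simp [hn, hw']
      refine ⟨(hk3c.continuousAt hop).congr hnk.symm, ?_⟩
      rw [hnk.eq_of_nhds, hk3 z hz]; ring
  refine no_sqrt_odd (p := α s1) (f := n) (u := fun z => 1 / (z - α s2)) (n := 1) odd_one ?_ ?_ ?_
  · filter_upwards [self_mem_nhdsWithin, nhdsWithin_le_nhds (isOpen_ne.mem_nhds hs12)] with z hz hz'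
    exact hmain z hz hz'
  · exact one_div_ne_zero (sub_ne_zero.2 hs12)
  · filter_upwards [isOpen_ne.mem_nhds hs12] with z hz
    exact ContinuousAt.div (by fun_prop) (by fun_prop) (sub_ne_zero.2 hz)

variable {M : Type*} [TopologicalSpace M] [T2Space M]

/-- Properties of the multivalued square root attached to an arc inside a chart. -/
structure ArcRoot (φ : OpenPartialHomeomorph M ℂ) (γ : ℝ → M) (a b : ℝ) (k : M → ℂ) : Prop where
  cont : ∀ x ∈ φ.source, x ∉ γ '' Icc a b → ContinuousAt k x
  sq : ∀ x ∈ φ.source, x ∉ γ '' Icc a b → k x ^ 2 = (φ x - φ (γ a)) / (φ x - φ (γ b))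
  nolim : ∀ t ∈ Ioo a b, ∀ y, ¬ Tendsto k (𝓝[(γ '' Icc a b)ᶜ] (γ t)) (𝓝 y)
  dich : ∀ N : Set M, IsOpen N → (∀ t ∈ Ioo a b, γ t ∈ N) → ∀ g : M → ZMod 2,
    (∀ x ∈ N, x ∉ γ '' Icc a b → ∀ᶠ w in 𝓝 x, g w = g x) →
    (∀ t ∈ Ioo a b, ∃ c, ∀ᶠ x in 𝓝[(γ '' Icc a b)ᶜ] (γ t), g x = c) ∨
    (∀ t ∈ Ioo a b, ∃ s : M → ℂ, ContinuousAt s (γ t) ∧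
      ∀ᶠ x in 𝓝[(γ '' Icc a b)ᶜ] (γ t), sgn (g x) = k x * s x)

theorem exists_arcRoot (φ : OpenPartialHomeomorph M ℂ) {γ : ℝ → M} {a b : ℝ} (h : IsArcOn γ a b)
    (hab : a < b) (hs : ∀ t ∈ Icc a b, γ t ∈ φ.source) : ∃ k, ArcRoot φ γ a b k := by
  have hα : IsArcOn (fun t => φ (γ t)) a b :=
    ⟨h.le, φ.continuousOn.comp h.cont hs, fun x hx y hy e => h.inj hx hy (φ.injOn (hs x hx) (hs y hy) e)⟩
  set α : ℝ → ℂ := fun t => φ (γ t) with hαd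
  obtain ⟨k, hkc, hk⟩ := hα.exists_sqrt
  have hmem : ∀ x ∈ φ.source, (φ x ∈ α '' Icc a b ↔ x ∈ γ '' Icc a b) := by
    intro x hx
    constructor
    · rintro ⟨t, ht, e⟩
      exact ⟨t, ht, φ.injOn (hs t ht) hx e⟩
    · rintro ⟨t, ht, rfl⟩; exact ⟨t, ht, rfl⟩
  have hmap : ∀ x ∈ φ.source, map φ (𝓝[(γ '' Icc a b)ᶜ] x) = 𝓝[(α '' Icc a b)ᶜ] (φ x) := by
    intro x hx
    rw [φ.map_nhdsWithin_eq hx]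
    have : φ '' (φ.source ∩ (γ '' Icc a b)ᶜ) = φ.target ∩ (α '' Icc a b)ᶜ := by
      ext z
      constructor
      · rintro ⟨w, ⟨hw, hw'⟩, rfl⟩
        exact ⟨φ.map_source hw, fun h => hw' ((hmem w hw).1 h)⟩
      · rintro ⟨hz, hz'⟩
        refine ⟨φ.symm z, ⟨φ.map_target hz, fun h => hz' ?_⟩, φ.right_inv hz⟩
        rw [← hmem _ (φ.map_target hz), φ.right_inv hz] at h
        exact h
    rw [this]
    exact nhdsWithin_inter_of_mem (nhdsWithin_le_nhds (φ.open_target.mem_nhds (φ.map_source hx)))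
  have htI : ∀ t ∈ Ioo a b, t ∈ Icc a b := fun t ht => ⟨ht.1.le, ht.2.le⟩
  refine ⟨fun x => k (φ x), ?_, ?_, ?_, ?_⟩
  · intro x hx hxA
    have : ContinuousAt k (φ x) :=
      hkc.continuousAt (hα.isClosed.isOpen_compl.mem_nhds (fun h => hxA ((hmem x hx).1 h)))
    exact ContinuousAt.comp (f := φ) this (φ.continuousAt hx)
  · intro x hx hxA
    exact hk _ (fun h => hxA ((hmem x hx).1 h))
  · intro t ht y hy
    refine hα.no_limit hkc hk ht (y := y) ?_
    change Tendsto k (𝓝[(α '' Icc a b)ᶜ] (φ (γ t))) (𝓝 y)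
    rw [← hmap _ (hs t (htI t ht)), tendsto_map'_iff]
    exact hy
  · intro N hN hNt g hg
    obtain ⟨R, hR⟩ := hα.isCompact.isBounded.subset_ball 0
    have hsymm : ∀ x ∈ φ.source, Tendsto φ.symm (𝓝 (φ x)) (𝓝 x) := fun x hx => φ.tendsto_symm hx
    set U : Set ℂ := (φ.target ∩ φ.symm ⁻¹' N) ∩ ball 0 R with hUd
    have hU : IsOpen U := (φ.isOpen_inter_preimage_symm hN).inter isOpen_ball
    rcases hα.dichotomy hab hkc hk hU (isBounded_ball.subset inter_subset_right)
      (fun t ht => ⟨⟨φ.map_source (hs t (htI t ht)), by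
        change φ.symm (φ (γ t)) ∈ N
        rw [φ.left_inv (hs t (htI t ht))]; exact hNt t ht⟩, hR ⟨t, htI t ht, rfl⟩⟩)
      (g := fun z => g (φ.symm z)) (by
        rintro z ⟨⟨hz, hzN⟩, -⟩ hzA
        have h1 := hg (φ.symm z) hzN (fun h => hzA (by
          rw [← hmem _ (φ.map_target hz), φ.right_inv hz] at h; exact h))
        exact (φ.continuousAt_symm hz).eventually h1) with hd | hd
    · left
      intro t ht
      obtain ⟨c, hc⟩ := hd t ht
      refine ⟨c, ?_⟩
      change ∀ᶠ z in 𝓝[(α '' Icc a b)ᶜ] (φ (γ t)), _ at hc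
      rw [← hmap _ (hs t (htI t ht)), eventually_map] at hc
      filter_upwards [hc, nhdsWithin_le_nhds (φ.open_source.mem_nhds (hs t (htI t ht)))] with x hx hxs
      rwa [φ.left_inv hxs] at hx
    · right
      intro t ht
      obtain ⟨s, hsc, hc⟩ := hd t ht
      refine ⟨fun x => s (φ x), ?_, ?_⟩
      · exact ContinuousAt.comp (f := φ) (g := s) hsc (φ.continuousAt (hs t (htI t ht)))
      change ∀ᶠ z in 𝓝[(α '' Icc a b)ᶜ] (φ (γ t)), _ at hc
      rw [← hmap _ (hs t (htI t ht)), eventually_map] at hc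
      filter_upwards [hc, nhdsWithin_le_nhds (φ.open_source.mem_nhds (hs t (htI t ht)))] with x hx hxs
      rwa [φ.left_inv hxs] at hx

/-- A space with charts in the complex plane. -/
class Surf (M : Type*) [TopologicalSpace M] : Prop where
  chart : ∀ p : M, ∃ φ : OpenPartialHomeomorph M ℂ, p ∈ φ.source

/-- Parametrised graph drawings. -/
structure GD (M V E : Type*) [TopologicalSpace M] where
  f : V → M
  γ : E → ℝ → M
  src : E → V
  tgt : E → V
  f_inj : Function.Injective f
  arc : ∀ e, IsArcOn (γ e) 0 1
  γ0 : ∀ e, γ e 0 = f (src e)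
  γ1 : ∀ e, γ e 1 = f (tgt e)
  int_ne : ∀ e, ∀ t ∈ Ioo (0 : ℝ) 1, ∀ v, γ e t ≠ f v
  int_disj : ∀ e e', ∀ t ∈ Ioo (0 : ℝ) 1, ∀ t' ∈ Ioo (0 : ℝ) 1, γ e t = γ e' t' → e = e'

namespace GD

variable {M V E : Type*} [TopologicalSpace M] (D : GD M V E)

/-- The point set of the drawing. -/
def K : Set M := range D.f ∪ ⋃ e, D.γ e '' Icc 0 1

theorem f_mem (v : V) : D.f v ∈ D.K := Or.inl ⟨v, rfl⟩

theorem γ_mem (e : E) {t : ℝ} (ht : t ∈ Icc (0 : ℝ) 1) : D.γ e t ∈ D.K :=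
  Or.inr (mem_iUnion.2 ⟨e, t, ht, rfl⟩)

theorem K_cases {p : M} (hp : p ∈ D.K) :
    (∃ v, p = D.f v) ∨ ∃ e, ∃ t ∈ Ioo (0 : ℝ) 1, p = D.γ e t := by
  rcases hp with ⟨v, rfl⟩ | hp
  · exact Or.inl ⟨v, rfl⟩
  · obtain ⟨e, t, ht, rfl⟩ := mem_iUnion.1 hp
    rcases eq_or_lt_of_le ht.1 with rfl | h0
    · exact Or.inl ⟨_, D.γ0 e⟩
    rcases eq_or_lt_of_le ht.2 with rfl | h1
    · exact Or.inl ⟨_, D.γ1 e⟩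
    exact Or.inr ⟨e, t, ⟨h0, h1⟩, rfl⟩

section
variable [T2Space M]

theorem arc_closed (e : E) {a b : ℝ} (ha : 0 ≤ a) (hb : b ≤ 1) :
    IsClosed (D.γ e '' Icc a b) :=
  (isCompact_Icc.image_of_continuousOn ((D.arc e).cont.mono (Icc_subset_Icc ha hb))).isClosed

theorem K_closed [Finite V] [Finite E] : IsClosed D.K :=
  (Set.finite_range _).isClosed.union
    (isClosed_iUnion_of_finite fun e => D.arc_closed e le_rfl le_rfl)

theorem no_open_line [Surf M] {O : Set M} (hO : IsOpen O) {i : M → ℝ} (hc : ContinuousOn i O)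
    (hi : InjOn i O) : O = ∅ := by
  by_contra hne
  obtain ⟨p, hp⟩ := nonempty_iff_ne_empty.2 hne
  obtain ⟨φ, hφ⟩ := Surf.chart p
  have hop := φ.isOpen_inter_preimage_symm hO
  have hmem : φ p ∈ φ.target ∩ φ.symm ⁻¹' O :=
    ⟨φ.map_source hφ, by rw [mem_preimage, φ.left_inv hφ]; exact hp⟩
  obtain ⟨ε, hε, hb⟩ := Metric.isOpen_iff.1 hop _ hmem
  refine no_injOn_real (p := φ p) hε (i := fun z => i (φ.symm z)) ?_ ?_
  · exact hc.comp (φ.continuousOn_symm.mono (fun z hz => (hb hz).1)) (fun z hz => (hb hz).2)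
  · intro z hz w hw e
    exact φ.symm.injOn (hb hz).1 (hb hw).1 (hi (hb hz).2 (hb hw).2 e)

theorem interior_arc [Surf M] (e : E) : interior (D.γ e '' Icc 0 1) = ∅ := by
  obtain ⟨i, hic, hii, _⟩ := (D.arc e).exists_leftInv
  exact no_open_line isOpen_interior (hic.mono interior_subset) (hii.mono interior_subset)

theorem interior_pt [Surf M] (p : M) : interior ({p} : Set M) = ∅ :=
  no_open_line (i := fun _ => 0) isOpen_interior continuousOn_const
    (fun x hx y hy _ => by
      have h1 : x ∈ ({p} : Set M) := interior_subset hx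
      have h2 : y ∈ ({p} : Set M) := interior_subset hy
      rw [mem_singleton_iff] at h1 h2
      rw [h1, h2])

theorem dense_iInter_fin {ι : Type*} [Finite ι] {s : ι → Set M} (ho : ∀ i, IsOpen (s i))
    (hd : ∀ i, Dense (s i)) : Dense (⋂ i, s i) := by
  classical
  cases nonempty_fintype ι
  have : ∀ S : Finset ι, IsOpen (⋂ i ∈ S, s i) ∧ Dense (⋂ i ∈ S, s i) := by
    intro S
    induction S using Finset.induction_on with
    | empty => simp
    | insert a S ha ih =>
      rw [Finset.set_biInter_insert]
      exact ⟨(ho a).inter ih.1, (hd a).inter_of_isOpen_left ih.2 (ho a)⟩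
  simpa using (this Finset.univ).2

theorem dense_W [Surf M] [Finite V] [Finite E] : Dense D.Kᶜ := by
  have h1 : Dense (⋂ v, ({D.f v}ᶜ : Set M)) :=
    dense_iInter_fin
      (fun v => isClosed_singleton.isOpen_compl)
      (fun v => interior_eq_empty_iff_dense_compl.1 (interior_pt _))
  have h2 : Dense (⋂ e, (D.γ e '' Icc 0 1)ᶜ) :=
    dense_iInter_fin
      (fun e => (D.arc_closed e le_rfl le_rfl).isOpen_compl)
      (fun e => interior_eq_empty_iff_dense_compl.1 (D.interior_arc e))
  have h3 := h1.inter_of_isOpen_left h2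
    (isOpen_iInter_of_finite fun v => isClosed_singleton.isOpen_compl)
  refine h3.mono ?_
  rintro x ⟨hx1, hx2⟩ (⟨v, rfl⟩ | hx)
  · exact (mem_iInter.1 hx1 v) rfl
  · obtain ⟨e, he⟩ := mem_iUnion.1 hx
    exact (mem_iInter.1 hx2 e) he

theorem neBot_W [Surf M] [Finite V] [Finite E] (p : M) : (𝓝[D.Kᶜ] p).NeBot :=
  mem_closure_iff_nhdsWithin_neBot.1 (D.dense_W p)

/-- Near an interior point of an edge the drawing is a subarc of the edge. -/
theorem K_local [Finite V] [Finite E] (e : E) {a b t : ℝ} (ha : 0 ≤ a) (hb : b ≤ 1)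
    (ht : t ∈ Ioo a b) : ∀ᶠ x in 𝓝 (D.γ e t), (x ∈ D.K ↔ x ∈ D.γ e '' Icc a b) := by
  have htI : t ∈ Ioo (0 : ℝ) 1 := ⟨ha.trans_lt ht.1, ht.2.trans_le hb⟩
  have htC : t ∈ Icc (0 : ℝ) 1 := ⟨htI.1.le, htI.2.le⟩
  have c1 : IsClosed (range D.f) := (Set.finite_range _).isClosed
  have c2 : IsClosed (⋃ e' : {e' // e' ≠ e}, D.γ e' '' Icc 0 1) :=
    isClosed_iUnion_of_finite fun e' => D.arc_closed _ le_rfl le_rfl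
  have c3 : IsClosed (D.γ e '' Icc 0 a) := D.arc_closed e le_rfl (ht.1.le.trans (htI.2.le))
  have c4 : IsClosed (D.γ e '' Icc b 1) := D.arc_closed e (htI.1.le.trans ht.2.le) le_rfl
  have n1 : D.γ e t ∉ range D.f := by rintro ⟨v, hv⟩; exact D.int_ne e t htI v hv.symm
  have n2 : D.γ e t ∉ ⋃ e' : {e' // e' ≠ e}, D.γ e' '' Icc 0 1 := by
    intro h
    obtain ⟨⟨e', he'⟩, s, hs, hs'⟩ := mem_iUnion.1 h
    rcases eq_or_lt_of_le hs.1 with rfl | h0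
    · exact D.int_ne e t htI _ (hs'.symm.trans (D.γ0 e'))
    rcases eq_or_lt_of_le hs.2 with rfl | h1
    · exact D.int_ne e t htI _ (hs'.symm.trans (D.γ1 e'))
    exact he' (D.int_disj e' e s ⟨h0, h1⟩ t htI hs')
  have n3 : D.γ e t ∉ D.γ e '' Icc 0 a := by
    rintro ⟨s, hs, e1⟩
    have := (D.arc e).inj ⟨hs.1, hs.2.trans (ht.1.le.trans htI.2.le)⟩ htC e1
    linarith [hs.2, ht.1]
  have n4 : D.γ e t ∉ D.γ e '' Icc b 1 := by
    rintro ⟨s, hs, e1⟩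
    have := (D.arc e).inj ⟨htI.1.le.trans (ht.2.le.trans hs.1), hs.2⟩ htC e1
    linarith [hs.1, ht.2]
  filter_upwards [c1.isOpen_compl.mem_nhds n1, c2.isOpen_compl.mem_nhds n2,
    c3.isOpen_compl.mem_nhds n3, c4.isOpen_compl.mem_nhds n4] with x x1 x2 x3 x4
  constructor
  · rintro (hx | hx)
    · exact absurd hx x1
    obtain ⟨e', s, hs, rfl⟩ := mem_iUnion.1 hx
    by_cases he : e' = e
    · subst he
      refine ⟨s, ⟨?_, ?_⟩, rfl⟩
      · by_contra hlt
        exact x3 ⟨s, ⟨hs.1, (not_le.1 hlt).le⟩, rfl⟩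
      · by_contra hlt
        exact x4 ⟨s, ⟨(not_le.1 hlt).le, hs.2⟩, rfl⟩
    · exact (x2 (mem_iUnion.2 ⟨⟨e', he⟩, s, hs, rfl⟩)).elim
  · rintro ⟨s, hs, rfl⟩
    exact D.γ_mem e ⟨ha.trans hs.1, hs.2.trans hb⟩

theorem nhdsW_eq [Finite V] [Finite E] (e : E) {a b t : ℝ} (ha : 0 ≤ a) (hb : b ≤ 1)
    (ht : t ∈ Ioo a b) : 𝓝[D.Kᶜ] (D.γ e t) = 𝓝[(D.γ e '' Icc a b)ᶜ] (D.γ e t) := by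
  rw [nhdsWithin_eq_iff_eventuallyEq]
  filter_upwards [D.K_local e ha hb ht] with x hx
  exact propext (not_congr hx)

end

/-- `g` is constant off the drawing near `p`. -/
def LC (g : M → ZMod 2) (p : M) : Prop := ∃ c, ∀ᶠ x in 𝓝[D.Kᶜ] p, g x = c

/-- `g` is locally constant on `N \ K`. -/
def LK (g : M → ZMod 2) (N : Set M) : Prop := ∀ x ∈ N, x ∉ D.K → ∀ᶠ w in 𝓝 x, g w = g x

theorem LK.mono {D : GD M V E} {g : M → ZMod 2} {N N' : Set M} (h : D.LK g N) (hs : N' ⊆ N) :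
    D.LK g N' := fun x hx => h x (hs hx)

theorem LK.add {D : GD M V E} {g g' : M → ZMod 2} {N : Set M} (h : D.LK g N) (h' : D.LK g' N) :
    D.LK (g + g') N := fun x hx hK => by
  filter_upwards [h x hx hK, h' x hx hK] with w h1 h2
  simp [h1, h2]

theorem LC.add {D : GD M V E} {g g' : M → ZMod 2} {p : M} (h : D.LC g p) (h' : D.LC g' p) :
    D.LC (g + g') p := by
  obtain ⟨c, hc⟩ := h
  obtain ⟨c', hc'⟩ := h'
  refine ⟨c + c', ?_⟩
  filter_upwards [hc, hc'] with w h1 h2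
  simp [h1, h2]

theorem LC.congr {D : GD M V E} {g g' : M → ZMod 2} {p : M} (h : D.LC g p)
    (hh : ∀ᶠ x in 𝓝[D.Kᶜ] p, g x = g' x) : D.LC g' p := by
  obtain ⟨c, hc⟩ := h
  refine ⟨c, ?_⟩
  filter_upwards [hc, hh] with w h1 h2
  rw [← h2, h1]

theorem LK.lc {D : GD M V E} {g : M → ZMod 2} {N : Set M} (h : D.LK g N) {x : M} (hx : x ∈ N)
    (hK : x ∉ D.K) : D.LC g x := ⟨g x, nhdsWithin_le_nhds (h x hx hK)⟩

section
variable [T2Space M] [Surf M] [Finite V] [Finite E]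

theorem exists_piece (e : E) {t : ℝ} (ht : t ∈ Ioo (0 : ℝ) 1) {N : Set M} (hN : IsOpen N)
    (hmem : D.γ e t ∈ N) : ∃ a b : ℝ, 0 ≤ a ∧ b ≤ 1 ∧ t ∈ Ioo a b ∧ (∀ s ∈ Icc a b, D.γ e s ∈ N) ∧
      ∃ φ k, (∀ s ∈ Icc a b, D.γ e s ∈ φ.source) ∧ ArcRoot φ (D.γ e) a b k := by
  obtain ⟨φ, hφ⟩ := Surf.chart (D.γ e t)
  have hca : ContinuousAt (D.γ e) t := (D.arc e).cont.continuousAt (Icc_mem_nhds ht.1 ht.2)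
  have := (hca.eventually_mem ((hN.inter φ.open_source).mem_nhds ⟨hmem, hφ⟩)).and
    (Ioo_mem_nhds ht.1 ht.2)
  obtain ⟨δ, hδ, hd⟩ := Metric.eventually_nhds_iff_ball.1 this
  have e1 : t - δ / 2 ∈ ball t δ := by
    rw [mem_ball, Real.dist_eq, abs_lt]; constructor <;> linarith
  have e2 : t + δ / 2 ∈ ball t δ := by
    rw [mem_ball, Real.dist_eq, abs_lt]; constructor <;> linarith
  have hin : ∀ s ∈ Icc (t - δ / 2) (t + δ / 2), D.γ e s ∈ N ∩ φ.source := by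
    intro x hx
    refine (hd x ?_).1
    rw [mem_ball, Real.dist_eq, abs_lt]; constructor <;> linarith [hx.1, hx.2]
  have h0 := (hd _ e1).2.1
  have h1 := (hd _ e2).2.2
  obtain ⟨k, hk⟩ := exists_arcRoot φ ((D.arc e).sub h0.le (by linarith) h1.le) (by linarith)
    (fun s hs => (hin s hs).2)
  exact ⟨_, _, h0.le, h1.le, ⟨by linarith, by linarith⟩, fun s hs => (hin s hs).1, φ, k,
    fun s hs => (hin s hs).2, hk⟩

/-- The jump alternative for `g` excludes being constant. -/
theorem not_LC_of_root {e : E} {a b t : ℝ} (ha : 0 ≤ a) (hb : b ≤ 1) (ht : t ∈ Ioo a b)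
    {φ : OpenPartialHomeomorph M ℂ} {k : M → ℂ} (hs : ∀ s ∈ Icc a b, D.γ e s ∈ φ.source)
    (hk : ArcRoot φ (D.γ e) a b k) {g : M → ZMod 2} {s : M → ℂ} (hsc : ContinuousAt s (D.γ e t))
    (h : ∀ᶠ x in 𝓝[D.Kᶜ] (D.γ e t), sgn (g x) = k x * s x) : ¬ D.LC g (D.γ e t) := by
  rintro ⟨c, hc⟩
  have htI : t ∈ Icc a b := ⟨ht.1.le, ht.2.le⟩
  have hmono := (D.arc e).sub ha (ht.1.le.trans ht.2.le) hb
  have hta : φ (D.γ e t) - φ (D.γ e a) ≠ 0 := sub_ne_zero.2 fun h0 => ht.1.ne'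
    (hmono.inj htI ⟨le_rfl, hmono.le⟩ (φ.injOn (hs t htI) (hs a ⟨le_rfl, hmono.le⟩) h0))
  have htb : φ (D.γ e t) - φ (D.γ e b) ≠ 0 := sub_ne_zero.2 fun h0 => ht.2.ne
    (hmono.inj htI ⟨hmono.le, le_rfl⟩ (φ.injOn (hs t htI) (hs b ⟨hmono.le, le_rfl⟩) h0))
  have hev := D.K_local e ha hb ht
  have hsrc : ∀ᶠ x in 𝓝 (D.γ e t), x ∈ φ.source := φ.open_source.mem_nhds (hs t htI)
  have hne := D.neBot_W (D.γ e t)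
  have hφc : ContinuousAt φ (D.γ e t) := φ.continuousAt (hs t htI)
  have h1 : ContinuousAt (fun x => (φ x - φ (D.γ e a)) / (φ x - φ (D.γ e b)) * s x ^ 2) (D.γ e t) :=
    ((hφc.sub continuousAt_const).div (hφc.sub continuousAt_const) htb).mul (hsc.pow 2)
  have h2 : (φ (D.γ e t) - φ (D.γ e a)) / (φ (D.γ e t) - φ (D.γ e b)) * s (D.γ e t) ^ 2 = 1 := by
    refine tendsto_nhds_unique (h1.tendsto.mono_left (nhdsWithin_le_nhds (s := D.Kᶜ)))
      (tendsto_const_nhds.congr' ?_)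
    filter_upwards [h, self_mem_nhdsWithin, nhdsWithin_le_nhds hev, nhdsWithin_le_nhds hsrc]
      with x hx hxK hxA hxs
    have hxA' : x ∉ D.γ e '' Icc a b := fun h => hxK (hxA.2 h)
    rw [← hk.sq x hxs hxA', ← mul_pow, ← hx, sgn_sq]
  have hs0 : s (D.γ e t) ≠ 0 := by
    intro h0; rw [h0] at h2; simp at h2
  refine hk.nolim t ht (sgn c / s (D.γ e t)) ?_
  rw [← D.nhdsW_eq e ha hb ht]
  have h3 : Tendsto (fun x => sgn c / s x) (𝓝[D.Kᶜ] (D.γ e t)) (𝓝 (sgn c / s (D.γ e t))) :=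
    (tendsto_const_nhds.div hsc.tendsto hs0).mono_left nhdsWithin_le_nhds
  refine h3.congr' ?_
  filter_upwards [h, hc, nhdsWithin_le_nhds (hsc.eventually_ne hs0)] with x hx hxc hxs
  rw [← hxc, hx, mul_div_cancel_right₀ _ hxs]

theorem piece_dich {e : E} {a b : ℝ} (ha : 0 ≤ a) (hb : b ≤ 1)
    {φ : OpenPartialHomeomorph M ℂ} {k : M → ℂ}
    (hk : ArcRoot φ (D.γ e) a b k) {N : Set M} (hN : IsOpen N) (hNt : ∀ s ∈ Icc a b, D.γ e s ∈ N)
    {g : M → ZMod 2} (hg : D.LK g N) :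
    (∀ t ∈ Ioo a b, D.LC g (D.γ e t)) ∨
    (∀ t ∈ Ioo a b, ∃ s : M → ℂ, ContinuousAt s (D.γ e t) ∧
      ∀ᶠ x in 𝓝[D.Kᶜ] (D.γ e t), sgn (g x) = k x * s x) := by
  have hev : ∀ t ∈ Ioo a b, ∀ᶠ x in 𝓝 (D.γ e t), x ∈ N ∧ (x ∈ D.K ↔ x ∈ D.γ e '' Icc a b) :=
    fun t ht => Filter.Eventually.and (hN.mem_nhds (hNt t ⟨ht.1.le, ht.2.le⟩))
      (D.K_local e ha hb ht)
  set N' : Set M := interior {x | x ∈ N ∧ (x ∈ D.K ↔ x ∈ D.γ e '' Icc a b)} with hN'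
  have := hk.dich N' isOpen_interior (fun t ht => mem_interior_iff_mem_nhds.2 (hev t ht)) g
    (fun x hx hxA => by
      have := interior_subset hx
      exact hg x this.1 (fun h => hxA (this.2.1 h)))
  rcases this with h | h
  · left
    intro t ht
    obtain ⟨c, hc⟩ := h t ht
    exact ⟨c, by rwa [D.nhdsW_eq e ha hb ht]⟩
  · right
    intro t ht
    rw [D.nhdsW_eq e ha hb ht]
    exact h t ht

/-- S1 -/
theorem LC_locally_const {N : Set M} (hN : IsOpen N) {g : M → ZMod 2} (hg : D.LK g N) (e : E)
    {t : ℝ} (ht : t ∈ Ioo (0 : ℝ) 1) (hmem : D.γ e t ∈ N) :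
    ∀ᶠ s in 𝓝 t, (D.LC g (D.γ e s) ↔ D.LC g (D.γ e t)) := by
  obtain ⟨a, b, ha, hb, htab, hin, φ, k, hsrc, hk⟩ := D.exists_piece e ht hN hmem
  filter_upwards [Ioo_mem_nhds htab.1 htab.2] with s hs
  rcases D.piece_dich ha hb hk hN hin hg with h | h
  · exact ⟨fun _ => h t htab, fun _ => h s hs⟩
  · obtain ⟨s1, h1, h1'⟩ := h t htab
    obtain ⟨s2, h2, h2'⟩ := h s hs
    exact ⟨fun hh => absurd hh (D.not_LC_of_root ha hb hs hsrc hk h2 h2'),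
      fun hh => absurd hh (D.not_LC_of_root ha hb htab hsrc hk h1 h1')⟩

/-- S3 -/
theorem LC_add_of_not {N : Set M} (hN : IsOpen N) {g g' : M → ZMod 2} (hg : D.LK g N)
    (hg' : D.LK g' N) (e : E) {t : ℝ} (ht : t ∈ Ioo (0 : ℝ) 1) (hmem : D.γ e t ∈ N)
    (h : ¬ D.LC g (D.γ e t)) (h' : ¬ D.LC g' (D.γ e t)) : D.LC (g + g') (D.γ e t) := by
  obtain ⟨a, b, ha, hb, htab, hin, φ, k, hsrc, hk⟩ := D.exists_piece e ht hN hmem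
  rcases D.piece_dich ha hb hk hN hin hg with h1 | h1
  · exact absurd (h1 t htab) h
  rcases D.piece_dich ha hb hk hN hin hg' with h2 | h2
  · exact absurd (h2 t htab) h'
  obtain ⟨s1, c1, e1⟩ := h1 t htab
  obtain ⟨s2, c2, e2⟩ := h2 t htab
  have htI : t ∈ Icc a b := ⟨htab.1.le, htab.2.le⟩
  have hmono := (D.arc e).sub ha (htab.1.le.trans htab.2.le) hb
  have htb : φ (D.γ e t) - φ (D.γ e b) ≠ 0 := sub_ne_zero.2 fun h0 => htab.2.ne
    (hmono.inj htI ⟨hmono.le, le_rfl⟩ (φ.injOn (hsrc t htI) (hsrc b ⟨hmono.le, le_rfl⟩) h0))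
  have hφc : ContinuousAt φ (D.γ e t) := φ.continuousAt (hsrc t htI)
  have hc : ContinuousAt (fun x => (φ x - φ (D.γ e a)) / (φ x - φ (D.γ e b)) * (s1 x * s2 x))
      (D.γ e t) :=
    ((hφc.sub continuousAt_const).div (hφc.sub continuousAt_const) htb).mul (c1.mul c2)
  refine eventually_const_of_tendsto_sgn
    ((hc.tendsto.mono_left (nhdsWithin_le_nhds (s := D.Kᶜ))).congr' ?_)
  have hsrc' : ∀ᶠ x in 𝓝 (D.γ e t), x ∈ φ.source := φ.open_source.mem_nhds (hsrc t htI)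
  filter_upwards [e1, e2, self_mem_nhdsWithin, nhdsWithin_le_nhds (D.K_local e ha hb htab),
    nhdsWithin_le_nhds hsrc'] with x h1 h2 hxK hxA hxs
  have hxA' : x ∉ D.γ e '' Icc a b := fun h => hxK (hxA.2 h)
  rw [Pi.add_apply, sgn_add, h1, h2, ← hk.sq x hxs hxA']
  ring

/-- S2 -/
theorem LC_of_punctured {p : M} (hp : p ∈ D.K) {g : M → ZMod 2}
    (h : ∀ᶠ x in 𝓝[≠] p, D.LC g x) : D.LC g p := by
  classical
  obtain ⟨φ, hφ⟩ := Surf.chart p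
  rw [eventually_nhdsWithin_iff] at h
  have hopen : IsOpen (interior {x | x ∈ ({p}ᶜ : Set M) → D.LC g x}) := isOpen_interior
  have hmem : φ p ∈ φ.target ∩ φ.symm ⁻¹' (interior {x | x ∈ ({p}ᶜ : Set M) → D.LC g x}) :=
    ⟨φ.map_source hφ, by
      rw [mem_preimage, φ.left_inv hφ]; exact mem_interior_iff_mem_nhds.2 h⟩
  obtain ⟨ε, hε, hb⟩ := Metric.isOpen_iff.1 (φ.isOpen_inter_preimage_symm hopen) _ hmem
  have hLC : ∀ z ∈ ball (φ p) ε, z ≠ φ p → D.LC g (φ.symm z) := by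
    intro z hz hne
    refine interior_subset (hb hz).2 ?_
    intro h0
    have h0' : φ.symm z = p := h0
    exact hne (by rw [← h0', φ.right_inv (hb hz).1])
  -- value function
  let v : ℂ → ZMod 2 := fun z => if h : D.LC g (φ.symm z) then h.choose else 0
  have hv : ∀ z ∈ ball (φ p) ε, z ≠ φ p → ∀ᶠ x in 𝓝[D.Kᶜ] (φ.symm z), g x = v z := by
    intro z hz hne
    have := hLC z hz hne
    simp only [v, this, dif_pos]
    exact this.choose_spec
  set P : Set ℂ := {z | ‖z - φ p‖ ∈ Ioo 0 ε} with hP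
  have hPmem : ∀ z, z ∈ P ↔ z ∈ ball (φ p) ε ∧ z ≠ φ p := by
    intro z
    simp only [hP, mem_ofPred_eq, mem_Ioo, norm_pos_iff, sub_ne_zero, mem_ball, dist_eq_norm]
    tauto
  have hPc : IsPreconnected P :=
    isPreconnected_norm_mem one_lt_rank_complex isPreconnected_Ioo (fun r hr => hr.1) _
  have hloc : ∀ z ∈ P, ∀ᶠ w in 𝓝 z, w ∈ P → v w = v z := by
    intro z hz
    obtain ⟨hz1, hz2⟩ := (hPmem z).1 hz
    have h1 := hv z hz1 hz2
    rw [eventually_nhdsWithin_iff] at h1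
    have h2 := (φ.continuousAt_symm (hb hz1).1).eventually (eventually_eventually_nhds.2 h1)
    filter_upwards [h2] with w hw hwP
    obtain ⟨hw1, hw2⟩ := (hPmem w).1 hwP
    have h3 := hv w hw1 hw2
    have hne := D.neBot_W (φ.symm w)
    obtain ⟨x, hx1, hx2⟩ := (h3.and (eventually_nhdsWithin_iff.2 hw)).exists
    rw [← hx1, hx2]
  have hvc : ContinuousOn v P := by
    intro z hz
    have : ∀ᶠ w in 𝓝[P] z, v z = v w := by
      rw [eventually_nhdsWithin_iff]
      filter_upwards [hloc z hz] with w hw hwP using (hw hwP).symm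
    exact tendsto_const_nhds.congr' this
  have hz0 : φ p + (ε / 2 : ℝ) ∈ P := by
    simp only [hP, mem_ofPred_eq, add_sub_cancel_left, Complex.norm_real, Real.norm_eq_abs]
    rw [abs_of_pos (by positivity)]; constructor <;> linarith
  refine ⟨v (φ p + (ε / 2 : ℝ)), ?_⟩
  have hnb : ∀ᶠ x in 𝓝 p, x ∈ φ.source ∧ φ x ∈ ball (φ p) ε :=
    Filter.Eventually.and (φ.open_source.mem_nhds hφ)
      ((φ.continuousAt hφ).eventually_mem (ball_mem_nhds _ hε))
  filter_upwards [self_mem_nhdsWithin, nhdsWithin_le_nhds hnb] with x hxK hx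
  have hxp : x ≠ p := fun e => hxK (e ▸ hp)
  have hφx : φ x ≠ φ p := fun e => hxp (φ.injOn hx.1 hφ e)
  have hxP : φ x ∈ P := (hPmem _).2 ⟨hx.2, hφx⟩
  rw [← hPc.constant hvc hxP hz0]
  have := hv (φ x) hx.2 hφx
  rw [φ.left_inv hx.1, eventually_nhdsWithin_iff] at this
  exact this.self_of_nhds hxK

end

end GD

namespace GD
variable {M V E : Type*} [TopologicalSpace M] (D : GD M V E)

theorem src_ne_tgt (e : E) : D.src e ≠ D.tgt e := by
  intro h
  have h1 : D.γ e 0 = D.γ e 1 := by rw [D.γ0, D.γ1, h]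
  have := (D.arc e).inj (by simp) (by simp) h1
  norm_num at this

open Classical in
/-- Reorient the edges so that no edge ends in `v`. -/
noncomputable def reo (v : V) : GD M V E where
  f := D.f
  γ := fun e t => if D.tgt e = v then D.γ e (1 - t) else D.γ e t
  src := fun e => if D.tgt e = v then D.tgt e else D.src e
  tgt := fun e => if D.tgt e = v then D.src e else D.tgt e
  f_inj := D.f_inj
  arc := by
    intro e
    by_cases h : D.tgt e = v
    · simp only [h, if_true]
      refine ⟨zero_le_one, (D.arc e).cont.comp (by fun_prop) ?_, ?_⟩
      · intro t ht; exact ⟨by linarith [ht.2], by linarith [ht.1]⟩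
      · intro t ht s hs hh
        have := (D.arc e).inj (x₁ := 1 - t) (x₂ := 1 - s) ⟨by linarith [ht.2], by linarith [ht.1]⟩
          ⟨by linarith [hs.2], by linarith [hs.1]⟩ hh
        linarith
    · simp only [h, if_false]; exact D.arc e
  γ0 := by
    intro e
    by_cases h : D.tgt e = v
    · simp only [if_pos h]; rw [sub_zero, D.γ1]
    · simp only [if_neg h]; exact D.γ0 e
  γ1 := by
    intro e
    by_cases h : D.tgt e = v
    · simp only [if_pos h]; rw [sub_self, D.γ0]
    · simp only [if_neg h]; exact D.γ1 e
  int_ne := by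
    intro e t ht w
    by_cases h : D.tgt e = v
    · simp only [if_pos h]; exact D.int_ne e _ ⟨by linarith [ht.2], by linarith [ht.1]⟩ w
    · simp only [if_neg h]; exact D.int_ne e t ht w
  int_disj := by
    intro e e' t ht t' ht'
    have a1 : 1 - t ∈ Ioo (0:ℝ) 1 := ⟨by linarith [ht.2], by linarith [ht.1]⟩
    have a2 : 1 - t' ∈ Ioo (0:ℝ) 1 := ⟨by linarith [ht'.2], by linarith [ht'.1]⟩
    split_ifs <;> apply D.int_disj <;> assumption

open Classical in
theorem reo_γ_cases (v : V) (e : E) (t : ℝ) :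
    (D.reo v).γ e t = if D.tgt e = v then D.γ e (1 - t) else D.γ e t := by
  unfold reo; simp only

theorem reo_f (v : V) : (D.reo v).f = D.f := rfl

theorem reo_img (v : V) (e : E) : (D.reo v).γ e '' Icc 0 1 = D.γ e '' Icc 0 1 := by
  by_cases h : D.tgt e = v
  · ext x
    simp only [mem_image, reo_γ_cases, if_pos h]
    constructor
    · rintro ⟨t, ht, rfl⟩
      exact ⟨1 - t, ⟨by linarith [ht.2], by linarith [ht.1]⟩, rfl⟩
    · rintro ⟨t, ht, rfl⟩
      exact ⟨1 - t, ⟨by linarith [ht.2], by linarith [ht.1]⟩, by rw [sub_sub_cancel]⟩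
  · simp only [mem_image, reo_γ_cases, if_neg h]

theorem reo_K (v : V) : (D.reo v).K = D.K := by
  unfold K
  simp only [reo_img, reo_f]

theorem reo_tgt (v : V) (e : E) : (D.reo v).tgt e ≠ v := by
  by_cases h : D.tgt e = v
  · simp only [reo, if_pos h]; rw [← h]; exact D.src_ne_tgt e
  · simp only [reo, if_neg h]; exact h

theorem reo_src (v : V) (e : E) : (D.reo v).src e = v ↔ D.src e = v ∨ D.tgt e = v := by
  by_cases h : D.tgt e = v
  · simp [reo, h]
  · simp [reo, h]

/-- `z` records the jumps of `g` on `N`. -/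
def Jmp (g : M → ZMod 2) (N : Set M) (z : E → ZMod 2) : Prop :=
  ∀ e, ∀ t ∈ Ioo (0 : ℝ) 1, D.γ e t ∈ N → (D.LC g (D.γ e t) ↔ z e = 0)

theorem reo_LC (v : V) (g : M → ZMod 2) (p : M) : (D.reo v).LC g p ↔ D.LC g p := by
  unfold LC; rw [reo_K]

theorem reo_LK (v : V) (g : M → ZMod 2) (N : Set M) : (D.reo v).LK g N ↔ D.LK g N := by
  unfold LK; rw [reo_K]

theorem reo_Jmp (v : V) (g : M → ZMod 2) (N : Set M) (z : E → ZMod 2) :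
    (D.reo v).Jmp g N z ↔ D.Jmp g N z := by
  have key : ∀ t ∈ Ioo (0:ℝ) 1, 1 - t ∈ Ioo (0:ℝ) 1 := fun t ht =>
    ⟨by linarith [ht.2], by linarith [ht.1]⟩
  constructor
  · intro h e t ht hm
    by_cases hv : D.tgt e = v
    · have := h e (1 - t) (key t ht)
      rw [reo_γ_cases, if_pos hv, sub_sub_cancel, reo_LC] at this
      exact this hm
    · have := h e t ht
      rw [reo_γ_cases, if_neg hv, reo_LC] at this
      exact this hm
  · intro h e t ht hm
    rw [reo_LC]
    by_cases hv : D.tgt e = v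
    · rw [reo_γ_cases, if_pos hv] at hm ⊢
      exact h e _ (key t ht) hm
    · rw [reo_γ_cases, if_neg hv] at hm ⊢
      exact h e t ht hm

section
variable [T2Space M] [Surf M] [Finite V] [Finite E]

theorem star (v : V) (htgt : ∀ e, D.tgt e ≠ v) {N : Set M} (hN : IsOpen N) (hv : D.f v ∈ N) :
    ∃ (φ : OpenPartialHomeomorph M ℂ) (b : E → ℝ) (k : E → M → ℂ) (N' : Set M), IsOpen N' ∧
      D.f v ∈ N' ∧ N' ⊆ N ∧ N' ⊆ φ.source ∧
      (∀ e, D.src e = v → 0 < b e ∧ b e < 1 ∧ (∀ t ∈ Icc 0 (b e), D.γ e t ∈ N) ∧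
        (∀ t ∈ Icc 0 (b e), D.γ e t ∈ φ.source) ∧ ArcRoot φ (D.γ e) 0 (b e) (k e)) ∧
      ∀ x ∈ N', x ∈ D.K → x = D.f v ∨ ∃ e, D.src e = v ∧ ∃ t ∈ Ioo 0 (b e), x = D.γ e t := by
  classical
  obtain ⟨φ, hφ⟩ := Surf.chart (D.f v)
  have hb : ∀ e, ∃ b : ℝ, ∃ k : M → ℂ, D.src e = v → 0 < b ∧ b < 1 ∧
      (∀ t ∈ Icc 0 b, D.γ e t ∈ N) ∧
      (∀ t ∈ Icc 0 b, D.γ e t ∈ φ.source) ∧ ArcRoot φ (D.γ e) 0 b k := by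
    intro e
    by_cases hs : D.src e = v
    · have h0 : D.γ e 0 = D.f v := by rw [D.γ0, hs]
      have hc : ContinuousWithinAt (D.γ e) (Icc 0 1) 0 := (D.arc e).cont 0 (by simp)
      have hm : N ∩ φ.source ∈ 𝓝 (D.γ e 0) := by
        rw [h0]; exact (hN.inter φ.open_source).mem_nhds ⟨hv, hφ⟩
      have := hc.eventually_mem hm
      rw [eventually_nhdsWithin_iff] at this
      obtain ⟨δ, hδ, hd⟩ := Metric.eventually_nhds_iff_ball.1 this
      have hin : ∀ t ∈ Icc 0 (min (δ / 2) (1 / 2)), D.γ e t ∈ N ∩ φ.source := by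
        intro t ht
        have h1 := ht.2.trans (min_le_left _ _)
        have h2 := ht.2.trans (min_le_right _ _)
        refine hd t ?_ ⟨ht.1, by linarith⟩
        rw [mem_ball, Real.dist_eq, abs_lt]; constructor <;> linarith [ht.1]
      have hpos : 0 < min (δ / 2) (1 / 2) := by positivity
      have hlt : min (δ / 2) (1 / 2) < 1 := (min_le_right _ _).trans_lt (by norm_num)
      obtain ⟨k, hk⟩ := exists_arcRoot φ ((D.arc e).sub le_rfl hpos.le hlt.le) hpos
        (fun s hs => (hin s hs).2)
      exact ⟨_, k, fun _ => ⟨hpos, hlt, fun t ht => (hin t ht).1, fun t ht => (hin t ht).2, hk⟩⟩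
    · exact ⟨0, 0, fun h => absurd h hs⟩
  choose b k hbk using hb
  have c1 : IsClosed (D.f '' {w | w ≠ v}) := (Set.toFinite _).isClosed
  have c2 : IsClosed (⋃ e : {e // D.src e ≠ v}, D.γ e '' Icc 0 1) :=
    isClosed_iUnion_of_finite fun e => D.arc_closed _ le_rfl le_rfl
  have c3 : IsClosed (⋃ e : {e // D.src e = v}, D.γ e '' Icc (b e) 1) :=
    isClosed_iUnion_of_finite fun e => D.arc_closed _ (hbk e e.2).1.le le_rfl
  have n1 : D.f v ∉ D.f '' {w | w ≠ v} := by
    rintro ⟨w, hw, h⟩; exact hw (D.f_inj h)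
  have aux : ∀ e, ∀ t ∈ Icc (0:ℝ) 1, D.γ e t = D.f v → t = 0 ∧ D.src e = v := by
    intro e t ht h
    rcases eq_or_lt_of_le ht.1 with h0 | h0
    · subst h0
      exact ⟨rfl, D.f_inj (by rw [← h, D.γ0])⟩
    rcases eq_or_lt_of_le ht.2 with h1 | h1
    · subst h1
      exact absurd (D.f_inj (by rw [← h, D.γ1])) (htgt e)
    exact absurd h (D.int_ne e t ⟨h0, h1⟩ v)
  have n2 : D.f v ∉ ⋃ e : {e // D.src e ≠ v}, D.γ e '' Icc 0 1 := by
    intro h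
    obtain ⟨⟨e', he'⟩, s, hs, hs'⟩ := mem_iUnion.1 h
    exact he' (aux e' s hs hs').2
  have n3 : D.f v ∉ ⋃ e : {e // D.src e = v}, D.γ e '' Icc (b e) 1 := by
    intro h
    obtain ⟨⟨e', he'⟩, s, hs, hs'⟩ := mem_iUnion.1 h
    have h0 := (hbk e' he').1
    have := (aux e' s ⟨h0.le.trans hs.1, hs.2⟩ hs').1
    have := hs.1
    simp only at this
    linarith
  refine ⟨φ, b, k, (N ∩ φ.source) ∩ ((D.f '' {w | w ≠ v})ᶜ ∩
    ((⋃ e : {e // D.src e ≠ v}, D.γ e '' Icc 0 1)ᶜ ∩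
      (⋃ e : {e // D.src e = v}, D.γ e '' Icc (b e) 1)ᶜ)), ?_, ?_, ?_, ?_, ?_, ?_⟩
  · exact (hN.inter φ.open_source).inter (c1.isOpen_compl.inter
      (c2.isOpen_compl.inter c3.isOpen_compl))
  · exact ⟨⟨hv, hφ⟩, n1, n2, n3⟩
  · exact fun x hx => hx.1.1
  · exact fun x hx => hx.1.2
  · intro e he; exact hbk e he
  · rintro x ⟨_, x1, x2, x3⟩ hx
    rcases D.K_cases hx with ⟨w, rfl⟩ | ⟨e, t, ht, rfl⟩
    · by_cases hw : w = v
      · left; rw [hw]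
      · exact (x1 ⟨w, hw, rfl⟩).elim
    · right
      by_cases he : D.src e = v
      · refine ⟨e, he, t, ⟨ht.1, ?_⟩, rfl⟩
        by_contra hlt
        exact x3 (mem_iUnion.2 ⟨⟨e, he⟩, t, ⟨not_lt.1 hlt, ht.2.le⟩, rfl⟩)
      · exact (x2 (mem_iUnion.2 ⟨⟨e, he⟩, t, ⟨ht.1.le, ht.2.le⟩, rfl⟩)).elim

/-- Interior points of an edge avoid the other (sub)arcs. -/
theorem notMem_arc {e e' : E} (hne : e' ≠ e) {t b : ℝ} (ht : t ∈ Ioo (0:ℝ) 1) (hb : b ≤ 1) :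
    D.γ e t ∉ D.γ e' '' Icc 0 b := by
  rintro ⟨s, hs, h⟩
  rcases eq_or_lt_of_le hs.1 with h0 | h0
  · subst h0
    exact D.int_ne e t ht _ (h.symm.trans (D.γ0 e'))
  rcases eq_or_lt_of_le (hs.2.trans hb) with h1 | h1
  · subst h1
    exact D.int_ne e t ht _ (h.symm.trans (D.γ1 e'))
  exact hne (D.int_disj e' e s ⟨h0, h1⟩ t ht h)

end
end GD

namespace GD
variable {M V E : Type*} [TopologicalSpace M] (D : GD M V E)
section
variable [T2Space M] [Surf M] [Finite V] [Finite E]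

theorem parity_aux (v : V) (htgt : ∀ e, D.tgt e ≠ v) {N : Set M} (hN : IsOpen N) (hv : D.f v ∈ N)
    {g : M → ZMod 2} (hg : D.LK g N) {z : E → ZMod 2} (hz : D.Jmp g N z) (J : Finset E)
    (hJ : ∀ e, e ∈ J ↔ D.src e = v ∧ z e ≠ 0) : Even J.card := by
  classical
  obtain ⟨φ, b, k, N', hN'o, hvN', hN'N, hN's, hbk, hK⟩ := D.star v htgt hN hv
  set p := D.f v with hp
  have hps : p ∈ φ.source := hN's hvN'
  let F : M → ℂ := fun x => sgn (g x) * ∏ e ∈ J, k e x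
  let r : E → M → ℂ := fun e x => (φ x - φ p) / (φ x - φ (D.γ e (b e)))
  have hγ0 : ∀ e, D.src e = v → D.γ e 0 = p := fun e he => by rw [D.γ0, he]
  have hsq : ∀ e, D.src e = v → ∀ x ∈ φ.source, x ∉ D.γ e '' Icc 0 (b e) → k e x ^ 2 = r e x := by
    intro e he x hx hxA
    rw [(hbk e he).2.2.2.2.sq x hx hxA, hγ0 e he]
  have hKsub : ∀ e, D.src e = v → D.γ e '' Icc 0 (b e) ⊆ D.K := by
    rintro e he _ ⟨t, ht, rfl⟩
    exact D.γ_mem e ⟨ht.1, ht.2.trans (hbk e he).2.1.le⟩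
  -- q_e differs from the points of the star
  have hrc : ∀ e ∈ J, ∀ x ∈ N', ContinuousAt (r e) x := by
    intro e he x hx
    have he' := ((hJ e).1 he).1
    have hb := hbk e he'
    have hφc : ContinuousAt φ x := φ.continuousAt (hN's hx)
    refine (hφc.sub continuousAt_const).div (hφc.sub continuousAt_const) (sub_ne_zero.2 ?_)
    intro h0
    have hx' : x = D.γ e (b e) := φ.injOn (hN's hx) (hb.2.2.2.1 _ ⟨hb.1.le, le_rfl⟩) h0
    have hbI : b e ∈ Ioo (0:ℝ) 1 := ⟨hb.1, hb.2.1⟩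
    rcases hK x hx (hx' ▸ D.γ_mem e ⟨hb.1.le, hb.2.1.le⟩) with h1 | ⟨e1, he1, t, ht, h1⟩
    · exact D.int_ne e (b e) hbI v (hx'.symm.trans h1)
    · have htI : t ∈ Ioo (0:ℝ) 1 := ⟨ht.1, ht.2.trans (hbk e1 he1).2.1⟩
      have := D.int_disj e e1 (b e) hbI t htI (hx'.symm.trans h1)
      subst this
      have := (D.arc e).inj ⟨hbI.1.le, hbI.2.le⟩ ⟨htI.1.le, htI.2.le⟩ (hx'.symm.trans h1)
      linarith [ht.2]
  have hF2 : ∀ x ∈ N', x ∉ D.K → F x ^ 2 = ∏ e ∈ J, r e x := by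
    intro x hx hxK
    simp only [F]
    rw [mul_pow, sgn_sq, one_mul, ← Finset.prod_pow]
    refine Finset.prod_congr rfl fun e he => ?_
    have he' := ((hJ e).1 he).1
    exact hsq e he' x (hN's hx) (fun h => hxK (hKsub e he' h))
  have hlim : ∀ x ∈ N' \ {p}, ∃ y, Tendsto F (𝓝[D.Kᶜ] x) (𝓝 y) := by
    rintro x ⟨hx, hxp⟩
    by_cases hxK : x ∈ D.K
    · rcases hK x hx hxK with h1 | ⟨e, he, t, ht, h1⟩
      · exact absurd h1 hxp
      have hb := hbk e he
      have htI : t ∈ Ioo (0:ℝ) 1 := ⟨ht.1, ht.2.trans hb.2.1⟩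
      have hkc : ∀ e1 ∈ J, e1 ≠ e → ContinuousAt (k e1) x := by
        intro e1 he1 hne
        have he1' := ((hJ e1).1 he1).1
        have hb1 := hbk e1 he1'
        refine hb1.2.2.2.2.cont x (hN's hx) ?_
        rw [h1]
        exact D.notMem_arc hne htI hb1.2.1.le
      by_cases heJ : e ∈ J
      · have hnot : ¬ D.LC g (D.γ e t) := by
          rw [hz e t htI (h1 ▸ hN'N hx)]
          exact ((hJ e).1 heJ).2
        rcases D.piece_dich le_rfl hb.2.1.le hb.2.2.2.2 hN hb.2.2.1 hg with h | h
        · exact absurd (h t ht) hnot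
        obtain ⟨s, hsc, hs⟩ := h t ht
        rw [← h1] at hsc hs
        have hc : ContinuousAt (fun w => r e w * s w * ∏ e1 ∈ J.erase e, k e1 w) x := by
          refine ((hrc e heJ x hx).mul hsc).mul ?_
          refine tendsto_finsetProd _ fun e1 he1 => ?_
          exact hkc e1 (Finset.mem_of_mem_erase he1) (Finset.ne_of_mem_erase he1)
        refine ⟨_, (hc.tendsto.mono_left (nhdsWithin_le_nhds (s := D.Kᶜ))).congr' ?_⟩
        filter_upwards [hs, self_mem_nhdsWithin, nhdsWithin_le_nhds (hN'o.mem_nhds hx)]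
          with w hw hwK hwN
        simp only [F]
        rw [← Finset.mul_prod_erase J _ heJ, hw,
          ← hsq e he w (hN's hwN) (fun h => hwK (hKsub e he h))]
        ring
      · have hLC : D.LC g (D.γ e t) := by
          rw [hz e t htI (h1 ▸ hN'N hx)]
          by_contra h
          exact heJ ((hJ e).2 ⟨he, h⟩)
        obtain ⟨c, hc⟩ := hLC
        rw [← h1] at hc
        have hc' : ContinuousAt (fun w => sgn c * ∏ e1 ∈ J, k e1 w) x := by
          refine continuousAt_const.mul (tendsto_finsetProd _ fun e1 he1 => ?_)
          exact hkc e1 he1 (fun h => heJ (h ▸ he1))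
        refine ⟨_, (hc'.tendsto.mono_left (nhdsWithin_le_nhds (s := D.Kᶜ))).congr' ?_⟩
        filter_upwards [hc] with w hw
        simp only [F, hw]
    · have hc' : ContinuousAt (fun w => sgn (g x) * ∏ e1 ∈ J, k e1 w) x := by
        refine continuousAt_const.mul (tendsto_finsetProd _ fun e1 he1 => ?_)
        have he1' := ((hJ e1).1 he1).1
        exact (hbk e1 he1').2.2.2.2.cont x (hN's hx) (fun h => hxK (hKsub e1 he1' h))
      refine ⟨_, (hc'.tendsto.mono_left (nhdsWithin_le_nhds (s := D.Kᶜ))).congr' ?_⟩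
      filter_upwards [nhdsWithin_le_nhds (hg x (hN'N hx) hxK)] with w hw
      simp only [F, hw]
  have hEc := continuousOn_extendFrom (f := F) (A := D.Kᶜ) (B := N' \ {p})
    (fun x _ => D.dense_W x) hlim
  have hopen : IsOpen (N' \ {p}) := hN'o.sdiff isClosed_singleton
  have hE2 : ∀ x ∈ N' \ {p}, extendFrom D.Kᶜ F x ^ 2 = ∏ e ∈ J, r e x := by
    intro x hx
    have hne := D.neBot_W x
    have h1 := (tendsto_extendFrom (hlim x hx)).pow 2
    have h2 : Tendsto (fun w => ∏ e ∈ J, r e w) (𝓝[D.Kᶜ] x) (𝓝 (∏ e ∈ J, r e x)) :=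
      tendsto_finsetProd _ fun e he => (hrc e he x hx.1).tendsto.mono_left nhdsWithin_le_nhds
    refine tendsto_nhds_unique h1 (h2.congr' ?_)
    filter_upwards [self_mem_nhdsWithin, nhdsWithin_le_nhds (hN'o.mem_nhds hx.1)] with w hw hwN
    exact (hF2 w hwN hw).symm
  rw [← Nat.not_odd_iff_even]
  intro hodd
  have hq : ∀ e ∈ J, φ p ≠ φ (D.γ e (b e)) := by
    intro e he h0
    have he' := ((hJ e).1 he).1
    have hb := hbk e he'
    have := φ.injOn hps (hb.2.2.2.1 _ ⟨hb.1.le, le_rfl⟩) h0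
    exact D.int_ne e (b e) ⟨hb.1, hb.2.1⟩ v this.symm
  refine no_sqrt_odd (p := φ p) (f := fun w => extendFrom D.Kᶜ F (φ.symm w))
    (u := fun w => ∏ e ∈ J, (w - φ (D.γ e (b e)))⁻¹) hodd ?_ ?_ ?_
  · rw [eventually_nhdsWithin_iff]
    have h1 : ∀ᶠ w in 𝓝 (φ p), φ.symm w ∈ N' := by
      have := (φ.tendsto_symm hps)
      exact this.eventually_mem (hN'o.mem_nhds hvN')
    filter_upwards [h1, φ.open_target.mem_nhds (φ.map_source hps)] with w hw hwt hwp
    have hm : φ.symm w ∈ N' \ {p} := by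
      refine ⟨hw, fun h => hwp ?_⟩
      have h' : φ.symm w = p := h
      rw [mem_singleton_iff, ← h', φ.right_inv hwt]
    constructor
    · exact ContinuousAt.comp (f := φ.symm) (hEc.continuousAt (hopen.mem_nhds hm))
        (φ.continuousAt_symm hwt)
    · rw [hE2 _ hm]
      simp only [r, φ.right_inv hwt, div_eq_mul_inv]
      rw [Finset.prod_mul_distrib, Finset.prod_const]
  · exact Finset.prod_ne_zero_iff.2 fun e he => inv_ne_zero (sub_ne_zero.2 (hq e he))
  · have : ∀ᶠ w in 𝓝 (φ p), ∀ e ∈ J, w ≠ φ (D.γ e (b e)) := by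
      rw [Filter.eventually_all_finset]
      intro e he
      exact isOpen_ne.mem_nhds (hq e he)
    filter_upwards [this] with w hw
    refine tendsto_finsetProd _ fun e he => ?_
    exact ContinuousAt.inv₀ (by fun_prop) (sub_ne_zero.2 (hw e he))

open Classical in
theorem parity [Fintype E] (v : V) {N : Set M} (hN : IsOpen N) (hv : D.f v ∈ N)
    {g : M → ZMod 2} (hg : D.LK g N) {z : E → ZMod 2} (hz : D.Jmp g N z) :
    Even (Finset.univ.filter fun e => (D.src e = v ∨ D.tgt e = v) ∧ z e ≠ 0).card := by
  refine (D.reo v).parity_aux v (D.reo_tgt v) hN hv ((D.reo_LK v g N).2 hg) 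
    ((D.reo_Jmp v g N z).2 hz) _ ?_
  intro e
  rw [reo_src]
  simp

end
end GD

/-- If `F² = S²` near `x` then `F/S` is a sign. -/
theorem sgn_ite {a s : ℂ} (hs : s ≠ 0) (h : a ^ 2 = s ^ 2) [Decidable (a = s)] :
    sgn (if a = s then 0 else 1) = a / s := by
  split_ifs with h1
  · rw [h1, div_self hs, sgn_zero]
  · have : a = -s := (sq_eq_sq_iff_eq_or_eq_neg.1 h).resolve_left h1
    rw [this, sgn_one, neg_div, div_self hs]

namespace GD
variable {M V E : Type*} [TopologicalSpace M] (D : GD M V E)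
section
variable [T2Space M] [Surf M] [Finite V] [Finite E]

theorem exists_vertex (v : V) (htgt : ∀ e, D.tgt e ≠ v) (z : E → ZMod 2) (J : Finset E)
    (hJ : ∀ e, e ∈ J ↔ D.src e = v ∧ z e ≠ 0) (hev : Even J.card) :
    ∃ (N : Set M) (g : M → ZMod 2), IsOpen N ∧ D.f v ∈ N ∧ D.LK g N ∧ D.Jmp g N z := by
  classical
  obtain ⟨φ, b, k, N', hN'o, hvN', hN'N, hN's, hbk, hK⟩ := D.star v htgt isOpen_univ (mem_univ _)
  set p := D.f v with hp
  have hps : p ∈ φ.source := hN's hvN'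
  have hγ0 : ∀ e, D.src e = v → D.γ e 0 = p := fun e he => by rw [D.γ0, he]
  have hKsub : ∀ e, D.src e = v → D.γ e '' Icc 0 (b e) ⊆ D.K := by
    rintro e he _ ⟨t, ht, rfl⟩
    exact D.γ_mem e ⟨ht.1, ht.2.trans (hbk e he).2.1.le⟩
  have hq : ∀ e ∈ J, φ p ≠ φ (D.γ e (b e)) := by
    intro e he h0
    have he' := ((hJ e).1 he).1
    have hb := hbk e he'
    have := φ.injOn hps (hb.2.2.2.1 _ ⟨hb.1.le, le_rfl⟩) h0
    exact D.int_ne e (b e) ⟨hb.1, hb.2.1⟩ v this.symm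
  let u : M → ℂ := fun x => ∏ e ∈ J, (φ x - φ (D.γ e (b e)))⁻¹
  obtain ⟨y, hy⟩ := exists_sq_root_complex (u p)
  have hu0 : u p ≠ 0 :=
    Finset.prod_ne_zero_iff.2 fun e he => inv_ne_zero (sub_ne_zero.2 (hq e he))
  have hy0 : y ≠ 0 := by rintro rfl; exact hu0 (by rw [hy]; simp)
  have huc : ∀ᶠ x in 𝓝 p, ContinuousAt u x := by
    have : ∀ᶠ x in 𝓝 p, ∀ e ∈ J, φ x ≠ φ (D.γ e (b e)) := by
      rw [Filter.eventually_all_finset]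
      intro e he
      exact (φ.continuousAt hps).eventually_ne (hq e he)
    filter_upwards [this, hN'o.mem_nhds hvN'] with w hw hwN
    refine tendsto_finsetProd _ fun e he => ?_
    exact ContinuousAt.inv₀ ((φ.continuousAt (hN's hwN)).sub continuousAt_const)
      (sub_ne_zero.2 (hw e he))
  obtain ⟨s, -, hs⟩ := local_sqrt hy0 hy huc
  obtain ⟨n, hn⟩ := hev
  let S : M → ℂ := fun x => (φ x - φ p) ^ n * s x
  let F : M → ℂ := fun x => ∏ e ∈ J, k e x
  have hsI := mem_interior_iff_mem_nhds.2 hs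
  set N : Set M := N' ∩ interior {x | ContinuousAt s x ∧ s x ^ 2 = u x ∧ s x ≠ 0} with hNd
  have hNo : IsOpen N := hN'o.inter isOpen_interior
  have hNp : ∀ x ∈ N, x ∈ N' ∧ ContinuousAt s x ∧ s x ^ 2 = u x ∧ s x ≠ 0 :=
    fun x hx => ⟨hx.1, by have h := interior_subset hx.2; exact h⟩
  have hSc : ∀ x ∈ N, ContinuousAt S x := fun x hx =>
    ((((φ.continuousAt (hN's hx.1)).sub continuousAt_const)).pow n).mul (hNp x hx).2.1
  have hS0 : ∀ x ∈ N, x ≠ p → S x ≠ 0 := by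
    intro x hx hxp
    refine mul_ne_zero (pow_ne_zero _ (sub_ne_zero.2 fun h => hxp ?_)) (hNp x hx).2.2.2
    exact φ.injOn (hN's hx.1) hps h
  have hk2 : ∀ x ∈ N, x ∉ D.K → F x ^ 2 = S x ^ 2 := by
    intro x hx hxK
    simp only [F, S]
    rw [mul_pow, (hNp x hx).2.2.1, ← pow_mul, mul_two, ← hn, ← Finset.prod_const,
      ← Finset.prod_mul_distrib, ← Finset.prod_pow]
    refine Finset.prod_congr rfl fun e he => ?_
    have he' := ((hJ e).1 he).1
    rw [(hbk e he').2.2.2.2.sq x (hN's hx.1) (fun h => hxK (hKsub e he' h)), hγ0 e he',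
      div_eq_mul_inv]
  let g : M → ZMod 2 := fun x => if F x = S x then 0 else 1
  have hpK : ∀ x, x ∉ D.K → x ≠ p := fun x hx h => hx (h ▸ D.f_mem v)
  have hgs : ∀ x ∈ N, x ∉ D.K → sgn (g x) = F x / S x := fun x hx hxK =>
    sgn_ite (hS0 x hx (hpK x hxK)) (hk2 x hx hxK)
  have hKo : IsOpen D.Kᶜ := D.K_closed.isOpen_compl
  refine ⟨N, g, hNo, ⟨hvN', hsI⟩, ?_, ?_⟩
  · intro x hx hxK
    have hFc : ContinuousAt F x := by
      refine tendsto_finsetProd _ fun e he => ?_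
      have he' := ((hJ e).1 he).1
      exact (hbk e he').2.2.2.2.cont x (hN's hx.1) (fun h => hxK (hKsub e he' h))
    have ht : Tendsto (fun w => sgn (g w)) (𝓝 x) (𝓝 (F x / S x)) := by
      refine (hFc.div (hSc x hx) (hS0 x hx (hpK x hxK))).tendsto.congr' ?_
      filter_upwards [hNo.mem_nhds hx, hKo.mem_nhds hxK] with w hw hwK
      exact (hgs w hw hwK).symm
    obtain ⟨c, hc⟩ := eventually_const_of_tendsto_sgn ht
    rw [hc.self_of_nhds]
    exact hc
  · intro e t ht hmem
    have htC : t ∈ Icc (0:ℝ) 1 := ⟨ht.1.le, ht.2.le⟩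
    have : D.src e = v ∧ t < b e := by
      rcases hK _ hmem.1 (D.γ_mem e htC) with h1 | ⟨e1, he1, t1, ht1, h1⟩
      · exact absurd h1 (D.int_ne e t ht v)
      · have ht1I : t1 ∈ Ioo (0:ℝ) 1 := ⟨ht1.1, ht1.2.trans (hbk e1 he1).2.1⟩
        have := D.int_disj e e1 t ht t1 ht1I h1
        subst this
        have := (D.arc e).inj htC ⟨ht1I.1.le, ht1I.2.le⟩ h1
        exact ⟨he1, this ▸ ht1.2⟩
    obtain ⟨he, htb⟩ := this
    have hxp : D.γ e t ≠ p := D.int_ne e t ht v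
    have hb := hbk e he
    have hkc : ∀ e1 ∈ J, e1 ≠ e → ContinuousAt (k e1) (D.γ e t) := by
      intro e1 he1 hne
      have he1' := ((hJ e1).1 he1).1
      have hb1 := hbk e1 he1'
      exact hb1.2.2.2.2.cont _ (hN's hmem.1) (D.notMem_arc hne ht hb1.2.1.le)
    have hSx := hS0 _ hmem hxp
    by_cases heJ : e ∈ J
    · have hz := ((hJ e).1 heJ).2
      refine iff_of_false ?_ hz
      have hc : ContinuousAt (fun w => (∏ e1 ∈ J.erase e, k e1 w) / S w) (D.γ e t) := by
        refine ContinuousAt.div (tendsto_finsetProd _ fun e1 he1 => ?_) (hSc _ hmem) hSx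
        exact hkc e1 (Finset.mem_of_mem_erase he1) (Finset.ne_of_mem_erase he1)
      refine D.not_LC_of_root le_rfl hb.2.1.le ⟨ht.1, htb⟩ hb.2.2.2.1 hb.2.2.2.2 hc ?_
      filter_upwards [self_mem_nhdsWithin, nhdsWithin_le_nhds (hNo.mem_nhds hmem)] with w hw hwN
      rw [hgs w hwN hw]
      simp only [F]
      rw [← Finset.mul_prod_erase J _ heJ, mul_div_assoc]
    · have hz : z e = 0 := by
        by_contra h
        exact heJ ((hJ e).2 ⟨he, h⟩)
      refine iff_of_true ?_ hz
      have hc : ContinuousAt (fun w => F w / S w) (D.γ e t) := by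
        refine ContinuousAt.div (tendsto_finsetProd _ fun e1 he1 => ?_) (hSc _ hmem) hSx
        exact hkc e1 he1 (fun h => heJ (h ▸ he1))
      refine eventually_const_of_tendsto_sgn
        ((hc.tendsto.mono_left (nhdsWithin_le_nhds (s := D.Kᶜ))).congr' ?_)
      filter_upwards [self_mem_nhdsWithin, nhdsWithin_le_nhds (hNo.mem_nhds hmem)] with w hw hwN
      exact (hgs w hwN hw).symm

theorem exists_edge (e : E) {t : ℝ} (ht : t ∈ Ioo (0 : ℝ) 1) (z : E → ZMod 2) (hz : z e ≠ 0) :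
    ∃ (N : Set M) (g : M → ZMod 2), IsOpen N ∧ D.γ e t ∈ N ∧ D.LK g N ∧ D.Jmp g N z := by
  classical
  obtain ⟨a, b, ha, hb, htab, -, φ, k, hsrc, hk⟩ := D.exists_piece e ht isOpen_univ (mem_univ _)
  have htI : t ∈ Icc a b := ⟨htab.1.le, htab.2.le⟩
  have hmono := (D.arc e).sub ha (htab.1.le.trans htab.2.le) hb
  have hta : φ (D.γ e t) - φ (D.γ e a) ≠ 0 := sub_ne_zero.2 fun h0 => htab.1.ne'
    (hmono.inj htI ⟨le_rfl, hmono.le⟩ (φ.injOn (hsrc t htI) (hsrc a ⟨le_rfl, hmono.le⟩) h0))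
  have htb : φ (D.γ e t) - φ (D.γ e b) ≠ 0 := sub_ne_zero.2 fun h0 => htab.2.ne
    (hmono.inj htI ⟨hmono.le, le_rfl⟩ (φ.injOn (hsrc t htI) (hsrc b ⟨hmono.le, le_rfl⟩) h0))
  have hts := hsrc t htI
  let u : M → ℂ := fun x => (φ x - φ (D.γ e a)) / (φ x - φ (D.γ e b))
  obtain ⟨y, hy⟩ := exists_sq_root_complex (u (D.γ e t))
  have hu0 : u (D.γ e t) ≠ 0 := div_ne_zero hta htb
  have hy0 : y ≠ 0 := by rintro rfl; exact hu0 (by rw [hy]; simp)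
  have huc : ∀ᶠ x in 𝓝 (D.γ e t), ContinuousAt u x := by
    filter_upwards [φ.open_source.mem_nhds hts,
      (φ.continuousAt hts).eventually_ne (sub_ne_zero.1 htb)] with w hw hw2
    exact ((φ.continuousAt hw).sub continuousAt_const).div
      ((φ.continuousAt hw).sub continuousAt_const) (sub_ne_zero.2 hw2)
  obtain ⟨s, -, hs⟩ := local_sqrt hy0 hy huc
  have hall : ∀ᶠ x in 𝓝 (D.γ e t), (ContinuousAt s x ∧ s x ^ 2 = u x ∧ s x ≠ 0) ∧
      (x ∈ D.K ↔ x ∈ D.γ e '' Icc a b) ∧ x ∈ φ.source :=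
    hs.and ((D.K_local e ha hb htab).and (φ.open_source.mem_nhds hts))
  set N := interior {x | (ContinuousAt s x ∧ s x ^ 2 = u x ∧ s x ≠ 0) ∧
      (x ∈ D.K ↔ x ∈ D.γ e '' Icc a b) ∧ x ∈ φ.source} with hNd
  have hNo : IsOpen N := isOpen_interior
  have hNp : ∀ x ∈ N, (ContinuousAt s x ∧ s x ^ 2 = u x ∧ s x ≠ 0) ∧
      (x ∈ D.K ↔ x ∈ D.γ e '' Icc a b) ∧ x ∈ φ.source := fun x hx => by
    have h := interior_subset hx; exact h
  let g : M → ZMod 2 := fun x => if k x = s x then 0 else 1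
  have hnA : ∀ x ∈ N, x ∉ D.K → x ∉ D.γ e '' Icc a b := fun x hx hxK h => hxK ((hNp x hx).2.1.2 h)
  have hgs : ∀ x ∈ N, x ∉ D.K → sgn (g x) = k x / s x := fun x hx hxK =>
    sgn_ite (hNp x hx).1.2.2 (by
      rw [(hNp x hx).1.2.1, hk.sq x (hNp x hx).2.2 (hnA x hx hxK)])
  have hKo : IsOpen D.Kᶜ := D.K_closed.isOpen_compl
  refine ⟨N, g, hNo, mem_interior_iff_mem_nhds.2 hall, ?_, ?_⟩
  · intro x hx hxK
    have ht : Tendsto (fun w => sgn (g w)) (𝓝 x) (𝓝 (k x / s x)) := by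
      refine ((hk.cont x (hNp x hx).2.2 (hnA x hx hxK)).div (hNp x hx).1.1
        (hNp x hx).1.2.2).tendsto.congr' ?_
      filter_upwards [hNo.mem_nhds hx, hKo.mem_nhds hxK] with w hw hwK
      exact (hgs w hw hwK).symm
    obtain ⟨c, hc⟩ := eventually_const_of_tendsto_sgn ht
    rw [hc.self_of_nhds]
    exact hc
  · intro e1 t1 ht1 hmem
    have hp1 := hNp _ hmem
    obtain ⟨t2, ht2, h2⟩ := hp1.2.1.1 (D.γ_mem e1 ⟨ht1.1.le, ht1.2.le⟩)
    have hune : u (D.γ e1 t1) ≠ 0 := by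
      rw [← hp1.1.2.1]; exact pow_ne_zero _ hp1.1.2.2
    have ht2' : t2 ∈ Ioo a b := by
      refine ⟨lt_of_le_of_ne ht2.1 ?_, lt_of_le_of_ne ht2.2 ?_⟩
      · rintro rfl; exact hune (by simp [u, h2])
      · rintro rfl; exact hune (by simp [u, h2])
    have he : e = e1 := D.int_disj e e1 t2 ⟨ha.trans_lt ht2'.1, ht2'.2.trans_le hb⟩ t1 ht1 h2
    subst he
    rw [← h2] at hmem hp1 ⊢
    refine iff_of_false ?_ hz
    refine D.not_LC_of_root ha hb ht2' hsrc hk (s := fun w => (s w)⁻¹) (hp1.1.1.inv₀ hp1.1.2.2) ?_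
    filter_upwards [self_mem_nhdsWithin, nhdsWithin_le_nhds (hNo.mem_nhds hmem)] with w hw hwN
    rw [hgs w hwN hw, div_eq_mul_inv]

open Classical in
theorem exists_local [Fintype E] (z : E → ZMod 2)
    (hz : ∀ v, Even (Finset.univ.filter fun e => (D.src e = v ∨ D.tgt e = v) ∧ z e ≠ 0).card)
    (p : M) : ∃ (N : Set M) (g : M → ZMod 2), IsOpen N ∧ p ∈ N ∧ D.LK g N ∧ D.Jmp g N z := by
  by_cases hp : p ∈ D.K
  · rcases D.K_cases hp with ⟨v, rfl⟩ | ⟨e, t, ht, rfl⟩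
    · obtain ⟨N, g, h1, h2, h3, h4⟩ := (D.reo v).exists_vertex v (D.reo_tgt v) z
        (Finset.univ.filter fun e => (D.src e = v ∨ D.tgt e = v) ∧ z e ≠ 0)
        (by intro e; rw [reo_src]; simp) (hz v)
      exact ⟨N, g, h1, h2, (D.reo_LK v g N).1 h3, (D.reo_Jmp v g N z).1 h4⟩
    · by_cases he : z e = 0
      · have htI : t ∈ Icc (0:ℝ) 1 := ⟨ht.1.le, ht.2.le⟩
        have hev := D.K_local e le_rfl le_rfl ht
        have hf : ∀ᶠ x in 𝓝 (D.γ e t), x ∈ (range D.f)ᶜ :=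
          (Set.finite_range D.f).isClosed.isOpen_compl.mem_nhds (by
            rintro ⟨v, hv⟩; exact D.int_ne e t ht v hv.symm)
        refine ⟨interior {x | x ∈ D.K ↔ x ∈ D.γ e '' Icc 0 1}, fun _ => 0, isOpen_interior,
          mem_interior_iff_mem_nhds.2 hev, fun x _ _ => by simp, ?_⟩
        intro e1 t1 ht1 hm
        obtain ⟨t2, ht2, h2⟩ := (interior_subset hm).1 (D.γ_mem e1 ⟨ht1.1.le, ht1.2.le⟩)
        have : e = e1 := by
          by_contra hne
          exact D.notMem_arc hne ht1 le_rfl ⟨t2, ht2, h2⟩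
        subst this
        exact iff_of_true ⟨0, by simp⟩ he
      · exact D.exists_edge e ht z he
  · refine ⟨D.Kᶜ, fun _ => 0, D.K_closed.isOpen_compl, hp, fun x _ _ => by simp, ?_⟩
    intro e t ht hm
    exact absurd (D.γ_mem e ⟨ht.1.le, ht.2.le⟩) hm

end
end GD

theorem zadd_self (a : ZMod 2) : a + a = 0 := CharTwo.add_self_eq_zero a

theorem zeq_of_add {a b : ZMod 2} (h : a + b = 0) : a = b := by
  rw [← sub_eq_zero, CharTwo.sub_eq_add]; exact h

/-- `g` is a primitive of the cochain `c` near `p`. -/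
def Prim {M : Type*} [TopologicalSpace M] (c : M → M → ZMod 2) (g : M → ZMod 2) (p : M) : Prop :=
  ∃ N : Set M, IsOpen N ∧ p ∈ N ∧ ∀ x ∈ N, ∀ y ∈ N, c x y = g x + g y

theorem Prim.add {M : Type*} [TopologicalSpace M] {c c' : M → M → ZMod 2} {g g' : M → ZMod 2}
    {p : M} (h : Prim c g p) (h' : Prim c' g' p) : Prim (c + c') (g + g') p := by
  obtain ⟨N, h1, h2, h3⟩ := h
  obtain ⟨N', h1', h2', h3'⟩ := h'
  refine ⟨N ∩ N', h1.inter h1', ⟨h2, h2'⟩, fun x hx y hy => ?_⟩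
  simp only [Pi.add_apply, h3 x hx.1 y hy.1, h3' x hx.2 y hy.2]
  ring

theorem Prim.zero {M : Type*} [TopologicalSpace M] (p : M) : Prim (0 : M → M → ZMod 2) 0 p :=
  ⟨univ, isOpen_univ, mem_univ _, fun x _ y _ => by simp⟩

/-- An additively closed set of a `ZMod 2`-module as a submodule. -/
def mkSub {A : Type*} [AddCommGroup A] [Module (ZMod 2) A] (S : Set A) (h0 : (0 : A) ∈ S)
    (ha : ∀ a ∈ S, ∀ b ∈ S, a + b ∈ S) : Submodule (ZMod 2) A where
  carrier := S
  zero_mem' := h0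
  add_mem' := fun {a b} x y => ha a x b y
  smul_mem' := by
    intro r x hx
    rcases zmod2_cases r with rfl | rfl
    · rw [zero_smul]; exact h0
    · rw [one_smul]; exact hx

/-- local coboundaries -/
def Coc (M : Type*) [TopologicalSpace M] : Submodule (ZMod 2) (M → M → ZMod 2) :=
  mkSub {c | ∀ p, ∃ g, Prim c g p} (fun p => ⟨0, Prim.zero p⟩)
    (fun a ha b hb p => by
      obtain ⟨g, hg⟩ := ha p
      obtain ⟨g', hg'⟩ := hb p
      exact ⟨_, hg.add hg'⟩)

/-- germs of coboundaries -/
def Cob (M : Type*) [TopologicalSpace M] : Submodule (ZMod 2) (M → M → ZMod 2) :=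
  mkSub {c | ∃ g, ∀ p, Prim c g p} ⟨0, Prim.zero⟩
    (fun a ⟨g, hg⟩ b ⟨g', hg'⟩ => ⟨_, fun p => (hg p).add (hg' p)⟩)

theorem mem_Coc {M : Type*} [TopologicalSpace M] {c : M → M → ZMod 2} :
    c ∈ Coc M ↔ ∀ p, ∃ g, Prim c g p := Iff.rfl

theorem mem_Cob {M : Type*} [TopologicalSpace M] {c : M → M → ZMod 2} :
    c ∈ Cob M ↔ ∃ g, ∀ p, Prim c g p := Iff.rfl

namespace GD
variable {M V E : Type*} [TopologicalSpace M] (D : GD M V E)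

/-- cocycles supported on the drawing -/
def ZK : Submodule (ZMod 2) (M → M → ZMod 2) :=
  mkSub {c | (∀ p, ∃ g, Prim c g p) ∧ ∀ p ∉ D.K, Prim c 0 p}
    ⟨fun p => ⟨0, Prim.zero p⟩, fun p _ => Prim.zero p⟩
    (fun a ha b hb => ⟨fun p => by
      obtain ⟨g, hg⟩ := ha.1 p
      obtain ⟨g', hg'⟩ := hb.1 p
      exact ⟨_, hg.add hg'⟩, fun p hp => by
        have := (ha.2 p hp).add (hb.2 p hp)
        rwa [add_zero] at this⟩)

theorem mem_ZK {c : M → M → ZMod 2} :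
    c ∈ D.ZK ↔ (∀ p, ∃ g, Prim c g p) ∧ ∀ p ∉ D.K, Prim c 0 p := Iff.rfl

/-- `c` vanishes off the drawing near the point `p` of the diagonal. -/
def ZeroAt (c : M → M → ZMod 2) (p : M) : Prop :=
  ∃ N : Set M, IsOpen N ∧ p ∈ N ∧ ∀ x ∈ N, x ∉ D.K → ∀ y ∈ N, y ∉ D.K → c x y = 0

theorem LC_iff (g : M → ZMod 2) (p : M) : D.LC g p ↔
    ∃ c, ∃ N : Set M, IsOpen N ∧ p ∈ N ∧ ∀ x ∈ N, x ∉ D.K → g x = c := by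
  unfold LC
  simp only [eventually_nhdsWithin_iff, _root_.eventually_nhds_iff]
  constructor
  · rintro ⟨c, N, h1, h2, h3⟩
    exact ⟨c, N, h2, h3, h1⟩
  · rintro ⟨c, N, h1, h2, h3⟩
    exact ⟨c, N, h3, h1, h2⟩

section
variable [T2Space M] [Surf M] [Finite V] [Finite E]

theorem exists_W {N : Set M} (hN : IsOpen N) (h : N.Nonempty) : ∃ x ∈ N, x ∉ D.K := by
  obtain ⟨x, hx1, hx2⟩ := D.dense_W.inter_open_nonempty N hN h
  exact ⟨x, hx1, hx2⟩

theorem zeroAt_iff {c : M → M → ZMod 2} {g : M → ZMod 2} {p : M} (h : Prim c g p) :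
    D.ZeroAt c p ↔ D.LC g p := by
  rw [LC_iff]
  obtain ⟨N, hN, hp, hc⟩ := h
  constructor
  · rintro ⟨N', hN', hp', h'⟩
    obtain ⟨x, hx, hxK⟩ := D.exists_W (hN.inter hN') ⟨p, hp, hp'⟩
    refine ⟨g x, N ∩ N', hN.inter hN', ⟨hp, hp'⟩, fun y hy hyK => zeq_of_add ?_⟩
    rw [← hc y hy.1 x hx.1, h' y hy.2 hyK x hx.2 hxK]
  · rintro ⟨κ, N', hN', hp', h'⟩
    refine ⟨N ∩ N', hN.inter hN', ⟨hp, hp'⟩, fun x hx hxK y hy hyK => ?_⟩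
    rw [hc x hx.1 y hy.1, h' x hx.2 hxK, h' y hy.2 hyK, zadd_self]

theorem ZK_local {c : M → M → ZMod 2} (hc : c ∈ D.ZK) (p : M) :
    ∃ (N : Set M) (g : M → ZMod 2), IsOpen N ∧ p ∈ N ∧ D.LK g N ∧
      (∀ x ∈ N, ∀ y ∈ N, c x y = g x + g y) ∧ ∀ x ∈ N, Prim c g x := by
  obtain ⟨g, N, hN, hp, h⟩ := hc.1 p
  refine ⟨N, g, hN, hp, ?_, h, fun x hx => ⟨N, hN, hx, h⟩⟩
  intro x hx hxK
  obtain ⟨N', hN', hx', h'⟩ := hc.2 x hxK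
  filter_upwards [hN.mem_nhds hx, hN'.mem_nhds hx'] with w hw hw'
  have := h' w hw' x hx'
  rw [h w hw x hx] at this
  exact zeq_of_add (this.trans (by simp))

open Classical in
/-- jumps of a cocycle along the edges -/
noncomputable def J (c : M → M → ZMod 2) (e : E) : ZMod 2 :=
  if D.ZeroAt c (D.γ e (1 / 2)) then 0 else 1

theorem J_eq_zero (c : M → M → ZMod 2) (e : E) : D.J c e = 0 ↔ D.ZeroAt c (D.γ e (1 / 2)) := by
  unfold J; split_ifs with h
  · exact iff_of_true rfl h
  · exact iff_of_false one_ne_zero h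

theorem J_iff {c : M → M → ZMod 2} (hc : c ∈ D.ZK) (e : E) {t : ℝ} (ht : t ∈ Ioo (0 : ℝ) 1) :
    D.ZeroAt c (D.γ e t) ↔ D.J c e = 0 := by
  classical
  rw [J_eq_zero]
  let h : ℝ → ZMod 2 := fun t => if D.ZeroAt c (D.γ e t) then 0 else 1
  have hh : ∀ t, h t = 0 ↔ D.ZeroAt c (D.γ e t) := by
    intro t; simp only [h]; split_ifs with h <;> simp [h]
  have hcont : ContinuousOn h (Ioo 0 1) := by
    intro t ht
    obtain ⟨N, g, hN, hp, hg, -, hP⟩ := D.ZK_local hc (D.γ e t)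
    have hca : ContinuousAt (D.γ e) t := (D.arc e).cont.continuousAt (Icc_mem_nhds ht.1 ht.2)
    refine ContinuousAt.continuousWithinAt (tendsto_const_nhds.congr' ?_)
    filter_upwards [D.LC_locally_const hN hg e ht hp, hca.eventually_mem (hN.mem_nhds hp)]
      with s hs hsN
    rw [← D.zeroAt_iff (hP _ hsN), ← D.zeroAt_iff (hP _ hp)] at hs
    simp only [h, hs]
  rw [← hh, ← hh, isPreconnected_Ioo.constant hcont ht (y := 1 / 2) (by norm_num)]

theorem J_add {c c' : M → M → ZMod 2} (hc : c ∈ D.ZK) (hc' : c' ∈ D.ZK) :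
    D.J (c + c') = D.J c + D.J c' := by
  funext e
  have ht : (1 / 2 : ℝ) ∈ Ioo (0 : ℝ) 1 := by norm_num
  obtain ⟨N, g, hN, hp, hg, -, hP⟩ := D.ZK_local hc (D.γ e (1 / 2))
  obtain ⟨N', g', hN', hp', hg', -, hP'⟩ := D.ZK_local hc' (D.γ e (1 / 2))
  have h1 := D.zeroAt_iff (hP _ hp)
  have h2 := D.zeroAt_iff (hP' _ hp')
  have h3 := D.zeroAt_iff ((hP _ hp).add (hP' _ hp'))
  rw [← J_eq_zero] at h1 h2 h3
  have h12 := D.LC_add_of_not (hN.inter hN') (hg.mono inter_subset_left)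
    (hg'.mono inter_subset_right) e ht ⟨hp, hp'⟩
  have c1 : g + g' + g' = g := by
    funext x; simp only [Pi.add_apply]; rw [add_assoc, zadd_self, add_zero]
  have c2 : g + (g + g') = g' := by
    funext x; simp only [Pi.add_apply]; rw [← add_assoc, zadd_self, zero_add]
  by_cases a : D.LC g (D.γ e (1 / 2)) <;> by_cases b : D.LC g' (D.γ e (1 / 2))
  · rw [Pi.add_apply, h1.2 a, h2.2 b, h3.2 (a.add b)]; simp
  · have : ¬ D.LC (g + g') (D.γ e (1 / 2)) := fun h => b (by simpa only [c2] using a.add h)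
    have e1 := (zmod2_cases _).resolve_left (fun h => b (h2.1 h))
    have e2 := (zmod2_cases _).resolve_left (fun h => this (h3.1 h))
    rw [Pi.add_apply, h1.2 a, e1, e2]; simp
  · have : ¬ D.LC (g + g') (D.γ e (1 / 2)) := fun h => a (by simpa only [c1] using h.add b)
    have e1 := (zmod2_cases _).resolve_left (fun h => a (h1.1 h))
    have e2 := (zmod2_cases _).resolve_left (fun h => this (h3.1 h))
    rw [Pi.add_apply, h2.2 b, e1, e2]; simp
  · have e1 := (zmod2_cases _).resolve_left (fun h => a (h1.1 h))
    have e2 := (zmod2_cases _).resolve_left (fun h => b (h2.1 h))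
    rw [Pi.add_apply, e1, e2, h3.2 (h12 a b), zadd_self]

/-- the jump map as a linear map -/
noncomputable def JL : D.ZK →ₗ[ZMod 2] (E → ZMod 2) :=
  AddMonoidHom.toZModLinearMap 2 (AddMonoidHom.mk' (fun c : D.ZK => D.J c.1)
    (fun a b => D.J_add a.2 b.2))

theorem JL_apply (c : D.ZK) : D.JL c = D.J c.1 := rfl

theorem J_Jmp {c : M → M → ZMod 2} (hc : c ∈ D.ZK) {N : Set M} {g : M → ZMod 2}
    (hP : ∀ x ∈ N, Prim c g x) : D.Jmp g N (D.J c) := fun e t ht hm => by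
  rw [← D.J_iff hc e ht, D.zeroAt_iff (hP _ hm)]

/-- a function without jumps is locally constant off `K` everywhere -/
theorem LC_of_edges {N : Set M} (hN : IsOpen N) {g : M → ZMod 2} (hg : D.LK g N)
    (h : ∀ e, ∀ t ∈ Ioo (0 : ℝ) 1, D.γ e t ∈ N → D.LC g (D.γ e t)) {x : M} (hx : x ∈ N) :
    D.LC g x := by
  by_cases hxK : x ∈ D.K
  · rcases D.K_cases hxK with ⟨v, rfl⟩ | ⟨e, t, ht, rfl⟩
    · refine D.LC_of_punctured hxK ?_
      have hf : IsClosed (D.f '' {w | w ≠ v}) := (Set.toFinite _).isClosed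
      have hn : D.f v ∉ D.f '' {w | w ≠ v} := by
        rintro ⟨w, hw, h⟩; exact hw (D.f_inj h)
      filter_upwards [self_mem_nhdsWithin, nhdsWithin_le_nhds (hN.mem_nhds hx),
        nhdsWithin_le_nhds (hf.isOpen_compl.mem_nhds hn)] with y hy hyN hyf
      by_cases hyK : y ∈ D.K
      · rcases D.K_cases hyK with ⟨w, rfl⟩ | ⟨e, t, ht, rfl⟩
        · have : w ≠ v := fun h => hy (by rw [h]; rfl)
          exact (hyf ⟨w, this, rfl⟩).elim
        · exact h e t ht hyN
      · exact hg.lc hyN hyK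
    · exact h e t ht hx
  · exact hg.lc hx hxK

end
end GD

namespace GD
variable {M V E : Type*} [TopologicalSpace M] (D : GD M V E)

section
variable [T2Space M] [Surf M] [Finite V] [Finite E]

/-- (a) -/
theorem Cob_of_J_zero {c : M → M → ZMod 2} (hc : c ∈ D.ZK) (hJ : D.J c = 0) : c ∈ Cob M := by
  choose N g hN hp hg hcN hP using D.ZK_local hc
  have hLC : ∀ p, ∀ x ∈ N p, D.LC (g p) x := by
    intro p x hx
    refine D.LC_of_edges (hN p) (hg p) ?_ hx
    intro e t ht hm
    rw [D.J_Jmp hc (hP p) e t ht hm, hJ]; rfl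
  have hκ : ∀ p, ∃ κ, ∃ U : Set M, IsOpen U ∧ p ∈ U ∧ ∀ x ∈ U, x ∉ D.K → g p x = κ :=
    fun p => (D.LC_iff _ _).1 (hLC p p (hp p))
  choose κ U hU hpU hUκ using hκ
  refine ⟨fun x => g x x + κ x, fun p => ⟨N p ∩ U p, (hN p).inter (hU p), ⟨hp p, hpU p⟩, ?_⟩⟩
  have key : ∀ x ∈ N p ∩ U p, g x x + κ x = g p x + κ p := by
    intro x hx
    obtain ⟨y, hy, hyK⟩ := D.exists_W (((hN p).inter (hU p)).inter ((hN x).inter (hU x)))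
      ⟨x, hx, hp x, hpU x⟩
    have e1 := hcN x x (hp x) y hy.2.1
    have e2 := hcN p x hx.1 y hy.1.1
    rw [hUκ x y hy.2.2 hyK] at e1
    rw [hUκ p y hy.1.2 hyK] at e2
    rw [← e1, e2]
  intro x hx y hy
  simp only []
  rw [key x hx, key y hy, hcN p x hx.1 y hy.1]
  have := zadd_self (κ p)
  linear_combination -this

open Classical in
/-- the cycle space -/
def Z1 [Fintype E] : Submodule (ZMod 2) (E → ZMod 2) :=
  mkSub {z | ∀ v, ∑ e, (if D.src e = v ∨ D.tgt e = v then z e else 0) = 0}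
    (fun v => by simp) (fun a ha b hb v => by
      have := congrArg₂ (· + ·) (ha v) (hb v)
      simp only [← Finset.sum_add_distrib, add_zero] at this
      refine Eq.trans (Finset.sum_congr rfl fun e _ => ?_) this
      split_ifs <;> simp)

open Classical in
theorem mem_Z1 [Fintype E] {z : E → ZMod 2} : z ∈ D.Z1 ↔
    ∀ v, ∑ e, (if D.src e = v ∨ D.tgt e = v then z e else 0) = 0 := Iff.rfl

open Classical in
theorem mem_Z1_even [Fintype E] {z : E → ZMod 2} : z ∈ D.Z1 ↔
    ∀ v, Even (Finset.univ.filter fun e => (D.src e = v ∨ D.tgt e = v) ∧ z e ≠ 0).card := by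
  rw [mem_Z1]
  refine forall_congr' fun v => ?_
  have : ∑ e, (if D.src e = v ∨ D.tgt e = v then z e else 0) =
      ((Finset.univ.filter fun e => (D.src e = v ∨ D.tgt e = v) ∧ z e ≠ 0).card : ZMod 2) := by
    rw [Finset.card_filter, Nat.cast_sum]
    refine Finset.sum_congr rfl fun e _ => ?_
    rcases zmod2_cases (z e) with h | h <;> by_cases h' : D.src e = v ∨ D.tgt e = v <;> simp [h, h']
  rw [this, ZMod.natCast_eq_zero_iff_even]

/-- (b) -/
theorem J_mem_Z1 [Fintype E] {c : M → M → ZMod 2} (hc : c ∈ D.ZK) : D.J c ∈ D.Z1 := by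
  rw [mem_Z1_even]
  intro v
  obtain ⟨N, g, hN, hp, hg, -, hP⟩ := D.ZK_local hc (D.f v)
  exact D.parity v hN hp hg (D.J_Jmp hc hP)

theorem LC_add_of_Jmp {N N' : Set M} {g g' : M → ZMod 2} {z : E → ZMod 2} (hN : IsOpen N)
    (hN' : IsOpen N') (hg : D.LK g N) (hg' : D.LK g' N') (hz : D.Jmp g N z) (hz' : D.Jmp g' N' z)
    {x : M} (hx : x ∈ N) (hx' : x ∈ N') : D.LC (g + g') x := by
  refine D.LC_of_edges (hN.inter hN') ((hg.mono inter_subset_left).add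
    (hg'.mono inter_subset_right)) ?_ ⟨hx, hx'⟩
  intro e t ht hm
  have h1 := hz e t ht hm.1
  have h2 := hz' e t ht hm.2
  by_cases h0 : z e = 0
  · exact (h1.2 h0).add (h2.2 h0)
  · exact D.LC_add_of_not (hN.inter hN') (hg.mono inter_subset_left)
      (hg'.mono inter_subset_right) e ht hm (fun h => h0 (h1.1 h)) (fun h => h0 (h2.1 h))

/-- a generalized evaluation at points of the drawing -/
noncomputable def T (x : M) : Ultrafilter M :=
  haveI := D.neBot_W x
  Ultrafilter.of (𝓝[D.Kᶜ] x)

theorem T_le (x : M) : (D.T x : Filter M) ≤ 𝓝[D.Kᶜ] x :=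
  haveI := D.neBot_W x
  Ultrafilter.of_le _

open Classical in
/-- value of `g` along the ultrafilter -/
noncomputable def ev (g : M → ZMod 2) (x : M) : ZMod 2 :=
  if ∀ᶠ w in (D.T x : Filter M), g w = 0 then 0 else 1

theorem ev_spec (g : M → ZMod 2) (x : M) : ∀ᶠ w in (D.T x : Filter M), g w = D.ev g x := by
  unfold ev
  split_ifs with h
  · exact h
  · rw [← Ultrafilter.eventually_not] at h
    filter_upwards [h] with w hw
    exact (zmod2_cases _).resolve_left hw

theorem ev_eq {g : M → ZMod 2} {x : M} {a : ZMod 2} (h : ∀ᶠ w in (D.T x : Filter M), g w = a) :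
    D.ev g x = a := by
  obtain ⟨w, h1, h2⟩ := ((D.ev_spec g x).and h).exists
  rw [← h1, h2]

theorem ev_add (g g' : M → ZMod 2) (x : M) : D.ev (g + g') x = D.ev g x + D.ev g' x := by
  apply ev_eq
  filter_upwards [D.ev_spec g x, D.ev_spec g' x] with w h1 h2
  rw [Pi.add_apply, h1, h2]

theorem ev_const {N : Set M} (hN : IsOpen N) {g : M → ZMod 2} {κ : ZMod 2}
    (h : ∀ x ∈ N, x ∉ D.K → g x = κ) {x : M} (hx : x ∈ N) : D.ev g x = κ := by
  apply ev_eq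
  have : ∀ᶠ w in 𝓝[D.Kᶜ] x, g w = κ := by
    filter_upwards [self_mem_nhdsWithin, nhdsWithin_le_nhds (hN.mem_nhds hx)] with w h1 h2
    exact h w h2 h1
  exact D.T_le x this

theorem ev_LK {N : Set M} {g : M → ZMod 2} (hg : D.LK g N) {x : M} (hx : x ∈ N) (hK : x ∉ D.K) :
    D.ev g x = g x := by
  apply ev_eq
  have : ∀ᶠ w in 𝓝[D.Kᶜ] x, g w = g x := nhdsWithin_le_nhds (hg x hx hK)
  exact D.T_le x this

/-- (c) -/
theorem J_surj [CompactSpace M] [Fintype E] {z : E → ZMod 2} (hz : z ∈ D.Z1) :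
    ∃ c ∈ D.ZK, D.J c = z := by
  classical
  rw [mem_Z1_even] at hz
  choose N g hN hp hg hJ using D.exists_local z hz
  have hC : ∀ p, ∃ C ∈ 𝓝 p, IsClosed C ∧ C ⊆ N p := fun p =>
    exists_mem_nhds_isClosed_subset ((hN p).mem_nhds (hp p))
  choose C hCn hCc hCN using hC
  obtain ⟨t, ht⟩ := CompactSpace.elim_nhds_subcover C hCn
  have hi : ∀ x, ∃ i ∈ t, x ∈ C i := by
    intro x
    have : x ∈ ⋃ i ∈ t, C i := by rw [ht]; trivial
    simpa using this
  choose i hit hiC using hi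
  let c : M → M → ZMod 2 := fun x y => D.ev (g (i x)) x + D.ev (g (i x)) y
  have hprim : ∀ p, Prim c (D.ev (g (i p))) p := by
    intro p
    have hloc : ∀ j, ∃ U : Set M, IsOpen U ∧ p ∈ U ∧ ((p ∉ C j ∧ ∀ x ∈ U, x ∉ C j) ∨
        ∃ κ, ∀ x ∈ U, D.ev (g j) x = D.ev (g (i p)) x + κ) := by
      intro j
      by_cases hj : p ∈ C j
      · obtain ⟨κ, U, hU, hpU, h⟩ := (D.LC_iff _ _).1 (D.LC_add_of_Jmp (hN j) (hN (i p)) (hg j)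
          (hg (i p)) (hJ j) (hJ (i p)) (hCN j hj) (hCN _ (hiC p)))
        refine ⟨U, hU, hpU, Or.inr ⟨κ, fun x hx => ?_⟩⟩
        have h1 := D.ev_const hU h hx
        rw [ev_add] at h1
        rw [← h1]
        linear_combination -(zadd_self (D.ev (g (i p)) x))
      · exact ⟨(C j)ᶜ, (hCc j).isOpen_compl, hj, Or.inl ⟨hj, fun x hx => hx⟩⟩
    choose U hU hpU hUj using hloc
    refine ⟨⋂ j ∈ t, U j, isOpen_biInter_finset fun j _ => hU j,
      mem_iInter₂.2 fun j _ => hpU j, fun x hx y hy => ?_⟩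
    have hx' := mem_iInter₂.1 hx (i x) (hit x)
    have hy' := mem_iInter₂.1 hy (i x) (hit x)
    rcases hUj (i x) with ⟨-, h⟩ | ⟨κ, h⟩
    · exact absurd (hiC x) (h x hx')
    · simp only [c, h x hx', h y hy']
      linear_combination (zadd_self κ)
  have hmem : c ∈ D.ZK := by
    refine ⟨fun p => ⟨_, hprim p⟩, fun p hpK => ?_⟩
    obtain ⟨N1, hN1, hp1, h1⟩ := hprim p
    obtain ⟨N2, h2, hN2, hp2⟩ :=
      _root_.eventually_nhds_iff.1 (hg (i p) p (hCN _ (hiC p)) hpK)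
    refine ⟨N1 ∩ N2, hN1.inter hN2, ⟨hp1, hp2⟩, fun x hx y hy => ?_⟩
    rw [h1 x hx.1 y hy.1, D.ev_const hN2 (fun w hw _ => h2 w hw) hx.2,
      D.ev_const hN2 (fun w hw _ => h2 w hw) hy.2, zadd_self]
    simp
  refine ⟨c, hmem, ?_⟩
  funext e
  have htI : (1 / 2 : ℝ) ∈ Ioo (0 : ℝ) 1 := by norm_num
  set p := D.γ e (1 / 2) with hpd
  have h1 : D.J c e = 0 ↔ z e = 0 := by
    rw [J_eq_zero, D.zeroAt_iff (hprim p), ← hJ (i p) e _ htI (hCN _ (hiC p))]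
    have hev : ∀ᶠ x in 𝓝[D.Kᶜ] p, D.ev (g (i p)) x = g (i p) x := by
      filter_upwards [self_mem_nhdsWithin,
        nhdsWithin_le_nhds ((hN (i p)).mem_nhds (hCN _ (hiC p)))] with x hxK hx
      exact D.ev_LK (hg (i p)) hx hxK
    exact ⟨fun h => h.congr hev, fun h => h.congr (hev.mono fun _ h => h.symm)⟩
  rcases zmod2_cases (z e) with h | h
  · rw [h, h1.2 h]
  · rw [h]
    refine (zmod2_cases _).resolve_left fun h0 => ?_
    rw [h1.1 h0] at h
    exact zero_ne_one h

end
end GD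

theorem linalg_aux {k A B W : Type*} [Field k] [AddCommGroup A] [Module k A] [AddCommGroup B]
    [Module k B] [AddCommGroup W] [Module k W] [Module.Finite k W] (J : A →ₗ[k] W) (φ : A →ₗ[k] B)
    (h : LinearMap.ker J ≤ LinearMap.ker φ) :
    Module.Finite k (LinearMap.range φ) ∧
    Module.finrank k (LinearMap.range φ) + Module.finrank k ((LinearMap.ker φ).map J) =
      Module.finrank k (LinearMap.range J) := by
  let ψ : LinearMap.range J →ₗ[k] B :=
    ((LinearMap.ker J).liftQ φ h).comp J.quotKerEquivRange.symm.toLinearMap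
  have hψ : ∀ a, ψ ⟨J a, a, rfl⟩ = φ a := by
    intro a
    simp only [ψ, LinearMap.comp_apply, LinearEquiv.coe_coe]
    rw [show (⟨J a, a, rfl⟩ : LinearMap.range J) = J.quotKerEquivRange (Submodule.Quotient.mk a)
      from rfl, LinearEquiv.symm_apply_apply]
    rfl
  have hr : LinearMap.range ψ = LinearMap.range φ := by
    ext b
    constructor
    · rintro ⟨⟨_, a, rfl⟩, rfl⟩
      exact ⟨a, (hψ a).symm⟩
    · rintro ⟨a, rfl⟩
      exact ⟨_, hψ a⟩
  have hk : (LinearMap.ker φ).map J = (LinearMap.ker ψ).map (LinearMap.range J).subtype := by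
    ext w
    constructor
    · rintro ⟨a, ha, rfl⟩
      exact ⟨⟨J a, a, rfl⟩, by
        show ψ _ = 0
        rw [hψ]; exact ha, rfl⟩
    · rintro ⟨⟨_, a, rfl⟩, ha, rfl⟩
      refine ⟨a, ?_, rfl⟩
      have : ψ _ = 0 := ha
      rw [hψ] at this; exact this
  have h1 := ψ.finrank_range_add_finrank_ker
  rw [← hr]
  refine ⟨inferInstance, ?_⟩
  rw [hk, ← h1, LinearEquiv.finrank_eq (Submodule.equivMapOfInjective _
    (LinearMap.range J).injective_subtype (LinearMap.ker ψ))]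

namespace GD
variable {M V E : Type*} [TopologicalSpace M] (D : GD M V E)

/-- the faces of the drawing -/
def Faces : Set (Set M) := {F | ∃ x ∈ D.Kᶜ, F = connectedComponentIn D.Kᶜ x}

/-- the face of a point -/
def face (x : M) (hx : x ∉ D.K) : D.Faces := ⟨connectedComponentIn D.Kᶜ x, x, hx, rfl⟩

theorem mem_face (x : M) (hx : x ∉ D.K) : x ∈ (D.face x hx).1 := mem_connectedComponentIn hx

theorem face_sub (F : D.Faces) : F.1 ⊆ D.Kᶜ := by
  obtain ⟨_, x, hx, rfl⟩ := F
  exact connectedComponentIn_subset _ _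

theorem face_unique (F : D.Faces) {x : M} (hx : x ∈ F.1) : F = D.face x (D.face_sub F hx) := by
  obtain ⟨_, y, hy, rfl⟩ := F
  exact Subtype.ext (connectedComponentIn_eq hx)

theorem face_nonempty (F : D.Faces) : ∃ x, x ∈ F.1 := by
  obtain ⟨_, x, hx, rfl⟩ := F
  exact ⟨x, mem_connectedComponentIn hx⟩

theorem face_conn (F : D.Faces) : IsPreconnected F.1 := by
  obtain ⟨_, x, hx, rfl⟩ := F
  exact isPreconnected_connectedComponentIn

open Classical in
/-- indicator of a face -/
noncomputable def ind (F : D.Faces) (x : M) : ZMod 2 := if x ∈ F.1 then 1 else 0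

/-- functions that are constant on faces, vanishing on the drawing -/
def LCF : Submodule (ZMod 2) (M → ZMod 2) :=
  mkSub {g | D.LK g univ ∧ ∀ x ∈ D.K, g x = 0} ⟨fun x _ _ => by simp, fun x _ => rfl⟩
    (fun a ha b hb => ⟨ha.1.add hb.1, fun x hx => by
      rw [Pi.add_apply, ha.2 x hx, hb.2 x hx, add_zero]⟩)

/-- the coboundary of a function -/
def dd (g : M → ZMod 2) : M → M → ZMod 2 := fun x y => g x + g y

theorem dd_prim (g : M → ZMod 2) (p : M) : Prim (dd g) g p :=
  ⟨univ, isOpen_univ, mem_univ _, fun _ _ _ _ => rfl⟩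

theorem dd_mem {g : M → ZMod 2} (hg : D.LK g univ) : dd g ∈ D.ZK := by
  refine ⟨fun p => ⟨g, dd_prim g p⟩, fun p hp => ?_⟩
  obtain ⟨N, h, hN, hpN⟩ := _root_.eventually_nhds_iff.1 (hg p trivial hp)
  refine ⟨N, hN, hpN, fun x hx y hy => ?_⟩
  simp only [dd, h x hx, h y hy, zadd_self]
  simp

theorem dd_Cob (g : M → ZMod 2) : dd g ∈ Cob M := ⟨g, dd_prim g⟩

section
variable [T2Space M] [Surf M] [Finite V] [Finite E]

/-- the boundary map -/
noncomputable def bd : D.LCF →ₗ[ZMod 2] (E → ZMod 2) :=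
  AddMonoidHom.toZModLinearMap 2 (AddMonoidHom.mk' (fun g : D.LCF => D.J (dd g.1))
    (fun a b => by
      rw [← D.J_add (D.dd_mem a.2.1) (D.dd_mem b.2.1)]
      congr 1
      funext x y
      simp only [dd, Submodule.coe_add, Pi.add_apply]
      ring))

theorem bd_apply (g : D.LCF) : D.bd g = D.J (dd g.1) := rfl

theorem bd_eq_zero_iff (g : D.LCF) (e : E) : D.bd g e = 0 ↔ D.LC g.1 (D.γ e (1 / 2)) := by
  rw [bd_apply, J_eq_zero, D.zeroAt_iff (dd_prim g.1 _)]

theorem const_of_bd [PreconnectedSpace M] (g : D.LCF) (h : D.bd g = 0) :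
    ∀ x ∉ D.K, ∀ y ∉ D.K, g.1 x = g.1 y := by
  have hLC : ∀ p, D.LC g.1 p := fun p =>
    D.LC_of_edges isOpen_univ g.2.1 (fun e t ht _ => by
      rw [D.J_Jmp (D.dd_mem g.2.1) (N := univ) (fun x _ => dd_prim g.1 x) e t ht trivial,
        ← bd_apply, h]; rfl) (mem_univ p)
  have hl : IsLocallyConstant (D.ev g.1) := by
    rw [IsLocallyConstant.iff_eventually_eq]
    intro p
    obtain ⟨κ, U, hU, hpU, h⟩ := (D.LC_iff _ _).1 (hLC p)
    filter_upwards [hU.mem_nhds hpU] with x hx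
    rw [D.ev_const hU h hx, D.ev_const hU h hpU]
  intro x hx y hy
  rw [← D.ev_LK g.2.1 (mem_univ x) hx, ← D.ev_LK g.2.1 (mem_univ y) hy]
  exact hl.apply_eq_of_preconnectedSpace _ _

open Classical in
theorem finrank_ker_bd [ConnectedSpace M] : Module.finrank (ZMod 2) (LinearMap.ker D.bd) = 1 := by
  obtain ⟨x0, -, hx0⟩ := D.exists_W isOpen_univ univ_nonempty
  have hK := D.K_closed.isOpen_compl
  have h1 : (fun x => if x ∈ D.K then (0 : ZMod 2) else 1) ∈ D.LCF := by
    refine ⟨fun x _ hx => ?_, fun x hx => by simp [hx]⟩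
    filter_upwards [hK.mem_nhds hx] with w hw
    have hw' : w ∉ D.K := hw
    simp [hw', hx]
  have h2 : D.bd ⟨_, h1⟩ = 0 := by
    funext e
    rw [Pi.zero_apply, bd_eq_zero_iff]
    refine ⟨1, ?_⟩
    filter_upwards [self_mem_nhdsWithin] with w hw
    have hw' : w ∉ D.K := hw
    simp [hw']
  refine finrank_eq_one (⟨⟨_, h1⟩, h2⟩ : LinearMap.ker D.bd) ?_ ?_
  · intro h
    have := congrFun (congrArg (fun g : LinearMap.ker D.bd => g.1.1) h) x0
    simp [hx0] at this
  · rintro ⟨g, hg⟩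
    refine ⟨g.1 x0, Subtype.ext (Subtype.ext ?_)⟩
    funext x
    by_cases hx : x ∈ D.K
    · simp [hx, g.2.2 x hx]
    · simp [hx, D.const_of_bd g hg x hx x0 hx0]

section
variable [LocallyConnectedSpace M]

theorem face_open (F : D.Faces) : IsOpen F.1 := by
  obtain ⟨_, x, hx, rfl⟩ := F
  exact D.K_closed.isOpen_compl.connectedComponentIn

theorem ind_mem (F : D.Faces) : D.ind F ∈ D.LCF := by
  refine ⟨fun x _ hx => ?_, fun x hx => ?_⟩
  · filter_upwards [(D.face_open (D.face x hx)).mem_nhds (D.mem_face x hx)] with w hw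
    have e := D.face_unique _ hw
    have : w ∈ F.1 ↔ x ∈ F.1 := by
      constructor
      · intro h
        rw [D.face_unique F h, ← e]; exact D.mem_face x hx
      · intro h
        rw [D.face_unique F h]; exact hw
    by_cases h : x ∈ F.1
    · simp [ind, h, this.2 h]
    · simp [ind, h, mt this.1 h]
  · have : x ∉ F.1 := fun h => D.face_sub F h hx
    simp [ind, this]

/-- boundary of a face -/
noncomputable def bF (F : D.Faces) : E → ZMod 2 := D.bd ⟨D.ind F, D.ind_mem F⟩

theorem ind_self (F : D.Faces) {x : M} (hx : x ∈ F.1) : D.ind F x = 1 := by simp [ind, hx]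

theorem ind_ne {F F' : D.Faces} (h : F ≠ F') {x : M} (hx : x ∈ F.1) : D.ind F' x = 0 := by
  have : x ∉ F'.1 := fun h' => h ((D.face_unique F hx).trans (D.face_unique F' h').symm)
  simp [ind, this]

theorem finite_LCF [ConnectedSpace M] : Module.Finite (ZMod 2) D.LCF := by
  have h1 : Module.Finite (ZMod 2) (LinearMap.ker D.bd) :=
    Module.finite_of_finrank_eq_succ D.finrank_ker_bd
  have h2 : Module.Finite (ZMod 2) (D.LCF ⧸ LinearMap.ker D.bd) :=
    Module.Finite.equiv D.bd.quotKerEquivRange.symm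
  exact Module.Finite.of_submodule_quotient (LinearMap.ker D.bd)

theorem finite_Faces [ConnectedSpace M] : Finite D.Faces := by
  have := D.finite_LCF
  have h := Module.finite_of_finite (ZMod 2) (M := D.LCF)
  refine Finite.of_injective (fun F : D.Faces => (⟨D.ind F, D.ind_mem F⟩ : D.LCF)) ?_
  intro F F' hF
  by_contra hne
  obtain ⟨x, hx⟩ := D.face_nonempty F
  have := congrFun (congrArg Subtype.val hF) x
  simp only [D.ind_self F hx, D.ind_ne hne hx] at this
  exact one_ne_zero this

open Classical in
/-- functions on the faces as functions on the surface -/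
noncomputable def faceMap : (D.Faces → ZMod 2) →ₗ[ZMod 2] D.LCF :=
  AddMonoidHom.toZModLinearMap 2 (AddMonoidHom.mk'
    (fun u => ⟨fun x => if h : x ∈ D.K then 0 else u (D.face x h), fun x _ hx => by
      filter_upwards [(D.face_open (D.face x hx)).mem_nhds (D.mem_face x hx)] with w hw
      have hwK : w ∉ D.K := D.face_sub _ hw
      simp only [hwK, hx, dif_neg, not_false_eq_true]
      rw [D.face_unique _ hw], fun x hx => by simp [hx]⟩)
    (fun a b => by
      apply Subtype.ext
      funext x
      by_cases hx : x ∈ D.K <;> simp [hx]))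

theorem faceMap_apply (u : D.Faces → ZMod 2) (x : M) (hx : x ∉ D.K) :
    (D.faceMap u).1 x = u (D.face x hx) := dif_neg hx

theorem faceMap_bij : Function.Bijective D.faceMap := by
  constructor
  · intro u u' h
    funext F
    obtain ⟨x, hx⟩ := D.face_nonempty F
    have := congrFun (congrArg Subtype.val h) x
    rw [D.faceMap_apply u x (D.face_sub F hx), D.faceMap_apply u' x (D.face_sub F hx),
      ← D.face_unique F hx] at this
    exact this
  · intro g
    choose pt hpt using D.face_nonempty
    refine ⟨fun F => g.1 (pt F), Subtype.ext ?_⟩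
    funext x
    by_cases hx : x ∈ D.K
    · rw [(D.faceMap _).2.2 x hx, g.2.2 x hx]
    · rw [D.faceMap_apply _ x hx]
      have hc : ContinuousOn g.1 (D.face x hx).1 := by
        intro y hy
        refine ContinuousAt.continuousWithinAt (tendsto_const_nhds.congr' ?_)
        filter_upwards [g.2.1 y trivial (D.face_sub _ hy)] with w hw using hw.symm
      exact (D.face_conn _).constant hc (hpt _) (D.mem_face x hx)

theorem card_Faces [ConnectedSpace M] :
    Nat.card D.Faces = Module.finrank (ZMod 2) (LinearMap.range D.bd) + 1 := by
  have := D.finite_LCF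
  have := D.finite_Faces
  have := Fintype.ofFinite D.Faces
  rw [← D.finrank_ker_bd, LinearMap.finrank_range_add_finrank_ker,
    ← (LinearEquiv.ofBijective _ D.faceMap_bij).finrank_eq, Module.finrank_fintype_fun_eq_card,
    Nat.card_eq_fintype_card]

theorem bF_mem_Z1 [Fintype E] (F : D.Faces) : D.bF F ∈ D.Z1 :=
  D.J_mem_Z1 (D.dd_mem (D.ind_mem F).1)

theorem bF_sum [ConnectedSpace M] (T : Finset D.Faces) (h : ∑ F ∈ T, D.bF F = 0) :
    T = ∅ ∨ ∀ F, F ∈ T := by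
  by_contra hcon
  push Not at hcon
  obtain ⟨⟨F, hF⟩, F', hF'⟩ := hcon
  have h1 : D.bd (∑ F ∈ T, ⟨D.ind F, D.ind_mem F⟩) = 0 := by
    rw [map_sum]; exact h
  have h2 := D.const_of_bd _ h1
  obtain ⟨x, hx⟩ := D.face_nonempty F
  obtain ⟨x', hx'⟩ := D.face_nonempty F'
  have h3 := h2 x (D.face_sub F hx) x' (D.face_sub F' hx')
  rw [Submodule.coe_sum] at h3
  simp only [Finset.sum_apply] at h3
  have hz : ∑ c ∈ T, D.ind c x' = 0 := Finset.sum_eq_zero fun G hG =>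
    D.ind_ne (F := F') (F' := G) (fun h => hF' (by rw [h]; exact hG)) hx'
  rw [Finset.sum_eq_single F (fun G _ hG => D.ind_ne hG.symm hx) (fun h => absurd hF h),
    D.ind_self F hx, hz] at h3
  exact one_ne_zero h3

/-- (e) every edge is on the boundary of at most two faces -/
theorem bF_two (e : E) (F₁ F₂ F₃ : D.Faces) (h12 : F₁ ≠ F₂) (h13 : F₁ ≠ F₃) (h23 : F₂ ≠ F₃)
    (h1 : D.bF F₁ e ≠ 0) (h2 : D.bF F₂ e ≠ 0) (h3 : D.bF F₃ e ≠ 0) : False := by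
  have k1 := fun h => h1 ((D.bd_eq_zero_iff _ e).2 h)
  have k2 := fun h => h2 ((D.bd_eq_zero_iff _ e).2 h)
  have k3 := fun h => h3 ((D.bd_eq_zero_iff _ e).2 h)
  simp only at k1 k2 k3
  obtain ⟨κ, hκ⟩ := D.LC_add_of_not isOpen_univ (D.ind_mem F₁).1 (D.ind_mem F₂).1 e
    (by norm_num : (1 / 2 : ℝ) ∈ Ioo (0 : ℝ) 1) trivial k1 k2
  rcases zmod2_cases κ with rfl | rfl
  · refine k1 ⟨0, ?_⟩
    filter_upwards [hκ] with x hx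
    by_contra h
    have hx1 : x ∈ F₁.1 := by
      by_contra h'; exact h (by simp [ind, h'])
    rw [Pi.add_apply, D.ind_self F₁ hx1, D.ind_ne h12 hx1] at hx
    exact one_ne_zero ((add_zero _).symm.trans hx)
  · refine k3 ⟨0, ?_⟩
    filter_upwards [hκ] with x hx
    by_contra h
    have hx3 : x ∈ F₃.1 := by
      by_contra h'; exact h (by simp [ind, h'])
    rw [Pi.add_apply, D.ind_ne h13.symm hx3, D.ind_ne h23.symm hx3] at hx
    exact zero_ne_one ((add_zero _).symm.trans hx)

end

/-- cohomology classes of cocycles supported on the drawing -/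
noncomputable def cl : D.ZK →ₗ[ZMod 2] ((M → M → ZMod 2) ⧸ Cob M) := (Cob M).mkQ.comp D.ZK.subtype

theorem cl_eq_zero (c : D.ZK) : D.cl c = 0 ↔ c.1 ∈ Cob M := by
  unfold cl
  rw [LinearMap.comp_apply, Submodule.mkQ_apply, Submodule.Quotient.mk_eq_zero]; rfl

open Classical in
theorem map_ker_cl : (LinearMap.ker D.cl).map D.JL = LinearMap.range D.bd := by
  ext z
  constructor
  · rintro ⟨c, hc, rfl⟩
    have hc' : c.1 ∈ Cob M := (D.cl_eq_zero c).1 hc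
    obtain ⟨g, hg⟩ := hc'
    have hgK : D.LK g univ := by
      intro x _ hx
      obtain ⟨N, hN, hxN, h⟩ := hg x
      obtain ⟨N', hN', hxN', h'⟩ := c.2.2 x hx
      filter_upwards [hN.mem_nhds hxN, hN'.mem_nhds hxN'] with w hw hw'
      apply zeq_of_add
      rw [← h w hw x hxN, h' w hw' x hxN']; simp
    let g' : M → ZMod 2 := fun x => if x ∈ D.K then 0 else g x
    have hg' : g' ∈ D.LCF := by
      refine ⟨fun x _ hx => ?_, fun x hx => by simp [g', hx]⟩
      filter_upwards [hgK x trivial hx, D.K_closed.isOpen_compl.mem_nhds hx] with w hw hwK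
      have hwK' : w ∉ D.K := hwK
      simp [g', hwK', hx, hw]
    refine ⟨⟨g', hg'⟩, ?_⟩
    funext e
    have hev : ∀ᶠ x in 𝓝[D.Kᶜ] (D.γ e (1 / 2)), g x = g' x := by
      filter_upwards [self_mem_nhdsWithin] with x hx
      have hx' : x ∉ D.K := hx
      simp [g', hx']
    have : D.bd ⟨g', hg'⟩ e = 0 ↔ D.JL c e = 0 := by
      rw [bd_eq_zero_iff, JL_apply, J_eq_zero, D.zeroAt_iff (hg _)]
      exact ⟨fun h => h.congr (hev.mono fun _ h => h.symm), fun h => h.congr hev⟩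
    rcases zmod2_cases (D.JL c e) with h | h
    · rw [h, this.2 h]
    · rw [h]
      refine (zmod2_cases _).resolve_left fun h0 => ?_
      rw [this.1 h0] at h
      exact zero_ne_one h
  · rintro ⟨g, rfl⟩
    refine ⟨⟨dd g.1, D.dd_mem g.2.1⟩, ?_, rfl⟩
    exact (D.cl_eq_zero _).2 (dd_Cob g.1)

theorem range_JL [CompactSpace M] [Fintype E] : LinearMap.range D.JL = D.Z1 := by
  ext z
  constructor
  · rintro ⟨c, rfl⟩; exact D.J_mem_Z1 c.2
  · intro hz
    obtain ⟨c, hc, rfl⟩ := D.J_surj hz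
    exact ⟨⟨c, hc⟩, rfl⟩

theorem finrank_cl [CompactSpace M] [ConnectedSpace M] [LocallyConnectedSpace M] [Fintype E] :
    Module.Finite (ZMod 2) (LinearMap.range D.cl) ∧
    Module.finrank (ZMod 2) (LinearMap.range D.cl) + Nat.card D.Faces =
      Module.finrank (ZMod 2) D.Z1 + 1 := by
  have h := linalg_aux D.JL D.cl (fun c hc => (D.cl_eq_zero c).2 (D.Cob_of_J_zero c.2 hc))
  rw [map_ker_cl, range_JL] at h
  refine ⟨h.1, ?_⟩
  rw [card_Faces, ← h.2]
  ring

end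
end GD

theorem Coc_le_Cob {B : Type*} [TopologicalSpace B] [SimplyConnectedSpace B]
    [LocallyPathConnectedSpace B] {c : B → B → ZMod 2} (hc : ∀ p, ∃ g, Prim c g p) :
    ∃ g, ∀ p, Prim c g p := by
  choose g N hN hpN hg using hc
  have key : ∀ i j, ∀ x ∈ N i ∩ N j, ∀ y ∈ N i ∩ N j, g i x + g j x = g i y + g j y := by
    intro i j x hx y hy
    have h1 := hg i x hx.1 y hy.1
    have h2 := hg j x hx.2 y hy.2
    rw [h1] at h2
    apply zeq_of_add
    have : g i x + g j x + (g i y + g j y) = (g i x + g i y) + (g j x + g j y) := by ring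
    rw [this, h2, zadd_self]
  let Z : FiberBundleCore B B (ZMod 2) :=
    { baseSet := N
      isOpen_baseSet := hN
      indexAt := id
      mem_baseSet_at := hpN
      coordChange := fun i j x v => v + (g i x + g j x)
      coordChange_self := fun i x _ v => by rw [zadd_self, add_zero]
      continuousOn_coordChange := fun i j => by
        rcases (N i ∩ N j).eq_empty_or_nonempty with h | ⟨x0, hx0⟩
        · rw [h]; simp
        · have : ContinuousOn (fun p : B × ZMod 2 => p.2 + (g i x0 + g j x0))
            ((N i ∩ N j) ×ˢ univ) := by fun_prop
          refine this.congr fun p hp => ?_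
          simp only
          rw [key i j p.1 hp.1 x0 hx0]
      coordChange_comp := fun i j k x _ v => by
        have : v + (g i x + g j x) + (g j x + g k x) = v + (g i x + g k x) + (g j x + g j x) := by
          ring
        rw [this, zadd_self, add_zero] }
  have cov : IsCoveringMap (Bundle.TotalSpace.proj : Bundle.TotalSpace (ZMod 2) Z.Fiber → B) :=
    FiberBundle.isCoveringMap
  have ⟨b0⟩ : Nonempty B := inferInstance
  obtain ⟨σ, ⟨-, hσ⟩, -⟩ := cov.existsUnique_continuousMap_lifts (ContinuousMap.id B) b0
    (⟨b0, (0 : ZMod 2)⟩ : Bundle.TotalSpace (ZMod 2) Z.Fiber) rfl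
  have hσ' : ∀ x, (σ x).1 = x := fun x => congrFun hσ x
  let s : B → ZMod 2 := fun x => (σ x).2
  refine ⟨fun x => s x + g x x, fun p => ?_⟩
  have hcont : ContinuousAt (fun x => (Z.localTriv p (σ x)).2) p := by
    refine continuous_snd.continuousAt.comp ?_
    refine ContinuousAt.comp ?_ σ.continuous.continuousAt
    refine (Z.localTriv p).continuousAt ?_
    rw [Z.mem_localTriv_source]
    show (σ p).1 ∈ N p
    rw [hσ' p]; exact hpN p
  have hval : ∀ x, (Z.localTriv p (σ x)).2 = s x + (g x x + g p x) := by
    intro x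
    show s x + (g (σ x).1 (σ x).1 + g p (σ x).1) = _
    rw [hσ' x]
  simp only [hval] at hcont
  have hev : ∀ᶠ x in 𝓝 p, s x + (g x x + g p x) = s p + (g p p + g p p) :=
    hcont.eventually (IsOpen.mem_nhds (isOpen_discrete {_}) rfl)
  obtain ⟨O, hO, hOo, hpO⟩ := _root_.eventually_nhds_iff.1 hev
  refine ⟨O ∩ N p, hOo.inter (hN p), ⟨hpO, hpN p⟩, fun x hx y hy => ?_⟩
  rw [hg p x hx.2 y hy.2]
  have h1 := hO x hx.1
  rw [← hO y hy.1] at h1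
  apply zeq_of_add
  have : g p x + g p y + (s x + g x x + (s y + g y y)) =
    (s x + (g x x + g p x)) + (s y + (g y y + g p y)) := by ring
  rw [this, h1, zadd_self]

theorem prim_open {M : Type*} [TopologicalSpace M] {F : Set M} (hF : IsOpen F)
    (hdisc : Nonempty (↥F ≃ₜ ↥(Metric.ball (0 : EuclideanSpace ℝ (Fin 2)) 1)))
    {c : M → M → ZMod 2} (hc : c ∈ Coc M) : ∃ g, ∀ p ∈ F, Prim c g p := by
  obtain ⟨ψ⟩ := hdisc
  have h1 : ContractibleSpace ↥(Metric.ball (0 : EuclideanSpace ℝ (Fin 2)) 1) :=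
    (convex_ball _ _).contractibleSpace ⟨0, by simp⟩
  have h2 : ContractibleSpace F := ψ.toHomotopyEquiv.contractibleSpace
  have h3 : LocallyPathConnectedSpace ↥(Metric.ball (0 : EuclideanSpace ℝ (Fin 2)) 1) :=
    isOpen_ball.locallyPathConnectedSpace
  have h4 : LocallyPathConnectedSpace F := ψ.isOpenEmbedding.locallyPathConnectedSpace
  have h5 : SimplyConnectedSpace F := inferInstance
  obtain ⟨g, hg⟩ := Coc_le_Cob (B := F) (c := fun x y => c x y) (fun p => by
    obtain ⟨g, N, hN, hp, h⟩ := hc p.1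
    exact ⟨fun x => g x, Subtype.val ⁻¹' N, hN.preimage continuous_subtype_val, hp,
      fun x hx y hy => h x hx y hy⟩)
  classical
  refine ⟨fun x => if h : x ∈ F then g ⟨x, h⟩ else 0, fun p hp => ?_⟩
  obtain ⟨N, hN, hpN, h⟩ := hg ⟨p, hp⟩
  refine ⟨Subtype.val '' N, hF.isOpenMap_subtype_val _ hN, ⟨_, hpN, rfl⟩, ?_⟩
  rintro _ ⟨x, hx, rfl⟩ _ ⟨y, hy, rfl⟩
  simp only [Subtype.coe_prop, dif_pos, Subtype.coe_eta]
  exact h x hx y hy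

namespace GD
variable {M V E : Type*} [TopologicalSpace M] (D : GD M V E)
  [T2Space M] [Surf M] [Finite V] [Finite E]

theorem Coc_le_range [LocallyConnectedSpace M] (hd : ∀ F ∈ D.Faces,
      Nonempty (↥F ≃ₜ ↥(Metric.ball (0 : EuclideanSpace ℝ (Fin 2)) 1))) :
    (Coc M).map (Cob M).mkQ ≤ LinearMap.range D.cl := by
  rintro _ ⟨c, hc, rfl⟩
  have := fun F : D.Faces => prim_open (D.face_open F) (hd F.1 F.2) hc
  choose gF hgF using this
  classical
  let g : M → ZMod 2 := fun x => if h : x ∈ D.K then 0 else gF (D.face x h) x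
  have hg : ∀ p ∉ D.K, Prim c g p := by
    intro p hp
    obtain ⟨N, hN, hpN, h⟩ := hgF (D.face p hp) p (D.mem_face p hp)
    refine ⟨N ∩ (D.face p hp).1, hN.inter (D.face_open _), ⟨hpN, D.mem_face p hp⟩, ?_⟩
    have key : ∀ x ∈ (D.face p hp).1, g x = gF (D.face p hp) x := by
      intro x hx
      have hxK : x ∉ D.K := D.face_sub _ hx
      simp only [g, hxK, dif_neg, not_false_eq_true]
      rw [← D.face_unique _ hx]
    intro x hx y hy
    rw [key x hx.2, key y hy.2, h x hx.1 y hy.1]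
  have hmem : c + dd g ∈ D.ZK := by
    rw [mem_ZK]
    refine ⟨fun p => ?_, fun p hp => ?_⟩
    · obtain ⟨g', hg'⟩ := hc p
      exact ⟨_, hg'.add (dd_prim g p)⟩
    · have := (hg p hp).add (dd_prim g p)
      have e : g + g = 0 := by funext x; exact zadd_self _
      rwa [e] at this
  refine ⟨⟨c + dd g, hmem⟩, ?_⟩
  show (Cob M).mkQ (c + dd g) = _
  rw [map_add]
  have : (Cob M).mkQ (dd g) = 0 := by
    rw [Submodule.mkQ_apply, Submodule.Quotient.mk_eq_zero]; exact dd_Cob g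
  rw [this, add_zero]

theorem range_le_Coc : LinearMap.range D.cl ≤ (Coc M).map (Cob M).mkQ := by
  rintro _ ⟨c, rfl⟩
  exact ⟨c.1, c.2.1, rfl⟩

/-- comparison of a drawing with a cellular one -/
theorem compare {V₀ E₀ : Type*} [Finite V₀] [Fintype E₀] [Fintype E] (D₀ : GD M V₀ E₀)
    [CompactSpace M] [ConnectedSpace M] [LocallyConnectedSpace M] (hd : ∀ F ∈ D₀.Faces,
      Nonempty (↥F ≃ₜ ↥(Metric.ball (0 : EuclideanSpace ℝ (Fin 2)) 1))) :
    Module.finrank (ZMod 2) D.Z1 + Nat.card D₀.Faces ≤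
      Module.finrank (ZMod 2) D₀.Z1 + Nat.card D.Faces := by
  obtain ⟨f1, h1⟩ := D.finrank_cl
  obtain ⟨f2, h2⟩ := D₀.finrank_cl
  have := Submodule.finrank_mono (D.range_le_Coc.trans (D₀.Coc_le_range hd))
  omega

end GD

namespace GD
variable {M V E : Type*} [TopologicalSpace M] (D : GD M V E) [T2Space M] [Surf M]

open Classical in
/-- incidence matrix -/
noncomputable def inc : Matrix V E (ZMod 2) := fun v e => if D.src e = v ∨ D.tgt e = v then 1 else 0

open Classical in
theorem ker_inc [Fintype V] [Fintype E] : LinearMap.ker D.inc.mulVecLin = D.Z1 := by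
  ext z
  rw [mem_Z1, LinearMap.mem_ker, funext_iff]
  refine forall_congr' fun v => ?_
  rw [Matrix.mulVecLin_apply, Matrix.mulVec, dotProduct, Pi.zero_apply]
  have : ∀ e, D.inc v e * z e = if D.src e = v ∨ D.tgt e = v then z e else 0 := by
    intro e
    unfold inc
    split_ifs <;> simp
  simp only [this]

open Classical in
theorem incT_apply [Fintype V] [Fintype E] (x : V → ZMod 2) (e : E) :
    D.inc.transpose.mulVecLin x e = x (D.src e) + x (D.tgt e) := by
  rw [Matrix.mulVecLin_apply, Matrix.mulVec, dotProduct]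
  have hne := D.src_ne_tgt e
  have : ∀ v, D.inc.transpose e v * x v =
      (if D.src e = v then x v else 0) + (if D.tgt e = v then x v else 0) := by
    intro v
    rw [Matrix.transpose_apply]
    unfold inc
    by_cases h1 : D.src e = v <;> by_cases h2 : D.tgt e = v <;> simp [h1, h2]
    exact absurd (h1.trans h2.symm) hne
  simp only [this, Finset.sum_add_distrib, Finset.sum_ite_eq, Finset.mem_univ, if_true]

theorem Z1_dim [Fintype V] [Fintype E] :
    Module.finrank (ZMod 2) D.Z1 + Fintype.card V =
      Fintype.card E + Module.finrank (ZMod 2) (LinearMap.ker D.inc.transpose.mulVecLin) := by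
  classical
  have h1 := D.inc.mulVecLin.finrank_range_add_finrank_ker
  have h2 := D.inc.transpose.mulVecLin.finrank_range_add_finrank_ker
  have h3 := D.inc.rank_transpose
  unfold Matrix.rank at h3
  rw [ker_inc, Module.finrank_fintype_fun_eq_card] at h1
  rw [Module.finrank_fintype_fun_eq_card] at h2
  omega

theorem Z1_lower [Fintype V] [Fintype E] [Nonempty V] :
    Fintype.card E + 1 ≤ Module.finrank (ZMod 2) D.Z1 + Fintype.card V := by
  rw [Z1_dim]
  have h : (fun _ => 1 : V → ZMod 2) ∈ LinearMap.ker D.inc.transpose.mulVecLin := by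
    rw [LinearMap.mem_ker]
    funext e
    rw [incT_apply]; exact zadd_self 1
  have : Nontrivial (LinearMap.ker D.inc.transpose.mulVecLin) := by
    refine ⟨⟨⟨_, h⟩, 0, fun h0 => ?_⟩⟩
    have ⟨v⟩ : Nonempty V := inferInstance
    exact one_ne_zero (congrFun (congrArg Subtype.val h0) v)
  have := Module.finrank_pos (R := ZMod 2) (M := LinearMap.ker D.inc.transpose.mulVecLin)
  omega

theorem Z1_upper [Fintype V] [Fintype E]
    (h : ∀ x : V → ZMod 2, (∀ e, x (D.src e) = x (D.tgt e)) → ∀ u v, x u = x v) :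
    Module.finrank (ZMod 2) D.Z1 + Fintype.card V ≤ Fintype.card E + 1 := by
  rw [Z1_dim]
  have : Module.finrank (ZMod 2) (LinearMap.ker D.inc.transpose.mulVecLin) ≤ 1 := by
    have hm : (fun _ => 1 : V → ZMod 2) ∈ LinearMap.ker D.inc.transpose.mulVecLin := by
      rw [LinearMap.mem_ker]
      funext e
      rw [incT_apply]; exact zadd_self 1
    refine finrank_le_one (⟨_, hm⟩ : LinearMap.ker D.inc.transpose.mulVecLin) ?_
    rintro ⟨x, hx⟩
    have hx' : ∀ u v, x u = x v := by
      apply h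
      intro e
      apply zeq_of_add
      rw [← incT_apply, LinearMap.mem_ker.1 hx]; rfl
    rcases isEmpty_or_nonempty V with hV | ⟨⟨v0⟩⟩
    · exact ⟨0, Subtype.ext (Subsingleton.elim _ _)⟩
    · refine ⟨x v0, Subtype.ext ?_⟩
      funext v
      simp [hx' v0 v]
  omega
end GD

theorem annulus_preconnected {r : ℝ} (hr : 0 ≤ r) :
    IsPreconnected {z : EuclideanSpace ℝ (Fin 2) | r < ‖z‖ ∧ ‖z‖ < 1} := by
  have h1 : IsPreconnected (sphere (0 : EuclideanSpace ℝ (Fin 2)) 1) := by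
    apply isPreconnected_sphere
    rw [← Module.finrank_eq_rank]
    simp
  have h2 := (isPreconnected_Ioo (a := r) (b := 1)).prod h1
  have h3 := h2.image (fun p : ℝ × EuclideanSpace ℝ (Fin 2) => p.1 • p.2)
    (by fun_prop : Continuous _).continuousOn
  convert h3 using 1
  ext z
  constructor
  · rintro ⟨a, b⟩
    have h0 : ‖z‖ ≠ 0 := by linarith
    refine ⟨(‖z‖, ‖z‖⁻¹ • z), ⟨⟨a, b⟩, ?_⟩, ?_⟩
    · rw [mem_sphere_zero_iff_norm, norm_smul, norm_inv, norm_norm, inv_mul_cancel₀ h0]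
    · simp only
      rw [smul_smul, mul_inv_cancel₀ h0, one_smul]
  · rintro ⟨⟨s, w⟩, ⟨hs, hw⟩, rfl⟩
    have hw' : ‖w‖ = 1 := by simpa using hw
    have : ‖s • w‖ = s := by
      rw [norm_smul, hw', mul_one, Real.norm_eq_abs, abs_of_nonneg (by linarith [hs.1])]
    show r < ‖s • w‖ ∧ ‖s • w‖ < 1
    rw [this]; exact hs

theorem disc_collar {M : Type*} [TopologicalSpace M] [T2Space M] {F C : Set M}
    (hdisc : Nonempty (↥F ≃ₜ ↥(Metric.ball (0 : EuclideanSpace ℝ (Fin 2)) 1)))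
    (hC : IsCompact C) (hCF : C ⊆ F) :
    ∃ Q, IsCompact Q ∧ C ⊆ Q ∧ Q ⊆ F ∧ IsPreconnected (F \ Q) := by
  classical
  obtain ⟨ψ⟩ := hdisc
  let n : F → ℝ := fun p => ‖(ψ p).1‖
  have hn : Continuous n := (continuous_subtype_val.comp ψ.continuous).norm
  have hC' : IsCompact ((↑) ⁻¹' C : Set F) := by
    rw [Subtype.isCompact_iff, Subtype.image_preimage_coe, inter_eq_right.2 hCF]; exact hC
  obtain ⟨r, hr0, hr1, hr⟩ : ∃ r, 0 ≤ r ∧ r < 1 ∧ ∀ p : F, p.1 ∈ C → n p ≤ r := by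
    rcases C.eq_empty_or_nonempty with rfl | ⟨q, hq⟩
    · exact ⟨0, le_rfl, one_pos, fun p hp => absurd hp (notMem_empty _)⟩
    · obtain ⟨p, hp, hmax⟩ := hC'.exists_isMaxOn ⟨⟨q, hCF hq⟩, hq⟩ hn.continuousOn
      refine ⟨n p, norm_nonneg _, ?_, fun p' hp' => hmax hp'⟩
      have := (ψ p).2
      rwa [mem_ball_zero_iff] at this
  let i : EuclideanSpace ℝ (Fin 2) → M := fun z => if h : z ∈ ball (0 : EuclideanSpace ℝ (Fin 2)) 1
    then (ψ.symm ⟨z, h⟩).1 else (ψ.symm ⟨0, by simp⟩).1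
  have hi : ContinuousOn i (ball 0 1) := by
    rw [continuousOn_iff_continuous_domRestrict]
    have : (ball (0 : EuclideanSpace ℝ (Fin 2)) 1).domRestrict i = fun z => (ψ.symm z).1 := by
      funext z
      have hz := z.2
      simp only [i, Set.domRestrict_apply, hz, dif_pos]
    rw [this]
    exact continuous_subtype_val.comp ψ.symm.continuous
  have hiψ : ∀ p : F, i (ψ p).1 = p.1 := by
    intro p
    simp only [i, Subtype.coe_prop, dif_pos, Subtype.coe_eta, Homeomorph.symm_apply_apply]
  have hψi : ∀ z (hz : z ∈ ball (0 : EuclideanSpace ℝ (Fin 2)) 1), ∃ p : F, i z = p.1 ∧ n p = ‖z‖ := by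
    intro z hz
    refine ⟨ψ.symm ⟨z, hz⟩, by simp only [i, hz, dif_pos], ?_⟩
    simp [n]
  have hsub : closedBall (0 : EuclideanSpace ℝ (Fin 2)) r ⊆ ball 0 1 := closedBall_subset_ball hr1
  refine ⟨i '' closedBall 0 r, (isCompact_closedBall _ _).image_of_continuousOn (hi.mono hsub),
    ?_, ?_, ?_⟩
  · intro q hq
    exact ⟨(ψ ⟨q, hCF hq⟩).1, by rw [mem_closedBall_zero_iff]; exact hr ⟨q, hCF hq⟩ hq, hiψ ⟨q, hCF hq⟩⟩
  · rintro _ ⟨z, hz, rfl⟩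
    obtain ⟨p, hp, -⟩ := hψi z (hsub hz)
    rw [hp]; exact p.2
  · have : F \ i '' closedBall 0 r = i '' {z | r < ‖z‖ ∧ ‖z‖ < 1} := by
      ext q
      constructor
      · rintro ⟨hq, hq'⟩
        refine ⟨(ψ ⟨q, hq⟩).1, ⟨?_, ?_⟩, hiψ ⟨q, hq⟩⟩
        · by_contra h
          push Not at h
          exact hq' ⟨(ψ ⟨q, hq⟩).1, by rwa [mem_closedBall_zero_iff], hiψ ⟨q, hq⟩⟩
        · have := (ψ ⟨q, hq⟩).2
          rwa [mem_ball_zero_iff] at this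
      · rintro ⟨z, ⟨h1, h2⟩, rfl⟩
        have hz : z ∈ ball (0 : EuclideanSpace ℝ (Fin 2)) 1 := by rwa [mem_ball_zero_iff]
        obtain ⟨p, hp, hpn⟩ := hψi z hz
        refine ⟨by rw [hp]; exact p.2, ?_⟩
        rintro ⟨w, hw, hwz⟩
        obtain ⟨p', hp', hpn'⟩ := hψi w (hsub hw)
        have : p = p' := Subtype.ext (by rw [← hp, ← hp', hwz])
        rw [mem_closedBall_zero_iff] at hw
        rw [← this, hpn] at hpn'
        linarith
    rw [this]
    exact (annulus_preconnected hr0).image _ (hi.mono fun z hz => by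
      rw [mem_ball_zero_iff]; exact hz.2)

namespace GD
variable {M V E : Type*} [TopologicalSpace M] (D : GD M V E) [T2Space M] [Surf M]

/-- part of the drawing with given colour -/
def KK (x : V → ZMod 2) (a : ZMod 2) : Set M :=
  D.f '' {v | x v = a} ∪ ⋃ e ∈ {e | x (D.src e) = a}, D.γ e '' Icc 0 1

theorem KK_closed [Finite V] [Finite E] (x : V → ZMod 2) (a : ZMod 2) : IsClosed (D.KK x a) :=
  ((Set.toFinite _).image _).isClosed.union
    ((Set.toFinite _).isClosed_biUnion fun e _ => D.arc_closed e le_rfl le_rfl)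

theorem KK_cover (x : V → ZMod 2) {p : M} (hp : p ∈ D.K) : ∃ a, p ∈ D.KK x a := by
  rcases D.K_cases hp with ⟨v, rfl⟩ | ⟨e, t, ht, rfl⟩
  · exact ⟨x v, Or.inl ⟨v, rfl, rfl⟩⟩
  · exact ⟨x (D.src e), Or.inr (mem_biUnion (show e ∈ {e' | x (D.src e') = x (D.src e)} from rfl)
      ⟨t, ⟨ht.1.le, ht.2.le⟩, rfl⟩)⟩

theorem KK_sub (x : V → ZMod 2) (a : ZMod 2) : D.KK x a ⊆ D.K := by
  rintro p (⟨v, -, rfl⟩ | hp)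
  · exact D.f_mem v
  · obtain ⟨e, -, t, ht, rfl⟩ := mem_iUnion₂.1 hp
    exact D.γ_mem e ht

theorem KK_cases {x : V → ZMod 2} (hx : ∀ e, x (D.src e) = x (D.tgt e)) {a : ZMod 2} {p : M}
    (hp : p ∈ D.KK x a) :
    (∃ v, p = D.f v ∧ x v = a) ∨ ∃ e, ∃ t ∈ Ioo (0 : ℝ) 1, p = D.γ e t ∧ x (D.src e) = a := by
  rcases hp with ⟨v, hv, rfl⟩ | hp
  · exact Or.inl ⟨v, rfl, hv⟩
  · obtain ⟨e, he, t, ht, rfl⟩ := mem_iUnion₂.1 hp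
    have he' : x (D.src e) = a := he
    rcases eq_or_lt_of_le ht.1 with rfl | h0
    · exact Or.inl ⟨_, D.γ0 e, he⟩
    · rcases eq_or_lt_of_le ht.2 with rfl | h1
      · exact Or.inl ⟨_, D.γ1 e, by rw [← hx e]; exact he⟩
      · exact Or.inr ⟨e, t, ⟨h0, h1⟩, rfl, he⟩

theorem KK_unique {x : V → ZMod 2} (hx : ∀ e, x (D.src e) = x (D.tgt e)) {a b : ZMod 2} {p : M}
    (hp : p ∈ D.KK x a) (hp' : p ∈ D.KK x b) : a = b := by
  rcases D.KK_cases hx hp with ⟨v, rfl, h1⟩ | ⟨e, t, ht, rfl, h1⟩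
  · rcases D.KK_cases hx hp' with ⟨v', h2, h3⟩ | ⟨e', t', ht', h2, h3⟩
    · rw [← h1, ← h3, D.f_inj h2]
    · exact absurd h2.symm (D.int_ne e' t' ht' v)
  · rcases D.KK_cases hx hp' with ⟨v', h2, h3⟩ | ⟨e', t', ht', h2, h3⟩
    · exact absurd h2 (D.int_ne e t ht v')
    · rw [← h1, ← h3, D.int_disj e e' t ht t' ht' h2]

theorem conn_of_discs [Finite V] [Finite E] [CompactSpace M] [ConnectedSpace M]
    [LocallyConnectedSpace M] (hd : ∀ F ∈ D.Faces,
      Nonempty (↥F ≃ₜ ↥(Metric.ball (0 : EuclideanSpace ℝ (Fin 2)) 1)))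
    (x : V → ZMod 2) (hx : ∀ e, x (D.src e) = x (D.tgt e)) : ∀ u v, x u = x v := by
  have hfin := D.finite_Faces
  obtain ⟨O0, O1, hO0, hO1, hK0, hK1, hdis⟩ := normal_separation (D.KK_closed x 0) (D.KK_closed x 1)
    (Set.disjoint_left.2 fun p hp hp' => zero_ne_one (D.KK_unique hx hp hp'))
  obtain ⟨O, hOo, hKO, hOd⟩ : ∃ O : ZMod 2 → Set M, (∀ a, IsOpen (O a)) ∧ (∀ a, D.KK x a ⊆ O a) ∧
      ∀ a b p, p ∈ O a → p ∈ O b → a = b := by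
    refine ⟨fun a => if a = 0 then O0 else O1, ?_, ?_, ?_⟩
    · intro a
      rcases zmod2_cases a with rfl | rfl <;> simpa
    · intro a
      rcases zmod2_cases a with rfl | rfl <;> simpa
    · intro a b p ha hb
      rcases zmod2_cases a with rfl | rfl <;> rcases zmod2_cases b with rfl | rfl
      · rfl
      · exact absurd (by simpa using hb) (Set.disjoint_left.1 hdis (by simpa using ha))
      · exact absurd (by simpa using ha) (Set.disjoint_left.1 hdis (by simpa using hb))
      · rfl
  have hOK : ∀ p ∈ D.K, ∃ a, p ∈ O a := fun p hp =>
    let ⟨a, ha⟩ := D.KK_cover x hp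
    ⟨a, hKO a ha⟩
  have hface : ∀ F : D.Faces, ∃ Q : Set M, ∃ a : ZMod 2, IsCompact Q ∧ Q ⊆ F.1 ∧ F.1 \ Q ⊆ O a := by
    intro F
    let C : Set M := ((⋃ a, O a) ∪ ⋃ F' ∈ {F' : D.Faces | F' ≠ F}, F'.1)ᶜ
    have hC : IsCompact C := by
      refine IsClosed.isCompact (IsOpen.isClosed_compl ?_)
      exact (isOpen_iUnion hOo).union (isOpen_biUnion fun F' _ => D.face_open F')
    have hCF : C ⊆ F.1 := by
      intro p hp
      have hpK : p ∉ D.K := fun h => by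
        obtain ⟨a, ha⟩ := hOK p h
        exact hp (Or.inl (mem_iUnion.2 ⟨a, ha⟩))
      by_contra hpF
      exact hp (Or.inr (mem_biUnion (show D.face p hpK ∈ {F' : D.Faces | F' ≠ F} from
        fun h => hpF (h ▸ D.mem_face p hpK)) (D.mem_face p hpK)))
    obtain ⟨Q, hQ, hCQ, hQF, hpre⟩ := disc_collar (hd F.1 F.2) hC hCF
    have hsub : F.1 \ Q ⊆ ⋃ a, O a := by
      intro p hp
      by_contra h
      refine hp.2 (hCQ ?_)
      rintro (h' | h')
      · exact h h'
      · obtain ⟨F', hF', hpF'⟩ := mem_iUnion₂.1 h'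
        exact hF' ((D.face_unique F' hpF').trans (D.face_unique F hp.1).symm)
    rcases (F.1 \ Q).eq_empty_or_nonempty with he | ⟨q, hq⟩
    · exact ⟨Q, 0, hQ, hQF, by rw [he]; exact empty_subset _⟩
    · obtain ⟨a, ha⟩ := mem_iUnion.1 (hsub hq)
      refine ⟨Q, a, hQ, hQF, ?_⟩
      refine hpre.subset_left_of_subset_union (hOo a) (hOo (a + 1)) ?_ ?_ ⟨q, hq, ha⟩
      · refine Set.disjoint_left.2 fun p hp hp' => ?_
        have := hOd _ _ p hp hp'
        simp at this
      · intro p hp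
        obtain ⟨b, hb⟩ := mem_iUnion.1 (hsub hp)
        by_cases hab : b = a
        · exact Or.inl (hab ▸ hb)
        · have : b = a + 1 := by
            rcases zmod2_cases a with rfl | rfl <;> rcases zmod2_cases b with rfl | rfl
            · exact absurd rfl hab
            · simp
            · rfl
            · exact absurd rfl hab
          exact Or.inr (this ▸ hb)
  choose Q col hQ hQF hcol using hface
  let S : ZMod 2 → Set M := fun a => D.KK x a ∪ ⋃ F ∈ {F : D.Faces | col F = a}, F.1
  have hSo : ∀ a, IsOpen (S a) := by
    intro a
    have : S a = (⋃ F ∈ {F : D.Faces | col F = a}, F.1) ∪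
        (O a \ ⋃ F ∈ {F : D.Faces | col F ≠ a}, Q F) := by
      ext p
      constructor
      · rintro (hp | hp)
        · refine Or.inr ⟨hKO a hp, fun h => ?_⟩
          obtain ⟨F, -, hF⟩ := mem_iUnion₂.1 h
          exact D.face_sub F (hQF F hF) (D.KK_sub x a hp)
        · exact Or.inl hp
      · rintro (hp | ⟨hp, hp'⟩)
        · exact Or.inr hp
        · by_cases hpK : p ∈ D.K
          · obtain ⟨b, hb⟩ := D.KK_cover x hpK
            rw [hOd a b p hp (hKO b hb)]
            exact Or.inl hb
          · by_cases hc : col (D.face p hpK) = a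
            · exact Or.inr (mem_biUnion hc (D.mem_face p hpK))
            · exfalso
              apply hc
              refine hOd _ _ p (hcol _ ⟨D.mem_face p hpK, fun h => ?_⟩) hp
              exact hp' (mem_biUnion hc h)
    rw [this]
    refine (isOpen_biUnion fun F _ => D.face_open F).union ((hOo a).sdiff ?_)
    exact (Set.toFinite _).isClosed_biUnion fun F _ => (hQ F).isClosed
  have hSd : ∀ a b p, p ∈ S a → p ∈ S b → a = b := by
    rintro a b p (ha | ha) (hb | hb)
    · exact D.KK_unique hx ha hb
    · obtain ⟨F, -, hF⟩ := mem_iUnion₂.1 hb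
      exact absurd (D.KK_sub x a ha) (D.face_sub F hF)
    · obtain ⟨F, -, hF⟩ := mem_iUnion₂.1 ha
      exact absurd (D.KK_sub x b hb) (D.face_sub F hF)
    · obtain ⟨F, h1, hF⟩ := mem_iUnion₂.1 ha
      obtain ⟨F', h1', hF'⟩ := mem_iUnion₂.1 hb
      have e : F = F' := (D.face_unique F hF).trans (D.face_unique F' hF').symm
      have h2 : col F = a := h1
      have h2' : col F' = b := h1'
      rw [← h2, ← h2', e]
  have hSc : ∀ p, ∃ a, p ∈ S a := by
    intro p
    by_cases hpK : p ∈ D.K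
    · obtain ⟨b, hb⟩ := D.KK_cover x hpK
      exact ⟨b, Or.inl hb⟩
    · exact ⟨_, Or.inr (mem_biUnion (show D.face p hpK ∈ {F | col F = col (D.face p hpK)} from rfl)
        (D.mem_face p hpK))⟩
  choose κ hκ using hSc
  have hκc : Continuous κ := by
    rw [continuous_iff_continuousAt]
    intro p
    refine tendsto_const_nhds.congr' ?_
    filter_upwards [(hSo (κ p)).mem_nhds (hκ p)] with q hq
    exact hSd _ _ q hq (hκ q)
  have hκf : ∀ v, κ (D.f v) = x v := fun v =>
    hSd _ _ (D.f v) (hκ _) (Or.inl (Or.inl ⟨v, rfl, rfl⟩))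
  intro u v
  rw [← hκf u, ← hκf v]
  exact isPreconnected_univ.constant hκc.continuousOn (mem_univ _) (mem_univ _)

/-- Euler inequality -/
theorem euler {V₀ E₀ : Type*} [Fintype V₀] [Fintype E₀] [Fintype V] [Fintype E] [Nonempty V]
    (D₀ : GD M V₀ E₀)
    [CompactSpace M] [ConnectedSpace M] [LocallyConnectedSpace M] (hd : ∀ F ∈ D₀.Faces,
      Nonempty (↥F ≃ₜ ↥(Metric.ball (0 : EuclideanSpace ℝ (Fin 2)) 1))) :
    Fintype.card E + Fintype.card V₀ + Nat.card D₀.Faces ≤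
      Fintype.card V + Fintype.card E₀ + Nat.card D.Faces := by
  have h1 := D.compare D₀ hd
  have h2 := D₀.Z1_upper (D₀.conn_of_discs hd)
  have h3 := D.Z1_lower
  omega
end GD

theorem drawing_edge {V M : Type*} [TopologicalSpace M] {G : SimpleGraph V} {f : V → M}
    {arc : Sym2 V → Set M} (h : IsCrossingFreeDrawingIn G f arc Set.univ) (e : G.edgeSet) :
    ∃ (u v : V) (γ : Path (f u) (f v)), e.1 = s(u, v) ∧ G.Adj u v ∧ Function.Injective γ ∧
      Set.range γ = arc e.1 := by
  obtain ⟨e, he⟩ := e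
  induction e using Sym2.ind with
  | _ u v =>
    have huv : G.Adj u v := he
    obtain ⟨γ, h1, h2⟩ := h.2.1 u v huv
    exact ⟨u, v, γ, rfl, huv, h1, h2⟩

theorem exists_GD {V M : Type*} [TopologicalSpace M] {G : SimpleGraph V} {f : V → M}
    {arc : Sym2 V → Set M} (h : IsCrossingFreeDrawingIn G f arc Set.univ) :
    ∃ D : GD M V G.edgeSet, (∀ e : G.edgeSet, e.1 = s(D.src e, D.tgt e)) ∧
      D.K = drawingImage G f arc := by
  choose u v γ he hadj hinj hran using drawing_edge h
  have hinter : ∀ e, ∀ t ∈ Ioo (0 : ℝ) 1, ∀ w, (γ e).extend t ≠ f w := by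
    intro e t ht w hw
    have htI : t ∈ Icc (0 : ℝ) 1 := ⟨ht.1.le, ht.2.le⟩
    rw [Path.extend_apply _ htI] at hw
    have hwe : w ∈ e.1 := h.2.2.2.1 e.1 e.2 w (by rw [← hran e, ← hw]; exact mem_range_self _)
    rw [he e, Sym2.mem_iff] at hwe
    rcases hwe with rfl | rfl
    · have := hinj e (hw.trans (γ e).source.symm)
      have := congrArg Subtype.val this
      simp only [Set.Icc.coe_zero] at this
      linarith [ht.1]
    · have := hinj e (hw.trans (γ e).target.symm)
      have := congrArg Subtype.val this
      simp only [Set.Icc.coe_one] at this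
      linarith [ht.2]
  have hmem : ∀ e, ∀ t, (γ e).extend t ∈ arc e.1 := by
    intro e t
    rw [← hran e, ← (γ e).extend_range]
    exact mem_range_self _
  have himg : ∀ e, (γ e).extend '' Icc 0 1 = arc e.1 := by
    intro e
    rw [← hran e]
    ext p
    constructor
    · rintro ⟨t, ht, rfl⟩
      rw [Path.extend_apply _ ht]; exact mem_range_self _
    · rintro ⟨t, rfl⟩
      exact ⟨t.1, t.2, by rw [Path.extend_apply _ t.2]⟩
  refine ⟨{ f := f, γ := fun e => (γ e).extend, src := u, tgt := v, f_inj := h.1,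
            arc := fun e => ⟨zero_le_one, (γ e).continuous_extend.continuousOn, ?_⟩
            γ0 := fun e => by simp, γ1 := fun e => by simp
            int_ne := hinter, int_disj := ?_ }, he, ?_⟩
  · intro s hs t ht hst
    rw [Path.extend_apply _ hs, Path.extend_apply _ ht] at hst
    exact congrArg Subtype.val (hinj e hst)
  · intro e e' t ht t' ht' heq
    by_contra hne
    have := h.2.2.2.2 e.1 e.2 e'.1 e'.2 (fun h => hne (Subtype.ext h))
    have hm : (γ e).extend t ∈ (arc e.1 \ f '' {x | x ∈ e.1}) ∩ (arc e'.1 \ f '' {x | x ∈ e'.1}) := by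
      refine ⟨⟨hmem e t, ?_⟩, ?_, ?_⟩
      · rintro ⟨w, -, hw⟩; exact hinter e t ht w hw.symm
      · rw [heq]; exact hmem e' t'
      · rintro ⟨w, -, hw⟩; exact hinter e t ht w hw.symm
    rw [this] at hm
    exact hm
  · unfold GD.K drawingImage
    simp only [himg]
    rw [iUnion_subtype]

theorem faces_eq {V M : Type*} [TopologicalSpace M] {G : SimpleGraph V} {f : V → M}
    {arc : Sym2 V → Set M} (D : GD M V G.edgeSet) (h : D.K = drawingImage G f arc) :
    D.Faces = drawingFaces G f arc := by
  unfold GD.Faces drawingFaces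
  rw [h]

theorem surf_of_charted (M : Type*) [TopologicalSpace M]
    [ChartedSpace (EuclideanSpace ℝ (Fin 2)) M] : Surf M where
  chart p := by
    refine ⟨(chartAt (EuclideanSpace ℝ (Fin 2)) p).trans
      (Complex.orthonormalBasisOneI.repr.symm.toHomeomorph.toOpenPartialHomeomorph), ?_⟩
    simp

theorem loc_conn (M : Type*) [TopologicalSpace M]
    [ChartedSpace (EuclideanSpace ℝ (Fin 2)) M] : LocallyConnectedSpace M :=
  ChartedSpace.locallyConnectedSpace (EuclideanSpace ℝ (Fin 2)) M

open Classical in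
/-- Everything topological we need. -/
theorem topo_main.{u} (M : Type u) [TopologicalSpace M] [T2Space M] [CompactSpace M] [ConnectedSpace M]
    [ChartedSpace (EuclideanSpace ℝ (Fin 2)) M]
    (χ : ℤ) (hχ : IsEulerCharacteristic M χ)
    {V : Type*} [Fintype V] [Nonempty V] (G : SimpleGraph V) [Fintype G.edgeSet]
    (f : V → M) (arc : Sym2 V → Set M)
    (hdraw : IsCrossingFreeDrawingIn G f arc Set.univ) :
    ∃ (Φ : Type u) (_ : Fintype Φ) (B : Φ → G.edgeSet → ZMod 2), Nonempty Φ ∧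
      (∀ F v, ∑ e : G.edgeSet, (if v ∈ e.1 then B F e else 0) = 0) ∧
      (∀ e F₁ F₂ F₃, F₁ ≠ F₂ → F₁ ≠ F₃ → F₂ ≠ F₃ → B F₁ e ≠ 0 → B F₂ e ≠ 0 → B F₃ e ≠ 0 → False) ∧
      (∀ T : Finset Φ, ∑ F ∈ T, B F = 0 → T = ∅ ∨ ∀ F, F ∈ T) ∧
      (Fintype.card G.edgeSet : ℤ) - Fintype.card V + χ ≤ Fintype.card Φ := by
  classical
  obtain ⟨V₀, _, G₀, f₀, arc₀, hd₀, hdisc, rfl⟩ := hχ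
  obtain ⟨D, hDe, hDK⟩ := exists_GD hdraw
  obtain ⟨D₀, hDe₀, hDK₀⟩ := exists_GD hd₀
  have := surf_of_charted M
  have := loc_conn M
  have := Fintype.ofFinite G₀.edgeSet
  have hfin := D.finite_Faces
  have := Fintype.ofFinite D.Faces
  rw [← faces_eq D₀ hDK₀] at hdisc ⊢
  have heul := D.euler D₀ hdisc
  refine ⟨D.Faces, inferInstance, D.bF, ?_, ?_, ?_, D.bF_sum, ?_⟩
  · have := D.card_Faces
    exact (Nat.card_pos_iff.1 (by omega)).1
  · intro F v
    have := D.mem_Z1.1 (D.bF_mem_Z1 F) v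
    refine Eq.trans (Finset.sum_congr rfl fun e _ => ?_) this
    have h : v ∈ e.1 ↔ (D.src e = v ∨ D.tgt e = v) := by
      rw [hDe e, Sym2.mem_iff, eq_comm (a := v), eq_comm (a := v)]
    simp only [h]
  · intro e F₁ F₂ F₃ a b c
    exact D.bF_two e F₁ F₂ F₃ a b c
  · rw [Nat.card_eq_fintype_card (α := G₀.edgeSet), ← Nat.card_eq_fintype_card (α := D.Faces)]
    omega

open Classical in
/-- support of a mod 2 chain -/
noncomputable def supp2 {E : Type*} [Fintype E] (z : E → ZMod 2) : Finset E :=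
  Finset.univ.filter fun e => z e ≠ 0

theorem mem_supp2 {E : Type*} [Fintype E] {z : E → ZMod 2} {e : E} : e ∈ supp2 z ↔ z e ≠ 0 := by
  simp [supp2]

theorem supp2_nonempty {E : Type*} [Fintype E] {z : E → ZMod 2} (hz : z ≠ 0) :
    (supp2 z).Nonempty := by
  obtain ⟨e, he⟩ := Function.ne_iff.1 hz
  exact ⟨e, mem_supp2.2 he⟩

section double
variable {E Φ : Type*} [Fintype E] (B : Φ → E → ZMod 2)

open Classical in
theorem double_count (htwo : ∀ e F₁ F₂ F₃, F₁ ≠ F₂ → F₁ ≠ F₃ → F₂ ≠ F₃ →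
      B F₁ e ≠ 0 → B F₂ e ≠ 0 → B F₃ e ≠ 0 → False)
    (P : Finset Φ) (A : Finset E) (hA : ∀ F ∈ P, supp2 (B F) ⊆ A) :
    ∑ F ∈ P, (supp2 (B F)).card + (supp2 (∑ F ∈ P, B F)).card ≤ 2 * A.card := by
  have h1 : ∀ F ∈ P, (supp2 (B F)).card = ∑ e ∈ A, if B F e ≠ 0 then 1 else 0 := by
    intro F hF
    rw [← Finset.card_filter]
    congr 1
    ext e
    rw [mem_supp2, Finset.mem_filter]
    exact ⟨fun h => ⟨hA F hF (mem_supp2.2 h), h⟩, fun h => h.2⟩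
  have h2 : (supp2 (∑ F ∈ P, B F)).card =
      ∑ e ∈ A, if (∑ F ∈ P, B F e) ≠ 0 then 1 else 0 := by
    rw [← Finset.card_filter]
    congr 1
    ext e
    rw [mem_supp2, Finset.mem_filter, Finset.sum_apply]
    refine ⟨fun h => ⟨?_, h⟩, fun h => h.2⟩
    obtain ⟨F, hF, hFe⟩ := Finset.exists_ne_zero_of_sum_ne_zero h
    exact hA F hF (mem_supp2.2 hFe)
  rw [Finset.sum_congr rfl h1, h2, Finset.sum_comm, ← Finset.sum_add_distrib, mul_comm,
    ← smul_eq_mul]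
  refine Finset.sum_le_card_nsmul _ _ _ fun e _ => ?_
  rw [← Finset.card_filter]
  have hcard : (P.filter fun F => B F e ≠ 0).card ≤ 2 := by
    by_contra hlt
    push Not at hlt
    obtain ⟨a, b, c, ha, hb, hc, hab, hac, hbc⟩ := Finset.two_lt_card_iff.1 hlt
    simp only [Finset.mem_filter] at ha hb hc
    exact htwo e a b c hab hac hbc ha.2 hb.2 hc.2
  have hsum : ∑ F ∈ P, B F e = ((P.filter fun F => B F e ≠ 0).card : ZMod 2) := by
    rw [Finset.card_filter, Nat.cast_sum]
    refine Finset.sum_congr rfl fun F _ => ?_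
    rcases zmod2_cases (B F e) with h | h <;> simp [h]
  split_ifs with h
  · have : (P.filter fun F => B F e ≠ 0).card ≠ 2 := by
      intro h'
      rw [hsum, h'] at h
      exact h (by decide)
    omega
  · omega

open Classical in
theorem comb_main [Fintype Φ] [Nonempty Φ] (t : ℕ) (ht : 3 ≤ t) (hE : t + 1 ≤ Fintype.card E)
    (htwo : ∀ e F₁ F₂ F₃, F₁ ≠ F₂ → F₁ ≠ F₃ → F₂ ≠ F₃ →
      B F₁ e ≠ 0 → B F₂ e ≠ 0 → B F₃ e ≠ 0 → False)
    (hsum : ∀ T : Finset Φ, ∑ F ∈ T, B F = 0 → T = ∅ ∨ ∀ F, F ∈ T)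
    (h3 : ∀ T : Finset Φ, ∑ F ∈ T, B F ≠ 0 → 3 ≤ (supp2 (∑ F ∈ T, B F)).card)
    {ι : Type*} (A : ι → Finset E) (hA : ∀ i j, i ≠ j → Disjoint (A i) (A j))
    (hAt : ∀ i, (A i).card ≤ t)
    (htri : ∀ F, (supp2 (B F)).card = 3 → ∃ i, supp2 (B F) ⊆ A i) :
    12 * t * Fintype.card Φ + 3 * Fintype.card E ≤ 8 * t * Fintype.card E := by
  set e := Fintype.card E with he
  by_cases hf : Fintype.card Φ ≤ 1
  · have h1 : 12 * t * Fintype.card Φ ≤ 12 * t * 1 := Nat.mul_le_mul_left _ hf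
    nlinarith
  push Not at hf
  have h3' : ∀ F, 3 ≤ (supp2 (B F)).card := by
    intro F
    have := h3 {F}
    rw [Finset.sum_singleton] at this
    apply this
    intro h0
    rcases hsum {F} (by rw [Finset.sum_singleton]; exact h0) with h | h
    · simp at h
    · have : Fintype.card Φ ≤ 1 := Fintype.card_le_one_iff.2 fun a b => by
        rw [Finset.mem_singleton.1 (h a), Finset.mem_singleton.1 (h b)]
      omega
  set P := Finset.univ.filter fun F => (supp2 (B F)).card = 3 with hP
  have h4 : 4 * Fintype.card Φ ≤ 2 * e + P.card := by
    have hd := double_count B htwo Finset.univ Finset.univ (fun _ _ => Finset.subset_univ _)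
    have hl : ∑ F : Φ, 4 ≤ ∑ F : Φ, ((supp2 (B F)).card + if (supp2 (B F)).card = 3 then 1 else 0) := by
      refine Finset.sum_le_sum fun F _ => ?_
      have := h3' F
      split_ifs <;> omega
    rw [Finset.sum_add_distrib, ← Finset.card_filter, Finset.sum_const, Finset.card_univ,
      smul_eq_mul] at hl
    rw [Finset.card_univ] at hd
    rw [hP]
    omega
  suffices h5 : (12 * t * Fintype.card Φ + 3 * e ≤ 8 * t * e) ∨
      3 * t * P.card + 3 * e ≤ 2 * t * e by
    rcases h5 with h5 | h5
    · exact h5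
    · nlinarith
  rcases isEmpty_or_nonempty ι with hι | hι
  · right
    have : P = ∅ := by
      rw [Finset.eq_empty_iff_forall_notMem]
      intro G hG
      obtain ⟨i, hi⟩ := htri G (by simpa [hP] using hG)
      exact hι.false i
    rw [this, Finset.card_empty]
    nlinarith
  have htri' : ∀ F, ∃ i : ι, F ∈ P → supp2 (B F) ⊆ A i := by
    intro F
    by_cases hF : F ∈ P
    · obtain ⟨i, hi⟩ := htri F (by simpa [hP] using hF)
      exact ⟨i, fun _ => hi⟩
    · exact ⟨hι.some, fun h => absurd h hF⟩
  choose idx hidx using htri'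
  have hT : ∀ i, 3 * (P.filter fun F => idx F = i).card +
      (supp2 (∑ F ∈ P.filter (fun F => idx F = i), B F)).card ≤ 2 * (A i).card := by
    intro i
    have hd := double_count B htwo (P.filter fun F => idx F = i) (A i) (fun F hF => by
      rw [Finset.mem_filter] at hF
      rw [← hF.2]; exact hidx F hF.1)
    have : ∑ F ∈ P.filter (fun F => idx F = i), (supp2 (B F)).card =
        (P.filter fun F => idx F = i).card * 3 := by
      rw [Finset.sum_const_nat]
      intro F hF
      rw [Finset.mem_filter, hP, Finset.mem_filter] at hF
      exact hF.1.2
    omega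
  by_cases hz : ∃ i ∈ P.image idx, ∑ F ∈ P.filter (fun F => idx F = i), B F = 0
  · left
    obtain ⟨i, hi, h0⟩ := hz
    obtain ⟨F, hF, hFi⟩ := Finset.mem_image.1 hi
    rcases hsum _ h0 with h | h
    · exfalso
      have : F ∈ P.filter (fun F => idx F = i) := Finset.mem_filter.2 ⟨hF, hFi⟩
      rw [h] at this
      exact Finset.notMem_empty _ this
    · have hu : P.filter (fun F => idx F = i) = Finset.univ := Finset.eq_univ_iff_forall.2 h
      have h6 := hT i
      rw [hu, Finset.card_univ] at h6
      have h7 := hAt i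
      have h8 : 3 * Fintype.card Φ ≤ 2 * t := by omega
      obtain ⟨d, hd⟩ := Nat.exists_eq_add_of_le hE
      rw [hd]
      nlinarith [Nat.zero_le d, Nat.zero_le (t * d)]
  · right
    push Not at hz
    have hi : ∀ i ∈ P.image idx, 3 * t * (P.filter fun F => idx F = i).card + 3 * (A i).card ≤
        2 * t * (A i).card := by
      intro i hi
      have h6 := hT i
      have h7 := h3 _ (hz i hi)
      have h8 := hAt i
      have h9 : 3 * (P.filter fun F => idx F = i).card + 3 ≤ 2 * (A i).card := by omega
      nlinarith
    have hPc : P.card = ∑ i ∈ P.image idx, (P.filter fun F => idx F = i).card :=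
      Finset.card_eq_sum_card_image _ _
    have hAe : ∑ i ∈ P.image idx, (A i).card ≤ e := by
      rw [← Finset.card_biUnion (fun i _ j _ hij => hA i j hij)]
      exact Finset.card_le_univ _
    have h10 := Finset.sum_le_sum hi
    rw [Finset.sum_add_distrib, ← Finset.mul_sum, ← Finset.mul_sum, ← Finset.mul_sum, ← hPc] at h10
    set a := ∑ i ∈ P.image idx, (A i).card
    obtain ⟨d, hd⟩ := Nat.exists_eq_add_of_le hAe
    rw [hd]
    nlinarith [Nat.zero_le d, Nat.zero_le (t * d)]
end double

section cyc
variable {V : Type*} {G : SimpleGraph V} [Fintype G.edgeSet]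

open Classical in
theorem cyc_other {z : G.edgeSet → ZMod 2}
    (hz : ∀ v, ∑ e : G.edgeSet, (if v ∈ e.1 then z e else 0) = 0) {e : G.edgeSet} (he : z e ≠ 0)
    {v : V} (hv : v ∈ e.1) : ∃ e', e' ≠ e ∧ z e' ≠ 0 ∧ v ∈ e'.1 := by
  by_contra hcon
  push Not at hcon
  have := hz v
  rw [Finset.sum_eq_single e] at this
  · rw [if_pos hv] at this; exact he this
  · intro e' _ hne
    split_ifs with h
    · by_contra h0; exact hcon e' hne h0 h
    · rfl
  · intro h; exact absurd (Finset.mem_univ _) h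

open Classical in
theorem cyc_card {z : G.edgeSet → ZMod 2}
    (hz : ∀ v, ∑ e : G.edgeSet, (if v ∈ e.1 then z e else 0) = 0) (h0 : z ≠ 0) :
    3 ≤ (supp2 z).card ∧ ((supp2 z).card = 3 → ∃ u v w, G.Adj u v ∧ G.Adj v w ∧ G.Adj u w ∧
      ∀ e ∈ supp2 z, e.1 = s(u, v) ∨ e.1 = s(v, w) ∨ e.1 = s(u, w)) := by
  obtain ⟨e0, he0⟩ := supp2_nonempty h0
  rw [mem_supp2] at he0
  obtain ⟨u, v, h0uv⟩ : ∃ u v, e0.1 = s(u, v) := by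
    obtain ⟨e, he⟩ := e0
    induction e using Sym2.ind with
    | _ u v => exact ⟨u, v, rfl⟩
  have huv : G.Adj u v := by
    have := e0.2; rw [h0uv] at this; exact this
  obtain ⟨e1, h10, he1, hv1⟩ := cyc_other hz he0 (v := v) (by rw [h0uv]; simp)
  obtain ⟨w, hw⟩ := Sym2.mem_iff_exists.1 hv1
  have hvw : G.Adj v w := by
    have := e1.2; rw [hw] at this; exact this
  have hwu : w ≠ u := by
    rintro rfl
    exact h10 (Subtype.ext (by rw [hw, h0uv, Sym2.eq_swap]))
  obtain ⟨e2, h20, he2, hu2⟩ := cyc_other hz he0 (v := u) (by rw [h0uv]; simp)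
  obtain ⟨x, hx⟩ := Sym2.mem_iff_exists.1 hu2
  have hux : G.Adj u x := by
    have := e2.2; rw [hx] at this; exact this
  have h21 : e2 ≠ e1 := by
    rintro rfl
    rw [hw, Sym2.mem_iff] at hu2
    rcases hu2 with h | h
    · exact huv.ne h
    · exact hwu h.symm
  have hsub : ({e0, e1, e2} : Finset G.edgeSet) ⊆ supp2 z := by
    intro e he
    simp only [Finset.mem_insert, Finset.mem_singleton] at he
    rw [mem_supp2]
    rcases he with rfl | rfl | rfl <;> assumption
  have hc3 : ({e0, e1, e2} : Finset G.edgeSet).card = 3 :=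
    Finset.card_eq_three.2 ⟨e0, e1, e2, h10.symm, h20.symm, h21.symm, rfl⟩
  refine ⟨hc3 ▸ Finset.card_le_card hsub, fun h3 => ?_⟩
  have heq := Finset.eq_of_subset_of_card_le hsub (by omega)
  have hmem : ∀ e, z e ≠ 0 → e = e0 ∨ e = e1 ∨ e = e2 := by
    intro e he
    have := mem_supp2.2 he
    rw [← heq] at this
    simpa using this
  obtain ⟨e3, h31, he3, hw3⟩ := cyc_other hz he1 (v := w) (by rw [hw]; simp)
  have hwx : w = x := by
    rcases hmem e3 he3 with rfl | rfl | rfl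
    · rw [h0uv, Sym2.mem_iff] at hw3
      rcases hw3 with h | h
      · exact absurd h hwu
      · exact absurd h.symm hvw.ne
    · exact absurd rfl h31
    · rw [hx, Sym2.mem_iff] at hw3
      rcases hw3 with h | h
      · exact absurd h hwu
      · exact h
  subst hwx
  refine ⟨u, v, w, huv, hvw, hux, fun e he => ?_⟩
  rcases hmem e (mem_supp2.1 he) with rfl | rfl | rfl
  · exact Or.inl h0uv
  · exact Or.inr (Or.inl hw)
  · exact Or.inr (Or.inr hx)
end cyc

end Aux

/-- **Lemma (edge upper bound on surfaces).** Let `t ≥ 3`, let `M` be a compact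
connected surface with Euler characteristic `χ`, and let `G` be a simple graph with at
least `t+1` edges embedded into `M`. Suppose the subgraph of `G` consisting of all
edges lying in triangles decomposes as an edge-disjoint union of subgraphs `H i`, each
with between `3` and `t` edges, such that every triangle of `G` lies in some `H i`.
Then `e(G) ≤ (12t/(4t+3)) · (v(G) - χ)`. -/
theorem surface_edge_upper_bound (t : ℕ) (ht : 3 ≤ t)
    (M : Type*) [TopologicalSpace M] [T2Space M] [CompactSpace M] [ConnectedSpace M]
    [ChartedSpace (EuclideanSpace ℝ (Fin 2)) M]
    (χ : ℤ) (hχ : IsEulerCharacteristic M χ)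
    {V : Type*} [Fintype V] (G : SimpleGraph V)
    (f : V → M) (arc : Sym2 V → Set M)
    (hdraw : IsCrossingFreeDrawingIn G f arc Set.univ)
    (hedges : t + 1 ≤ Nat.card G.edgeSet)
    {ι : Type*} (H : ι → SimpleGraph V)
    (hle : ∀ i, H i ≤ G)
    (hcover : ∀ u v w : V, G.Adj u v → G.Adj v w → G.Adj u w →
      ∃ i, (H i).Adj u v ∧ (H i).Adj v w ∧ (H i).Adj u w)
    (hsub : ∀ (i : ι) (u v : V), (H i).Adj u v → ∃ w, G.Adj u w ∧ G.Adj v w)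
    (hdisj : ∀ i j : ι, i ≠ j → Disjoint (H i).edgeSet (H j).edgeSet)
    (hsize : ∀ i, 3 ≤ Nat.card (H i).edgeSet ∧ Nat.card (H i).edgeSet ≤ t) :
    (Nat.card G.edgeSet : ℝ) ≤ (12 * t / (4 * t + 3)) * ((Fintype.card V : ℝ) - (χ : ℝ)) := by
  classical
  have hVne : Nonempty V := by
    by_contra hV
    rw [not_nonempty_iff] at hV
    have : IsEmpty G.edgeSet := ⟨fun e => by
      obtain ⟨e, he⟩ := e
      induction e using Sym2.ind with
      | _ u v => exact hV.false u⟩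
    rw [Nat.card_of_isEmpty] at hedges
    omega
  have : Fintype G.edgeSet := Fintype.ofFinite _
  obtain ⟨Φ, _, B, hΦ, hev, htwo, hsum, heul⟩ := topo_main M χ hχ G f arc hdraw
  rw [Nat.card_eq_fintype_card] at hedges ⊢
  have hev' : ∀ T : Finset Φ, ∀ v, ∑ e : G.edgeSet, (if v ∈ e.1 then (∑ F ∈ T, B F) e else 0) = 0 := by
    intro T v
    have h1 : ∀ e : G.edgeSet, (if v ∈ e.1 then (∑ F ∈ T, B F) e else 0) =
        ∑ F ∈ T, (if v ∈ e.1 then B F e else 0) := by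
      intro e
      split_ifs
      · rw [Finset.sum_apply]
      · simp
    rw [Finset.sum_congr rfl fun e _ => h1 e, Finset.sum_comm]
    exact Finset.sum_eq_zero fun F _ => hev F v
  have hcard : ∀ i, (Finset.univ.filter fun e : G.edgeSet => e.1 ∈ (H i).edgeSet).card ≤ t := by
    intro i
    refine le_trans ?_ (hsize i).2
    rw [← Fintype.card_subtype, ← Nat.card_eq_fintype_card]
    exact Nat.card_le_card_of_injective
      (fun e : {e : G.edgeSet // e.1 ∈ (H i).edgeSet} => (⟨e.1.1, e.2⟩ : (H i).edgeSet))
      (fun a b h => Subtype.ext (Subtype.ext (by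
        have h2 := congrArg Subtype.val h
        exact h2)))
  have hmain := comb_main B t ht hedges htwo hsum (fun T hT => (cyc_card (hev' T) hT).1)
    (fun i => Finset.univ.filter fun e : G.edgeSet => e.1 ∈ (H i).edgeSet)
    (fun i j hij => by
      rw [Finset.disjoint_left]
      intro e h1 h2
      simp only [Finset.mem_filter, Finset.mem_univ, true_and] at h1 h2
      exact Set.disjoint_left.1 (hdisj i j hij) h1 h2) hcard
    (fun F hF => by
      have hne : B F ≠ 0 := by
        intro h0
        rw [h0] at hF
        simp [supp2] at hF
      obtain ⟨u, v, w, huv, hvw, huw, hall⟩ := (cyc_card (hev F) hne).2 hF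
      obtain ⟨i, h1, h2, h3⟩ := hcover u v w huv hvw huw
      refine ⟨i, fun e he => ?_⟩
      simp only [Finset.mem_filter, Finset.mem_univ, true_and]
      rcases hall e he with h | h | h <;> rw [h] <;> assumption)
  have hm : (12 * t * Fintype.card Φ + 3 * Fintype.card G.edgeSet : ℝ) ≤
      8 * t * Fintype.card G.edgeSet := by exact_mod_cast hmain
  have he : (Fintype.card G.edgeSet : ℝ) - Fintype.card V + χ ≤ Fintype.card Φ := by
    exact_mod_cast heul
  have ht' : (3 : ℝ) ≤ t := by exact_mod_cast ht
  rw [div_mul_eq_mul_div, le_div_iff₀ (by linarith)]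
  have := mul_le_mul_of_nonneg_left he (by linarith : (0 : ℝ) ≤ 12 * t)
  nlinarith
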